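/- Let s ≥ 1 and t ≥ 4 be integers and set n = 3(2^s − 1) + 2^s(2^{t+1} − 1) = 2^{s+t+1} + 2^{s+1} − 3. Then the dimension over F_2 of the subspace of GL_4(F_2)-invariants of Q_n equals 1 if s ∈ {1, 2} and equals 2 if s ≥ 3. -/

import Mathlib

/-!
Common setup: the polynomial algebra `P_4 = F_2[x_1,x_2,x_3,x_4]` (variables `X 0, ..., X 3`),
the Steenrod action, hit polynomials, the cohit spaces `Q_n`, and the (induced) actions of
`GL_4(F_2)` and of the symmetric group `Σ_4` on `Q_n`.
-/

open MvPolynomial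

noncomputable section

abbrev kk : Type := ZMod 2
abbrev P4 : Type := MvPolynomial (Fin 4) kk

/-- The total Steenrod square: the algebra endomorphism of `P4` with `X i ↦ X i + (X i)^2`.
For `g` homogeneous of degree `d`, `Sq^t g` is the degree-`d+t` homogeneous component
of `sqTotal g`. -/
def sqTotal : P4 →ₐ[kk] P4 := aeval fun i => X i + X i ^ 2

/-- The homogeneous polynomials of degree `n`, i.e. `(P_4)_n`, as a submodule. -/
def homog (n : ℕ) : Submodule kk P4 := homogeneousSubmodule (Fin 4) kk n

/-- The subspace `H_n` of hit polynomials of degree `n`: it is spanned by the elements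
`Sq^{n-d}(g) = (sqTotal g)_n` for `g` homogeneous of degree `d < n`, i.e. by all
`∑_{t>0} Sq^t(f_t)` with `f_t ∈ (P_4)_{n-t}`. -/
def hitSub (n : ℕ) : Submodule kk P4 :=
  Submodule.span kk
    {p | ∃ d, d < n ∧ ∃ g ∈ homog d, p = homogeneousComponent n (sqTotal g)}

/-- The cohit space `Q_n = (P_4)_n / H_n`. -/
abbrev Qn (n : ℕ) :=
  ↥(homog n) ⧸ ((hitSub n).comap (homog n).subtype)

/-- Projection of a polynomial onto its degree-`n` part, landing in `homog n`. -/
def toHomog (n : ℕ) : P4 →ₗ[kk] homog n :=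
  (homogeneousComponent n).codRestrict (homog n) fun f => homogeneousComponent_mem n f

/-- The class in `Q_n` of (the degree-`n` component of) a polynomial.  For `f`
homogeneous of degree `n` this is the class `[f]` of `f`. -/
def Qmk (n : ℕ) : P4 →ₗ[kk] Qn n :=
  ((hitSub n).comap (homog n).subtype).mkQ.comp (toHomog n)

/-- Substitution action of a matrix `M`: the algebra endomorphism `X i ↦ ∑ j M i j • X j`. -/
def substM (M : Matrix (Fin 4) (Fin 4) kk) : P4 →ₐ[kk] P4 :=
  aeval fun i => ∑ j, M i j • X j

/-- The set of invertible `4 × 4` matrices over `F_2`, i.e. `GL_4(F_2)`. -/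
def glSet : Set (Matrix (Fin 4) (Fin 4) kk) := {M | IsUnit M}

/-- The set of permutation matrices, i.e. `Σ_4 ⊆ GL_4(F_2)`. -/
def permSet : Set (Matrix (Fin 4) (Fin 4) kk) :=
  {M | ∃ σ : Equiv.Perm (Fin 4), M = σ.toPEquiv.toMatrix}

/-- Homogeneous polynomials of degree `n` whose class in `Q_n` is invariant under every
element of `G` (the action on classes being induced by `substM`): for every `M ∈ G`,
`M·f - f` is hit. -/
def invPre (n : ℕ) (G : Set (Matrix (Fin 4) (Fin 4) kk)) : Submodule kk P4 :=
  homog n ⊓ ⨅ M ∈ G, (hitSub n).comap ((substM M).toLinearMap - LinearMap.id)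

/-- The subspace `(Q_n)^G` of `G`-invariant classes in `Q_n`. -/
def QInv (n : ℕ) (G : Set (Matrix (Fin 4) (Fin 4) kk)) : Submodule kk (Qn n) :=
  (invPre n G).map (Qmk n)

/-- The `Σ_4`-submodule of `Q_n` generated by the classes of the polynomials in `S`:
the span of the classes of all the permuted polynomials `σ · f`, `σ ∈ Σ_4`, `f ∈ S`. -/
def permSpan (n : ℕ) (S : Set P4) : Submodule kk (Qn n) :=
  Submodule.span kk
    {c | ∃ σ : Equiv.Perm (Fin 4), ∃ f ∈ S, c = Qmk n (rename (⇑σ) f)}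

/-
Modulo hit polynomials, `P4` is spanned in the given degree by words, that is, by iterated products
`a₁ * (a₂ * (⋯) ^ 2) ^ 2` whose letters are `s + 1` products of three variables followed by `t - 1`
products of two variables, or `s` products of three variables followed by `t + 1` variables. The
words of the second kind span the lower step `low` of a filtration. On each step, a word depends
only on the two sets of its letters, and Plücker and incidence relations hold between words.

A polynomial is tested by restricting it to a three-dimensional space with a basis `B` and taking
the coefficient of the exponent with entries `2 ^ (l + m) - 1` on a set `U` of coordinates and
`2 ^ l - 1` elsewhere. This spike coefficient vanishes on hit polynomials and maps words to products
of minors of `B`, so it depends only on a flag: a line in a projective plane for the first kind of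
words, a point in a projective plane for the second one. By a finite computation in linear algebra,
these functionals detect all polynomials that are not hit.

As `GL_4` permutes the flags of each type transitively, a class is invariant if and only if the
functionals of each type are constant on it, and the dimension is the number of pairs of constants
which occur. The value one at all lines always occurs together with the value zero at all points.
For `3 ≤ s` the functionals at points are linearly independent, hence the value one occurs there as
well. For `s ≤ 2` they satisfy a relation: words with `s` hats are polynomials of degree `s` in the
coordinates of the plane, so the sum over the seven planes containing a given point is zero, whereas
seven equal values sum to the value itself.
-/

namespace Cohit

/-! ### Steenrod squares and hit polynomials -/

section Square

variable {σ : Type*}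

/-- The total Steenrod square with a bookkeeping variable `T`: the algebra homomorphism with
`X i ↦ X i + T * X i ^ 2`. -/
def totalSq : MvPolynomial σ kk →ₐ[kk] Polynomial (MvPolynomial σ kk) :=
  aeval fun i => Polynomial.C (X i) + Polynomial.X * Polynomial.C (X i ^ 2)

/-- The Steenrod square `Sq^k`, read off as the coefficient of `T ^ k` in `totalSq`. -/
def Sq (k : ℕ) : MvPolynomial σ kk →ₗ[kk] MvPolynomial σ kk :=
  ((Polynomial.lcoeff (MvPolynomial σ kk) k).restrictScalars kk).comp totalSq.toLinearMap

lemma Sq_eq_coeff (k : ℕ) (f : MvPolynomial σ kk) : Sq k f = (totalSq f).coeff k := rfl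

lemma totalSq_X (i : σ) : totalSq (X i : MvPolynomial σ kk) =
    Polynomial.C (X i) + Polynomial.X * Polynomial.C (X i ^ 2) := by
  simp [totalSq]

lemma Sq_mul (k : ℕ) (f g : MvPolynomial σ kk) :
    Sq k (f * g) = ∑ p ∈ Finset.HasAntidiagonal.antidiagonal k, Sq p.1 f * Sq p.2 g := by
  simp [Sq_eq_coeff, Polynomial.coeff_mul]

lemma totalSq_sq (f : MvPolynomial σ kk) :
    totalSq (f ^ 2) = Polynomial.expand _ 2 ((totalSq f).map (frobenius _ 2)) := by
  rw [map_pow, ← Polynomial.map_frobenius_expand 2 (totalSq f), Polynomial.map_expand]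

lemma Sq_two_mul_sq (k : ℕ) (f : MvPolynomial σ kk) : Sq (2 * k) (f ^ 2) = Sq k f ^ 2 := by
  rw [Sq_eq_coeff, totalSq_sq, mul_comm, Polynomial.coeff_expand_mul (by norm_num)]
  simp [Sq_eq_coeff, frobenius_def]

lemma Sq_odd_sq (k : ℕ) (f : MvPolynomial σ kk) : Sq (2 * k + 1) (f ^ 2) = 0 := by
  rw [Sq_eq_coeff, totalSq_sq, Polynomial.coeff_expand (by norm_num), if_neg (by omega)]

lemma Sq_zero (f : MvPolynomial σ kk) : Sq 0 f = f := by
  have h : ((Polynomial.aeval (0 : MvPolynomial σ kk)).restrictScalars kk).comp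
      (totalSq (σ := σ)) = AlgHom.id kk (MvPolynomial σ kk) := by
    ext i : 1
    simp [totalSq_X]
  simpa [Sq_eq_coeff, Polynomial.coeff_zero_eq_aeval_zero] using DFunLike.congr_fun h f

lemma Sq_one_X (i : σ) : Sq 1 (X i : MvPolynomial σ kk) = X i ^ 2 := by
  simp [Sq_eq_coeff, totalSq_X, Polynomial.coeff_C, -map_pow]

lemma Sq_X_of_two_le {k : ℕ} (hk : 2 ≤ k) (i : σ) : Sq k (X i : MvPolynomial σ kk) = 0 := by
  obtain ⟨j, rfl⟩ := Nat.exists_eq_add_of_le' hk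
  simp [Sq_eq_coeff, totalSq_X, -map_pow]

lemma Sq_one_mul (f g : MvPolynomial σ kk) : Sq 1 (f * g) = Sq 1 f * g + f * Sq 1 g := by
  rw [Sq_mul]
  simp [Finset.Nat.antidiagonal_succ, Sq_zero, add_comm]

lemma Sq_one_mul_sq (f g : MvPolynomial σ kk) : Sq 1 (f * g ^ 2) = Sq 1 f * g ^ 2 := by
  rw [Sq_one_mul, Sq_odd_sq 0, mul_zero, add_zero]

lemma Sq_X_pow_two_pow_mul (m j : ℕ) (i : σ) (f : MvPolynomial σ kk) :
    Sq m (X i ^ 2 ^ j * f) = X i ^ 2 ^ j * Sq m f +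
      if 2 ^ j ≤ m then X i ^ 2 ^ (j + 1) * Sq (m - 2 ^ j) f else 0 := by
  have h : totalSq (X i ^ 2 ^ j * f) = Polynomial.C (X i ^ 2 ^ j) * totalSq f +
      Polynomial.X ^ 2 ^ j * (Polynomial.C (X i ^ 2 ^ (j + 1)) * totalSq f) := by
    rw [map_mul, map_pow, totalSq_X, add_pow_char_pow, mul_pow, ← Polynomial.C_pow,
      ← Polynomial.C_pow, ← pow_mul, ← pow_succ']
    ring
  simp only [Sq_eq_coeff, h, Polynomial.coeff_add, Polynomial.coeff_C_mul,
    Polynomial.coeff_X_pow_mul']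

lemma Sq_succ_X_mul (k : ℕ) (i : σ) (f : MvPolynomial σ kk) :
    Sq (k + 1) (X i * f) = X i * Sq (k + 1) f + X i ^ 2 * Sq k f := by
  simpa using Sq_X_pow_two_pow_mul (k + 1) 0 i f

lemma Sq_odd_X_mul_sq (k : ℕ) (i : σ) (g : MvPolynomial σ kk) :
    Sq (2 * k + 1) (X i * g ^ 2) = (X i * Sq k g) ^ 2 := by
  rw [Sq_succ_X_mul, Sq_odd_sq, Sq_two_mul_sq]
  ring

lemma Sq_X_mul_sq (k : ℕ) (i : σ) (g : MvPolynomial σ kk) :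
    Sq (2 * k) (X i * g ^ 2) = X i * Sq k g ^ 2 := by
  cases k with
  | zero => simp [Sq_zero]
  | succ k =>
    rw [show 2 * (k + 1) = (2 * k + 1) + 1 by ring, Sq_succ_X_mul, Sq_odd_sq, mul_zero, add_zero,
      show 2 * k + 1 + 1 = 2 * (k + 1) by ring, Sq_two_mul_sq]

lemma Sq_X_mul_X_mul_sq (k : ℕ) (i j : σ) (g : MvPolynomial σ kk) :
    Sq (2 * (k + 1)) (X i * (X j * g ^ 2)) =
      X i * X j * Sq (k + 1) g ^ 2 + (X i * (X j * Sq k g)) ^ 2 := by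
  rw [show 2 * (k + 1) = (2 * k + 1) + 1 by ring, Sq_succ_X_mul,
    show 2 * k + 1 + 1 = 2 * (k + 1) by ring, Sq_X_mul_sq, Sq_odd_X_mul_sq]
  ring

lemma Sq_X_mul_X_mul_X_mul_sq (k : ℕ) (p q r : σ) (g : MvPolynomial σ kk) :
    Sq (2 * (k + 1)) (X p * (X q * (X r * g ^ 2))) = X p * X q * X r * Sq (k + 1) g ^ 2 +
      (X p * (X q * X r * Sq k g) ^ 2 + X q * (X p * X r * Sq k g) ^ 2 +
        X r * (X p * X q * Sq k g) ^ 2) := by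
  rw [show 2 * (k + 1) = (2 * k + 1) + 1 by ring, Sq_succ_X_mul,
    show 2 * k + 1 + 1 = 2 * (k + 1) by ring, Sq_X_mul_X_mul_sq,
    Sq_succ_X_mul (2 * k), Sq_odd_X_mul_sq, Sq_X_mul_sq]
  ring

/-- The behaviour of the Steenrod squares on a class `f` of degree `d`: `Sq^k` raises the degree
by `k`, vanishes for `k > d`, and is the squaring map for `k = d`. -/
structure IsUnstable (d : ℕ) (f : MvPolynomial σ kk) : Prop where
  isHomogeneous (k : ℕ) : (Sq k f).IsHomogeneous (d + k)
  natDegree_le : (totalSq f).natDegree ≤ d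
  Sq_top : Sq d f = f ^ 2

namespace IsUnstable

variable {d e : ℕ} {f g : MvPolynomial σ kk}

lemma mul (hf : IsUnstable d f) (hg : IsUnstable e g) : IsUnstable (d + e) (f * g) where
  isHomogeneous k := by
    rw [Sq_mul]
    refine IsHomogeneous.sum _ _ _ fun p hp => ?_
    have hdeg : d + e + k = (d + p.1) + (e + p.2) := by
      have := Finset.HasAntidiagonal.mem_antidiagonal.1 hp
      omega
    rw [hdeg]
    exact (hf.isHomogeneous p.1).mul (hg.isHomogeneous p.2)
  natDegree_le := by
    rw [map_mul]
    exact Polynomial.natDegree_mul_le_of_le hf.natDegree_le hg.natDegree_le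
  Sq_top := by
    rw [Sq_eq_coeff, map_mul,
      Polynomial.coeff_mul_add_eq_of_natDegree_le hf.natDegree_le hg.natDegree_le,
      ← Sq_eq_coeff, ← Sq_eq_coeff, hf.Sq_top, hg.Sq_top, mul_pow]

lemma add (hf : IsUnstable d f) (hg : IsUnstable d g) : IsUnstable d (f + g) where
  isHomogeneous k := by
    rw [map_add]
    exact (hf.isHomogeneous k).add (hg.isHomogeneous k)
  natDegree_le := by
    rw [map_add]
    exact Polynomial.natDegree_add_le_of_degree_le hf.natDegree_le hg.natDegree_le
  Sq_top := by rw [map_add, hf.Sq_top, hg.Sq_top, CharTwo.add_sq]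

lemma zero (d : ℕ) : IsUnstable d (0 : MvPolynomial σ kk) where
  isHomogeneous k := by simpa using isHomogeneous_zero σ kk (d + k)
  natDegree_le := by simp
  Sq_top := by simp

lemma C (c : kk) : IsUnstable 0 (C c : MvPolynomial σ kk) := by
  have htotal : totalSq (MvPolynomial.C c : MvPolynomial σ kk) =
      Polynomial.C (MvPolynomial.C c) := by
    rw [← MvPolynomial.algebraMap_eq, AlgHom.commutes]
    rfl
  refine ⟨fun k => ?_, by simp [htotal], ?_⟩
  · rw [Sq_eq_coeff, htotal, Polynomial.coeff_C]
    split_ifs with hk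
    · simpa [hk] using isHomogeneous_C σ c
    · exact isHomogeneous_zero σ kk _
  · rw [Sq_zero, ← map_pow, ZMod.pow_card]

lemma X (i : σ) : IsUnstable 1 (X i : MvPolynomial σ kk) where
  isHomogeneous k := by
    rcases k with _ | _ | k
    · simpa [Sq_zero] using isHomogeneous_X kk i
    · simpa [Sq_one_X] using isHomogeneous_X_pow (R := kk) i 2
    · simpa [Sq_X_of_two_le] using isHomogeneous_zero σ kk _
  natDegree_le := by
    rw [totalSq_X]
    compute_degree
  Sq_top := Sq_one_X i

lemma X_pow (i : σ) (n : ℕ) : IsUnstable n (MvPolynomial.X i ^ n : MvPolynomial σ kk) := by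
  induction n with
  | zero => simpa using C (σ := σ) 1
  | succ n ih =>
    rw [pow_succ]
    exact ih.mul (X i)

lemma monomial (m : σ →₀ ℕ) (c : kk) : IsUnstable m.degree (monomial m c) := by
  induction m using Finsupp.induction_linear generalizing c with
  | zero => simpa using C c
  | add m₁ m₂ h₁ h₂ => simpa [monomial_mul] using (h₁ c).mul (h₂ 1)
  | single i n => simpa [C_mul_X_pow_eq_monomial] using (C c).mul (X_pow i n)

end IsUnstable

variable {d : ℕ} {f : MvPolynomial σ kk}

lemma isUnstable_of_isHomogeneous (hf : f.IsHomogeneous d) : IsUnstable d f := by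
  rw [f.as_sum]
  refine Finset.sum_induction _ (IsUnstable d) (fun _ _ => .add) (.zero d) fun m hm => ?_
  have hdeg : m.degree = d := by
    rw [← hf (mem_support_iff.1 hm), Finsupp.degree_eq_weight_one]
    rfl
  exact hdeg ▸ .monomial m _

lemma isHomogeneous_Sq (hf : f.IsHomogeneous d) (k : ℕ) : (Sq k f).IsHomogeneous (d + k) :=
  (isUnstable_of_isHomogeneous hf).isHomogeneous k

lemma Sq_top (hf : f.IsHomogeneous d) : Sq d f = f ^ 2 :=
  (isUnstable_of_isHomogeneous hf).Sq_top

lemma Sq_eq_zero_of_lt (hf : f.IsHomogeneous d) {k : ℕ} (hk : d < k) : Sq k f = 0 :=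
  Polynomial.coeff_eq_zero_of_natDegree_lt
    ((isUnstable_of_isHomogeneous hf).natDegree_le.trans_lt hk)

end Square

section Hit

variable {σ : Type*}

lemma mem_of_add_mem {W : Submodule kk (MvPolynomial σ kk)} {f g : MvPolynomial σ kk}
    (h : f + g ∈ W) (hg : g ∈ W) : f ∈ W :=
  (W.add_mem_iff_left hg).1 h

/-- The map `f ↦ a * f ^ 2`, linear over the field with two elements. -/
def mulSq (a : MvPolynomial σ kk) : MvPolynomial σ kk →ₗ[kk] MvPolynomial σ kk :=
  AddMonoidHom.toZModLinearMap 2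
    { toFun := fun f => a * f ^ 2
      map_zero' := by simp
      map_add' := fun f g => by rw [CharTwo.add_sq, mul_add] }

lemma mulSq_apply (a f : MvPolynomial σ kk) : mulSq a f = a * f ^ 2 := rfl

lemma induction_on_isHomogeneous {p : MvPolynomial σ kk → Prop} (zero : p 0)
    (add : ∀ f g, p f → p g → p (f + g)) (homogeneous : ∀ d f, f.IsHomogeneous d → p f)
    (f : MvPolynomial σ kk) : p f := by
  rw [← sum_homogeneousComponent f]
  exact Finset.sum_induction _ p add zero fun d _ =>
    homogeneous d _ (homogeneousComponent_isHomogeneous d f)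

/-- The hit polynomials, not necessarily homogeneous. -/
def hit : Submodule kk (MvPolynomial σ kk) :=
  ⨆ k : ℕ, LinearMap.range (Sq (k + 1))

lemma Sq_mem_hit {k : ℕ} (hk : 1 ≤ k) (f : MvPolynomial σ kk) : Sq k f ∈ hit := by
  obtain ⟨j, rfl⟩ := Nat.exists_eq_add_of_le' hk
  exact Submodule.mem_iSup_of_mem j (LinearMap.mem_range_self _ f)

lemma map_mem_of_mem_hit {M : Type*} [AddCommGroup M] [Module kk M] {φ : MvPolynomial σ kk →ₗ[kk] M}
    {W : Submodule kk M} (h : ∀ k d g, g.IsHomogeneous d → φ (Sq (k + 1) g) ∈ W)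
    {f : MvPolynomial σ kk} (hf : f ∈ hit) : φ f ∈ W := by
  have hle : hit ≤ W.comap φ := iSup_le fun k => by
    rintro _ ⟨g, rfl⟩
    induction g using induction_on_isHomogeneous with
    | zero => simp
    | add f g hf hg => rw [map_add]; exact add_mem hf hg
    | homogeneous d g hg => exact h k d g hg
  exact hle hf

lemma X_mul_sq_mem_hit (i : σ) {f : MvPolynomial σ kk} (hf : f ∈ hit) : X i * f ^ 2 ∈ hit := by
  refine map_mem_of_mem_hit (φ := mulSq (X i)) (fun k _ g _ => ?_) hf
  rw [mulSq_apply, ← Sq_X_mul_sq]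
  exact Sq_mem_hit (by omega) _

lemma sq_X_mul_mem_hit (i : σ) (f : MvPolynomial σ kk) : (X i * f) ^ 2 ∈ hit := by
  have h : Sq 1 (X i * f ^ 2) = (X i * f) ^ 2 := by
    rw [Sq_one_mul_sq, Sq_one_X]
    ring
  exact h ▸ Sq_mem_hit le_rfl _

lemma X_mul_X_mul_sq_mem_hit (i j : σ) {f : MvPolynomial σ kk} (hf : f ∈ hit) :
    X i * X j * f ^ 2 ∈ hit := by
  refine map_mem_of_mem_hit (φ := mulSq (X i * X j)) (fun k _ g _ => ?_) hf
  refine mem_of_add_mem ?_ (sq_X_mul_mem_hit i (X j * Sq k g))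
  rw [mulSq_apply, ← Sq_X_mul_X_mul_sq]
  exact Sq_mem_hit (by omega) _

-- Telescopes `Sq^(d + 1 - 2^j) (X i ^ 2^j * f)` over `j`; as `d + 1` is odd, no exponent vanishes.
lemma X_mul_sq_mem_hit_of_even (i : σ) {d : ℕ} (hd : 0 < d) (he : Even d) {f : MvPolynomial σ kk}
    (hf : f.IsHomogeneous d) : X i * f ^ 2 ∈ hit := by
  let a (j : ℕ) : MvPolynomial σ kk :=
    if 2 ^ j ≤ d + 1 then X i ^ 2 ^ j * Sq (d + 1 - 2 ^ j) f else 0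
  have step (j : ℕ) : a j + a (j + 1) ∈ hit := by
    have hpow : (2 : ℕ) ^ (j + 1) = 2 ^ j + 2 ^ j := by ring
    by_cases hj : 2 ^ j ≤ d + 1
    · have hpos : 2 ^ j ≠ d + 1 := by
        cases j with
        | zero => simp; omega
        | succ j => rintro h; rw [Nat.even_iff] at he; omega
      have h := Sq_mem_hit (by omega : 1 ≤ d + 1 - 2 ^ j) (X i ^ 2 ^ j * f)
      rw [Sq_X_pow_two_pow_mul] at h
      convert h using 2
      · simp only [a, if_pos hj]
      · simp only [a, hpow, Nat.sub_sub, Nat.le_sub_iff_add_le hj]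
    · simp only [a, if_neg hj, if_neg (show ¬2 ^ (j + 1) ≤ d + 1 by omega), add_zero]
      exact zero_mem _
  have telescope (j : ℕ) : a 0 + a j ∈ hit := by
    induction j with
    | zero => rw [CharTwo.add_self_eq_zero]; exact zero_mem _
    | succ j ih =>
      have h := add_mem ih (step j)
      rwa [add_assoc, CharTwo.add_cancel_left] at h
  have hlast : a (d + 1) = 0 := if_neg (not_le.2 Nat.lt_two_pow_self)
  have hfirst : a 0 = X i * f ^ 2 := by simp [a, Sq_top hf]
  simpa [hfirst, hlast] using telescope (d + 1)

end Hit

section Homogeneous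

variable {σ M : Type*} [AddCommGroup M] [Module kk M] {W : Submodule kk M}
  {φ : MvPolynomial σ kk →ₗ[kk] M} {f : MvPolynomial σ kk}

lemma map_mem_of_monomial {n : ℕ} (hf : f.IsHomogeneous n)
    (h : ∀ m : σ →₀ ℕ, m.degree = n → φ (monomial m 1) ∈ W) : φ f ∈ W := by
  rw [f.as_sum, map_sum]
  refine W.sum_mem fun m hm => ?_
  have hdeg : m.degree = n := by
    rw [← hf (mem_support_iff.1 hm), Finsupp.degree_eq_weight_one]
    rfl
  rw [← mul_one (coeff m f), ← smul_eq_mul, ← smul_monomial, map_smul]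
  exact W.smul_mem _ (h m hdeg)

lemma map_mem_of_X_mul {n : ℕ} (hf : f.IsHomogeneous (n + 1))
    (h : ∀ i g, g.IsHomogeneous n → φ (X i * g) ∈ W) : φ f ∈ W := by
  refine map_mem_of_monomial hf fun m hm => ?_
  obtain ⟨i, hi⟩ : ∃ i, m i ≠ 0 := by
    by_contra! hzero
    simp [show m = 0 from Finsupp.ext hzero] at hm
  have hsplit : m = Finsupp.single i 1 + (m - Finsupp.single i 1) :=
    (add_tsub_cancel_of_le (Finsupp.single_le_iff.2 (Nat.one_le_iff_ne_zero.2 hi))).symm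
  have hmul : (monomial m 1 : MvPolynomial σ kk) =
      X i * monomial (m - Finsupp.single i 1) 1 := by
    rw [X, monomial_mul, one_mul, ← hsplit]
  rw [hmul]
  refine h i _ (isHomogeneous_monomial _ ?_)
  rw [hsplit, map_add, Finsupp.degree_single] at hm
  omega

lemma map_mem_of_one (hf : f.IsHomogeneous 0) (h : φ 1 ∈ W) : φ f ∈ W := by
  refine map_mem_of_monomial hf fun m hm => ?_
  rw [(Finsupp.degree_eq_zero_iff m).1 hm]
  exact h

lemma map_mem_of_prod_mul_sq {n : ℕ} (hf : f.IsHomogeneous n)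
    (h : ∀ (S : Finset σ) (d : ℕ) (y : MvPolynomial σ kk), S.card + 2 * d = n →
      y.IsHomogeneous d → φ ((∏ i ∈ S, X i) * y ^ 2) ∈ W) : φ f ∈ W := by
  refine map_mem_of_monomial hf fun m hm => ?_
  set S := m.support.filter fun i => m i % 2 = 1
  let y : MvPolynomial σ kk := ∏ i ∈ m.support, X i ^ (m i / 2)
  have hS (F : σ → ℕ → MvPolynomial σ kk) (hF : ∀ i, F i 0 = 1) :
      ∏ i ∈ S, F i 1 = ∏ i ∈ m.support, F i (m i % 2) := by
    rw [Finset.prod_filter]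
    refine Finset.prod_congr rfl fun i _ => ?_
    rcases Nat.mod_two_eq_zero_or_one (m i) with hi | hi <;> simp [hi, hF]
  have hcard : S.card = ∑ i ∈ m.support, m i % 2 := by
    rw [Finset.card_filter]
    refine Finset.sum_congr rfl fun i _ => ?_
    split_ifs <;> omega
  have hmonomial : (monomial m 1 : MvPolynomial σ kk) = (∏ i ∈ S, X i) * y ^ 2 := by
    have hX := hS (fun i e => X i ^ e) fun i => pow_zero _
    simp only [pow_one] at hX
    rw [monomial_eq, C_1, one_mul, hX, ← Finset.prod_pow, ← Finset.prod_mul_distrib]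
    refine Finset.prod_congr rfl fun i _ => ?_
    rw [← pow_mul, ← pow_add]
    congr 1
    omega
  rw [hmonomial]
  refine h S (∑ i ∈ m.support, m i / 2) y ?_
    (IsHomogeneous.prod _ _ _ fun i _ => isHomogeneous_X_pow i _)
  rw [hcard, Finset.mul_sum, ← Finset.sum_add_distrib, ← hm, Finsupp.degree_apply]
  exact Finset.sum_congr rfl fun i _ => by omega

lemma sq_mem_hit {n : ℕ} (hn : 0 < n) (hf : f.IsHomogeneous n) : f ^ 2 ∈ hit := by
  obtain ⟨d, rfl⟩ := Nat.exists_eq_add_of_le' hn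
  have h : mulSq 1 f ∈ hit := map_mem_of_X_mul hf fun i g _ => by
    simpa [mulSq_apply] using sq_X_mul_mem_hit i g
  simpa [mulSq_apply] using h

lemma homogeneousComponent_of_isHomogeneous {d : ℕ} (hf : f.IsHomogeneous d) (n : ℕ) :
    homogeneousComponent n f = if n = d then f else 0 :=
  homogeneousComponent_of_mem hf

lemma homogeneousComponent_self {d : ℕ} (hf : f.IsHomogeneous d) :
    homogeneousComponent d f = f := by
  rw [homogeneousComponent_of_isHomogeneous hf, if_pos rfl]

lemma homogeneousComponent_mem_hit (n : ℕ) (hf : f ∈ hit) : homogeneousComponent n f ∈ hit := by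
  refine map_mem_of_mem_hit (fun k d g hg => ?_) hf
  rw [homogeneousComponent_of_isHomogeneous (isHomogeneous_Sq hg _)]
  split_ifs
  · exact Sq_mem_hit (by omega) g
  · exact zero_mem _

lemma isHomogeneous_mul_sq {a : MvPolynomial σ kk} {k d : ℕ} (ha : a.IsHomogeneous k)
    (hf : f.IsHomogeneous d) : (a * f ^ 2).IsHomogeneous (k + 2 * d) :=
  mul_comm d 2 ▸ ha.mul (hf.pow 2)

lemma homogeneousComponent_mul_sq {a : MvPolynomial σ kk} {k : ℕ} (ha : a.IsHomogeneous k)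
    (d : ℕ) (f : MvPolynomial σ kk) :
    homogeneousComponent (k + 2 * d) (a * f ^ 2) = a * homogeneousComponent d f ^ 2 := by
  induction f using induction_on_isHomogeneous with
  | zero => simp
  | add f g hf hg => rw [CharTwo.add_sq, mul_add, map_add, hf, hg, map_add, CharTwo.add_sq, mul_add]
  | homogeneous e f hf =>
    rw [homogeneousComponent_of_isHomogeneous (isHomogeneous_mul_sq ha hf),
      homogeneousComponent_of_isHomogeneous hf]
    by_cases hde : d = e <;> simp [hde]

/-- The polynomials all of whose homogeneous components have odd degree. -/
def oddDegree : Submodule kk (MvPolynomial σ kk) :=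
  ⨅ d : ℕ, LinearMap.ker (homogeneousComponent (2 * d))

lemma homogeneousComponent_eq_zero_of_mem_oddDegree (hf : f ∈ oddDegree) {d : ℕ} (hd : Even d) :
    homogeneousComponent d f = 0 := by
  obtain ⟨e, rfl⟩ := hd.exists_two_nsmul
  exact (Submodule.mem_iInf _).1 hf e

lemma mem_oddDegree_of_isHomogeneous {d : ℕ} (hd : Odd d) (hf : f.IsHomogeneous d) :
    f ∈ oddDegree := by
  refine (Submodule.mem_iInf _).2 fun e => ?_
  rw [LinearMap.mem_ker, homogeneousComponent_of_isHomogeneous hf, if_neg]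
  rintro rfl
  exact Nat.not_odd_iff_even.2 (even_two_mul e) hd

lemma mul_sq_mem_oddDegree {a : MvPolynomial σ kk} {k : ℕ} (hk : Odd k) (ha : a.IsHomogeneous k)
    (f : MvPolynomial σ kk) : a * f ^ 2 ∈ oddDegree := by
  induction f using induction_on_isHomogeneous with
  | zero => simp
  | add f g hf hg => rw [CharTwo.add_sq, mul_add]; exact add_mem hf hg
  | homogeneous d f hf =>
    exact mem_oddDegree_of_isHomogeneous (hk.add_even (even_two_mul d)) (isHomogeneous_mul_sq ha hf)

lemma map_mem_of_mem_oddDegree (hf : f ∈ oddDegree)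
    (h : ∀ d, Odd d → φ (homogeneousComponent d f) ∈ W) : φ f ∈ W := by
  rw [← sum_homogeneousComponent f, map_sum]
  refine W.sum_mem fun d _ => ?_
  rcases Nat.even_or_odd d with hd | hd
  · rw [homogeneousComponent_eq_zero_of_mem_oddDegree hf hd, map_zero]
    exact zero_mem _
  · exact h d hd

lemma X_mul_X_mul_odd_sq_mem_hit (i j : σ) (hf : f ∈ oddDegree) :
    X j * (X i * f) ^ 2 ∈ hit := by
  suffices h : (mulSq (X j)).comp (LinearMap.mulLeft kk (X i)) f ∈ hit from h
  refine map_mem_of_mem_oddDegree hf fun d hd => ?_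
  have hX := (isHomogeneous_X kk i).mul (homogeneousComponent_isHomogeneous d f)
  exact X_mul_sq_mem_hit_of_even j (by omega) (odd_one.add_odd hd) hX

lemma X_mul_sq_mem_hit_inf_oddDegree (i : σ) (hf : f ∈ hit ⊓ oddDegree) :
    X i * f ^ 2 ∈ hit ⊓ oddDegree :=
  ⟨X_mul_sq_mem_hit i hf.1, mul_sq_mem_oddDegree odd_one (isHomogeneous_X kk i) f⟩

end Homogeneous

section HitSub

variable {n : ℕ} {f : P4}

lemma sqTotal_eq_sum_Sq {d : ℕ} {g : P4} (hg : g.IsHomogeneous d) :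
    sqTotal g = ∑ j ∈ Finset.range (d + 1), Sq j g := by
  have heval : sqTotal =
      ((Polynomial.aeval (1 : P4)).restrictScalars kk).comp (totalSq (σ := Fin 4)) := by
    ext i : 1
    simp [totalSq_X, sqTotal]
  rw [heval, AlgHom.comp_apply, AlgHom.restrictScalars_apply,
    Polynomial.aeval_eq_sum_range'
      (Nat.lt_succ_of_le (isUnstable_of_isHomogeneous hg).natDegree_le)]
  simp [Sq_eq_coeff]

lemma homogeneousComponent_sqTotal {d : ℕ} {g : P4} (hg : g.IsHomogeneous d) (k : ℕ) :
    homogeneousComponent (d + k) (sqTotal g) = Sq k g := by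
  rw [sqTotal_eq_sum_Sq hg, map_sum]
  have hcomponent (j : ℕ) :
      homogeneousComponent (d + k) (Sq j g) = if k = j then Sq j g else 0 := by
    rw [homogeneousComponent_of_isHomogeneous (isHomogeneous_Sq hg j)]
    simp
  simp only [hcomponent, Finset.sum_ite_eq, Finset.mem_range]
  split_ifs with hk
  · rfl
  · rw [Sq_eq_zero_of_lt hg (by omega)]

lemma hitSub_le_hit (n : ℕ) : hitSub n ≤ hit := by
  refine Submodule.span_le.2 ?_
  rintro _ ⟨d, hd, g, hg, rfl⟩
  obtain ⟨k, rfl⟩ := Nat.exists_eq_add_of_le hd.le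
  rw [homogeneousComponent_sqTotal hg]
  exact Sq_mem_hit (by omega) g

lemma homogeneousComponent_mem_hitSub (n : ℕ) (hf : f ∈ hit) :
    homogeneousComponent n f ∈ hitSub n := by
  refine map_mem_of_mem_hit (fun k d g hg => ?_) hf
  rw [homogeneousComponent_of_isHomogeneous (isHomogeneous_Sq hg _)]
  split_ifs with hn
  · exact Submodule.subset_span
      ⟨d, by omega, g, hg, by rw [hn, homogeneousComponent_sqTotal hg]⟩
  · exact zero_mem _

lemma mem_hitSub_iff (hf : f.IsHomogeneous n) : f ∈ hitSub n ↔ f ∈ hit :=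
  ⟨fun h => hitSub_le_hit n h, fun h =>
    homogeneousComponent_self hf ▸ homogeneousComponent_mem_hitSub n h⟩

end HitSub

/-! ### The filtration and words -/

section FourVariables

/-- The indices `i`, `j`, `k`, `l` are the four variables in some order. -/
structure Distinct (i j k l : Fin 4) : Prop where
  ne₁₂ : i ≠ j
  ne₁₃ : i ≠ k
  ne₁₄ : i ≠ l
  ne₂₃ : j ≠ k
  ne₂₄ : j ≠ l
  ne₃₄ : k ≠ l

namespace Distinct

variable {i j k l : Fin 4}

instance : Decidable (Distinct i j k l) :=
  decidable_of_iff (i ≠ j ∧ i ≠ k ∧ i ≠ l ∧ j ≠ k ∧ j ≠ l ∧ k ≠ l)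
    ⟨fun ⟨h₁, h₂, h₃, h₄, h₅, h₆⟩ => ⟨h₁, h₂, h₃, h₄, h₅, h₆⟩,
      fun ⟨h₁, h₂, h₃, h₄, h₅, h₆⟩ => ⟨h₁, h₂, h₃, h₄, h₅, h₆⟩⟩

lemma second_first (h : Distinct i j k l) : Distinct j i k l :=
  ⟨h.1.symm, h.4, h.5, h.2, h.3, h.6⟩

lemma third_first (h : Distinct i j k l) : Distinct k i j l :=
  ⟨h.2.symm, h.4.symm, h.6, h.1, h.3, h.5⟩

lemma fourth_first (h : Distinct i j k l) : Distinct l i j k :=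
  ⟨h.3.symm, h.5.symm, h.6.symm, h.1, h.2, h.4⟩

lemma exists_of_ne (h : i ≠ j) : ∃ k l, Distinct i j k l := by
  revert i j; decide

lemma exists_first (i : Fin 4) : ∃ j k l, Distinct i j k l := by
  revert i; decide

lemma erase_eq (h : Distinct i j k l) : Finset.univ.erase i = {j, k, l} := by
  revert i j k l; decide

end Distinct

/-- The product of the three variables other than `X i`. -/
def hat (i : Fin 4) : P4 := ∏ j ∈ Finset.univ.erase i, X j

variable {i j k l : Fin 4}

lemma hat_eq (h : Distinct i j k l) : hat i = X j * X k * X l := by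
  rw [hat, h.erase_eq, Finset.prod_insert (by simp [h.ne₂₃, h.ne₂₄]),
    Finset.prod_pair h.ne₃₄, mul_assoc]

lemma prod_X_eq (h : Distinct i j k l) : (∏ a, X a : P4) = X i * X j * X k * X l := by
  rw [← Finset.mul_prod_erase _ _ (Finset.mem_univ i), ← hat, hat_eq h]
  ring

lemma isHomogeneous_hat (i : Fin 4) : (hat i).IsHomogeneous 3 := by
  simpa [hat, Finset.card_erase_of_mem] using
    IsHomogeneous.prod (R := kk) (Finset.univ.erase i) X (fun _ => 1) fun j _ =>
      isHomogeneous_X kk j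

lemma isHomogeneous_X_mul {d : ℕ} {g : P4} (i : Fin 4) (hg : g.IsHomogeneous d) :
    (X i * g).IsHomogeneous (d + 1) :=
  add_comm 1 d ▸ (isHomogeneous_X kk i).mul hg

/-- The six two-element subsets of the variables. Reversal of `Fin 6` is complementation. -/
def pair : Fin 6 → Fin 4 × Fin 4 :=
  ![(0, 1), (0, 2), (0, 3), (1, 2), (1, 3), (2, 3)]

/-- The product of the two variables in the pair `e`. -/
def pairProd (e : Fin 6) : P4 := X (pair e).1 * X (pair e).2

/-- The index of the pair `{i, j}`; the diagonal gets the junk value `0`. -/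
def pairIdx (i j : Fin 4) : Fin 6 :=
  ![![0, 0, 1, 2], ![0, 0, 3, 4], ![1, 3, 0, 5], ![2, 4, 5, 0]] i j

lemma pair_pairIdx (h : i ≠ j) : pair (pairIdx i j) = (i, j) ∨ pair (pairIdx i j) = (j, i) := by
  revert i j; decide

lemma pairProd_pairIdx (h : i ≠ j) : pairProd (pairIdx i j) = X i * X j := by
  rcases pair_pairIdx h with h | h <;> simp only [pairProd, h, mul_comm]

variable {M : Type*} [AddCommGroup M] [Module kk M] {φ : P4 →ₗ[kk] M} {W : Submodule kk M}
  {f : P4} {n : ℕ}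

lemma map_mem_of_odd (hn : Odd n) (hf : f.IsHomogeneous n)
    (h₁ : ∀ i d (y : P4), 1 + 2 * d = n → y.IsHomogeneous d → φ (X i * y ^ 2) ∈ W)
    (h₃ : ∀ i d (y : P4), 3 + 2 * d = n → y.IsHomogeneous d → φ (hat i * y ^ 2) ∈ W) :
    φ f ∈ W := by
  refine map_mem_of_prod_mul_sq hf fun S d y hd hy => ?_
  have hS : ∀ S : Finset (Fin 4), S.card % 2 = 1 →
      (∃ i, S = {i}) ∨ ∃ i, S = Finset.univ.erase i := by decide
  rcases hS S (by rcases hn with ⟨m, rfl⟩; omega) with ⟨i, rfl⟩ | ⟨i, rfl⟩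
  · rw [Finset.prod_singleton]
    exact h₁ i d y (by simpa using hd) hy
  · exact h₃ i d y (by simpa [Finset.card_erase_of_mem] using hd) hy

lemma map_mem_of_even (hn : Even n) (hf : f.IsHomogeneous n)
    (h₀ : ∀ d (y : P4), 2 * d = n → y.IsHomogeneous d → φ (y ^ 2) ∈ W)
    (h₂ : ∀ i j d (y : P4), i ≠ j → 2 + 2 * d = n → y.IsHomogeneous d →
      φ (X i * X j * y ^ 2) ∈ W)
    (h₄ : ∀ d (y : P4), 4 + 2 * d = n → y.IsHomogeneous d → φ ((∏ i, X i) * y ^ 2) ∈ W) :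
    φ f ∈ W := by
  refine map_mem_of_prod_mul_sq hf fun S d y hd hy => ?_
  have hS : ∀ S : Finset (Fin 4), S.card % 2 = 0 →
      S = ∅ ∨ (∃ i j, i ≠ j ∧ S = {i, j}) ∨ S = Finset.univ := by decide
  rcases hS S (by rcases hn with ⟨m, rfl⟩; omega) with rfl | ⟨i, j, hij, rfl⟩ | rfl
  · rw [Finset.prod_empty, one_mul]
    exact h₀ d y (by simpa using hd) hy
  · rw [Finset.prod_pair hij]
    exact h₂ i j d y hij (by rwa [Finset.card_pair hij] at hd) hy
  · exact h₄ d y (by simpa using hd) hy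

end FourVariables

section Low

lemma hat_mul_Sq_sq_mem (i : Fin 4) (k : ℕ) (g : P4) {W : Submodule kk P4} (hW : hit ≤ W)
    (h : ∀ p q r, X p * (X q * X r * Sq k g) ^ 2 ∈ W) : hat i * Sq (k + 1) g ^ 2 ∈ W := by
  obtain ⟨p, q, r, hd⟩ := Distinct.exists_first i
  rw [hat_eq hd]
  refine mem_of_add_mem (hW ?_) (W.add_mem (W.add_mem (h p q r) (h q p r)) (h r p q))
  exact Sq_X_mul_X_mul_X_mul_sq k p q r g ▸ Sq_mem_hit (by omega) _

lemma hat_mul_sq_mem_hit_inf_oddDegree (i : Fin 4) {f : P4} (hf : f ∈ hit ⊓ oddDegree) :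
    hat i * f ^ 2 ∈ hit ⊓ oddDegree := by
  refine ⟨?_, mul_sq_mem_oddDegree (by decide) (isHomogeneous_hat i) f⟩
  refine map_mem_of_mem_oddDegree (φ := mulSq (hat i)) hf.2 fun d hd => ?_
  refine map_mem_of_mem_hit (φ := (mulSq (hat i)).comp (homogeneousComponent d))
    (fun k e g hg => ?_) hf.1
  rw [LinearMap.comp_apply, homogeneousComponent_of_isHomogeneous (isHomogeneous_Sq hg _)]
  split_ifs with he
  · refine hat_mul_Sq_sq_mem i k g le_rfl fun p q r => ?_
    have h := isHomogeneous_X_mul q (isHomogeneous_X_mul r (isHomogeneous_Sq hg k))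
    rw [← mul_assoc] at h
    refine X_mul_sq_mem_hit_of_even p (by omega) ?_ h
    rw [he] at hd
    rcases hd with ⟨m, hm⟩
    exact ⟨m + 1, by omega⟩
  · simp

/-- The polynomials obtained from hit polynomials and those of the form `X p * y ^ 2` by adding
and applying `f ↦ hat i * f ^ 2`: the middle step of the filtration of `P4` by which the
cohit classes are separated. -/
inductive IsLow : P4 → Prop
  | hit {f} : f ∈ hit → IsLow f
  | X_mul_sq (p) (y : P4) : IsLow (X p * y ^ 2)
  | add {f g} : IsLow f → IsLow g → IsLow (f + g)
  | hat_mul_sq (i) {f} : IsLow f → IsLow (hat i * f ^ 2)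

/-- The subspace of polynomials satisfying `IsLow`. -/
def low : Submodule kk P4 where
  carrier := {f | IsLow f}
  add_mem' := .add
  zero_mem' := .hit (Submodule.zero_mem _)
  smul_mem' c f hf := by
    obtain rfl | rfl : c = 0 ∨ c = 1 := by revert c; decide
    · rw [zero_smul]; exact .hit (Submodule.zero_mem _)
    · rwa [one_smul]

lemma hit_le_low : hit ≤ low := fun _ => IsLow.hit

lemma X_mul_sq_mem_low (p : Fin 4) (y : P4) : X p * y ^ 2 ∈ low := .X_mul_sq p y

lemma hat_mul_sq_mem_low (i : Fin 4) {f : P4} (hf : f ∈ low) : hat i * f ^ 2 ∈ low :=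
  .hat_mul_sq i hf

lemma homogeneousComponent_mem_hit_of_mem_low {n : ℕ} (hn : Even n) {f : P4} (hf : f ∈ low) :
    homogeneousComponent n f ∈ hit := by
  induction hf with
  | hit h => exact homogeneousComponent_mem_hit n h
  | X_mul_sq p y =>
    rw [homogeneousComponent_eq_zero_of_mem_oddDegree
      (mul_sq_mem_oddDegree odd_one (isHomogeneous_X kk p) y) hn]
    exact zero_mem _
  | add _ _ hf hg => rw [map_add]; exact add_mem hf hg
  | hat_mul_sq i =>
    rw [homogeneousComponent_eq_zero_of_mem_oddDegree
      (mul_sq_mem_oddDegree (by decide) (isHomogeneous_hat i) _) hn]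
    exact zero_mem _

end Low

section Word

variable {α : Type*} {a : α → P4}

/-- The iterated product `a i₁ * (a i₂ * (⋯ (a iₖ * g ^ 2) ⋯) ^ 2) ^ 2` along a list of letters. -/
def word (a : α → P4) (L : List α) (g : P4) : P4 := L.foldr (fun i f => a i * f ^ 2) g

@[simp]
lemma word_nil (g : P4) : word a [] g = g := rfl

lemma word_cons (i : α) (L : List α) (g : P4) : word a (i :: L) g = a i * word a L g ^ 2 := rfl

lemma word_singleton (i : α) (g : P4) : word a [i] g = a i * g ^ 2 := rfl

lemma word_append (L M : List α) (g : P4) : word a (L ++ M) g = word a L (word a M g) := by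
  simp only [word, List.foldr_append]

lemma word_add (L : List α) (f g : P4) : word a L (f + g) = word a L f + word a L g := by
  induction L with
  | nil => rfl
  | cons i L ih => simp only [word_cons, ih, CharTwo.add_sq, mul_add]

lemma word_mem {W : Submodule kk P4} (h : ∀ i, ∀ f ∈ W, a i * f ^ 2 ∈ W) (L : List α) {g : P4}
    (hg : g ∈ W) : word a L g ∈ W := by
  induction L with
  | nil => exact hg
  | cons i L ih => exact h i _ ih

/-- The sum of `W` and the span of the words with `m` letters `hat i` followed by `n` letters
`a i`. -/
def hatWordSpan (W : Submodule kk P4) (a : α → P4) (m n : ℕ) : Submodule kk P4 :=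
  W ⊔ Submodule.span kk
    {p | ∃ L D, L.length = m ∧ D.length = n ∧ word hat L (word a D 1) = p}

variable {W U : Submodule kk P4} {m n : ℕ} {f : P4}

lemma le_hatWordSpan : W ≤ hatWordSpan W a m n := le_sup_left

lemma word_mem_hatWordSpan (L : List (Fin 4)) (D : List α) :
    word hat L (word a D 1) ∈ hatWordSpan W a L.length D.length :=
  Submodule.mem_sup_right (Submodule.subset_span ⟨L, D, rfl, rfl, rfl⟩)

lemma map_mem_of_mem_hatWordSpan {φ : P4 →ₗ[kk] P4} (hW : ∀ f ∈ W, φ f ∈ U)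
    (h : ∀ L D, L.length = m → D.length = n → φ (word hat L (word a D 1)) ∈ U)
    (hf : f ∈ hatWordSpan W a m n) : φ f ∈ U := by
  refine (sup_le (c := U.comap φ) hW (Submodule.span_le.2 ?_)) hf
  rintro _ ⟨L, D, hL, hD, rfl⟩
  exact h L D hL hD

lemma hatWordSpan_mono (hWU : W ≤ U) : hatWordSpan W a m n ≤ hatWordSpan U a m n :=
  sup_le_sup_right hWU _

lemma hat_mul_sq_mem_hatWordSpan {i : Fin 4} (hW : ∀ f ∈ W, hat i * f ^ 2 ∈ W)
    (hf : f ∈ hatWordSpan W a m n) : hat i * f ^ 2 ∈ hatWordSpan W a (m + 1) n := by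
  refine map_mem_of_mem_hatWordSpan (φ := mulSq (hat i))
    (fun f hf => le_hatWordSpan (hW f hf)) ?_ hf
  rintro L D rfl rfl
  exact word_mem_hatWordSpan (i :: L) D

lemma mul_sq_mem_hatWordSpan {e : α} (hW : ∀ f ∈ W, a e * f ^ 2 ∈ W)
    (hf : f ∈ hatWordSpan W a 0 n) : a e * f ^ 2 ∈ hatWordSpan W a 0 (n + 1) := by
  refine map_mem_of_mem_hatWordSpan (φ := mulSq (a e))
    (fun f hf => le_hatWordSpan (hW f hf)) ?_ hf
  rintro L D hL rfl
  rw [List.length_eq_zero_iff.1 hL]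
  exact word_mem_hatWordSpan [] (e :: D)

lemma isHomogeneous_word {d e : ℕ} (ha : ∀ i, (a i).IsHomogeneous d) (L : List α) {g : P4}
    (hg : g.IsHomogeneous e) :
    (word a L g).IsHomogeneous (d * (2 ^ L.length - 1) + 2 ^ L.length * e) := by
  induction L with
  | nil => simpa using hg
  | cons i L ih =>
    obtain ⟨b, hb⟩ : ∃ b, 2 ^ L.length = b + 1 := Nat.exists_eq_add_of_le' Nat.one_le_two_pow
    rw [word_cons]
    convert isHomogeneous_mul_sq (ha i) ih using 1
    rw [List.length_cons, pow_succ, hb, Nat.add_sub_cancel,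
      show (b + 1) * 2 - 1 = 2 * b + 1 by omega]
    ring

lemma isHomogeneous_word_X (D : List (Fin 4)) :
    (word X D 1).IsHomogeneous (2 ^ D.length - 1) := by
  simpa using isHomogeneous_word (isHomogeneous_X kk) D (isHomogeneous_one (Fin 4) kk)

end Word

section HitRelations

variable {i j k l : Fin 4}

lemma sum_two_sq_mem_hit (i j : Fin 4) (g : P4) :
    X i ^ 2 * X j * g ^ 2 + X i * X j ^ 2 * g ^ 2 ∈ hit := by
  convert Sq_mem_hit le_rfl (X i * X j * g ^ 2) using 1
  rw [Sq_one_mul_sq]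
  simp only [Sq_one_mul, Sq_one_X]
  ring

lemma sum_three_sq_mem_hit (i j k : Fin 4) (g : P4) :
    X i ^ 2 * X j * X k * g ^ 2 + X i * X j ^ 2 * X k * g ^ 2 + X i * X j * X k ^ 2 * g ^ 2
      ∈ hit := by
  convert Sq_mem_hit le_rfl (X i * X j * X k * g ^ 2) using 1
  rw [Sq_one_mul_sq]
  simp only [Sq_one_mul, Sq_one_X]
  ring

lemma sum_four_sq_mem_hit (i j k l : Fin 4) (g : P4) :
    X i ^ 2 * X j * X k * X l * g ^ 2 + X i * X j ^ 2 * X k * X l * g ^ 2 +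
      X i * X j * X k ^ 2 * X l * g ^ 2 + X i * X j * X k * X l ^ 2 * g ^ 2 ∈ hit := by
  convert Sq_mem_hit le_rfl (X i * X j * X k * X l * g ^ 2) using 1
  rw [Sq_one_mul_sq]
  simp only [Sq_one_mul, Sq_one_X]
  ring

lemma X_mul_hat_sq_add_X_mul_X_sq_mem_hit (hd : Distinct i j k l) (g : P4) :
    X j * (hat i * g ^ 2) ^ 2 + X k * (X l * (X j * g) ^ 2) ^ 2 ∈ hit := by
  rw [hat_eq hd]
  convert sum_two_sq_mem_hit j k (X j * X l * g ^ 2) using 1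
  ring

lemma X_mul_hat_sq_add_mem_hit (hij : i ≠ j) (g : P4) :
    X i * (hat i * g) ^ 2 + X j * (hat j * g) ^ 2 ∈ hit := by
  obtain ⟨k, l, hd⟩ := Distinct.exists_of_ne hij
  rw [hat_eq hd, hat_eq hd.second_first]
  convert sum_two_sq_mem_hit i j (X k * X l * g) using 1
  ring

lemma X_mul_hat_sq_add_hat_mul_X_sq_mem_hit (i : Fin 4) :
    X i * hat i ^ 2 + hat i * (X i ^ 2) ^ 2 ∈ hit := by
  obtain ⟨j, k, l, hd⟩ := Distinct.exists_first i
  have h := Sq_mem_hit (k := 2) one_le_two (X j * (X k * (X l * X i ^ 2)))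
  have hj := X_mul_hat_sq_add_mem_hit hd.ne₁₂ 1
  have hk := X_mul_hat_sq_add_mem_hit hd.ne₁₃ 1
  have hl := X_mul_hat_sq_add_mem_hit hd.ne₁₄ 1
  rw [Sq_X_mul_X_mul_X_mul_sq 0 j k l, Sq_zero, zero_add, Sq_one_X] at h
  rw [mul_one, mul_one] at hj hk hl
  convert add_mem (add_mem h hj) (add_mem hk hl) using 1
  rw [hat_eq hd, hat_eq hd.second_first, hat_eq hd.third_first, hat_eq hd.fourth_first]
  linear_combination (-(X i * (X j * X k * X l) ^ 2) - X j * (X i * X k * X l) ^ 2 -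
    X k * (X i * X j * X l) ^ 2 - X l * (X i * X j * X k) ^ 2) *
    CharTwo.two_eq_zero (R := P4)

end HitRelations

section SpanningOneVariable

variable {d t : ℕ} {W : Submodule kk P4}

lemma X_mul_hat_mul_sq_mem_of_ne (hW : hit ≤ W)
    (h : ∀ i j, i ≠ j → ∀ g : P4, g.IsHomogeneous (d + 1) → X i * (hat j * g ^ 2) ^ 2 ∈ W)
    (i j : Fin 4) {g : P4} (hg : g.IsHomogeneous (d + 1)) : X i * (hat j * g ^ 2) ^ 2 ∈ W := by
  rcases ne_or_eq i j with hij | rfl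
  · exact h i j hij g hg
  refine map_mem_of_X_mul (φ := (mulSq (X i)).comp (mulSq (hat i))) hg fun k g hg => ?_
  have hk : X k * (hat k * (X k * g) ^ 2) ^ 2 ∈ W := by
    obtain ⟨a, b, c, hd⟩ := Distinct.exists_first k
    have ha := h k a hd.ne₁₂ _ (isHomogeneous_X_mul a hg)
    have hb := h k b hd.ne₁₃ _ (isHomogeneous_X_mul b hg)
    have hc := h k c hd.ne₁₄ _ (isHomogeneous_X_mul c hg)
    refine mem_of_add_mem ?_ (add_mem (add_mem ha hb) hc)
    convert hW (X_mul_sq_mem_hit k (sum_four_sq_mem_hit k a b c g)) using 1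
    rw [hat_eq hd, hat_eq hd.second_first, hat_eq hd.third_first, hat_eq hd.fourth_first]
    simp only [CharTwo.add_sq, mul_add]
    ring
  rcases eq_or_ne i k with rfl | hik
  · exact hk
  · exact mem_of_add_mem (hW (X_mul_hat_sq_add_mem_hit hik _)) hk

lemma X_mul_sq_mem_of_X_mul_X_mul_sq (hW : hit ≤ W)
    (h : ∀ i j (z : P4), z.IsHomogeneous (d + 2) → X i * (X j * z ^ 2) ^ 2 ∈ W) (i : Fin 4)
    {y : P4} (hy : y.IsHomogeneous (2 * (d + 2) + 1)) : X i * y ^ 2 ∈ W := by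
  refine map_mem_of_odd (φ := mulSq (X i)) ⟨_, rfl⟩ hy (fun j e z he hz => ?_)
    (fun j e g he hg => ?_)
  · obtain rfl : e = d + 2 := by omega
    exact h i j z hz
  · obtain rfl : e = d + 1 := by omega
    refine X_mul_hat_mul_sq_mem_of_ne hW (fun i j hij g hg => ?_) i j hg
    obtain ⟨k, l, hd⟩ := Distinct.exists_of_ne hij
    exact mem_of_add_mem (hW (X_mul_hat_sq_add_X_mul_X_sq_mem_hit hd.second_first g))
      (h k l _ (isHomogeneous_X_mul i hg))

lemma word_X_four_mem (i j k l : Fin 4) :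
    X i * (X j * (X k * X l ^ 2) ^ 2) ^ 2 ∈ hatWordSpan hit X 0 4 := by
  simpa [word] using word_mem_hatWordSpan (W := hit) (a := X) [] [i, j, k, l]

lemma X_mul_X_mul_hat_self_mem_of_ne {i j : Fin 4} (hij : i ≠ j) :
    X i * (X j * hat j ^ 2) ^ 2 ∈ hatWordSpan hit X 0 4 := by
  obtain ⟨k, l, hd⟩ := Distinct.exists_of_ne hij
  have h := X_mul_sq_mem_hit i (X_mul_hat_sq_add_hat_mul_X_sq_mem_hit j)
  rw [CharTwo.add_sq, mul_add] at h
  refine mem_of_add_mem (le_hatWordSpan h) (mem_of_add_mem (le_hatWordSpan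
    (X_mul_hat_sq_add_X_mul_X_sq_mem_hit hd.second_first (X j ^ 2))) ?_)
  exact word_X_four_mem k l i j

lemma X_mul_X_mul_hat_mem (i j k : Fin 4) :
    X i * (X j * hat k ^ 2) ^ 2 ∈ hatWordSpan hit X 0 4 := by
  rcases ne_or_eq j k with hjk | rfl
  · obtain ⟨a, b, hd⟩ := Distinct.exists_of_ne hjk
    have h := X_mul_sq_mem_hit i (X_mul_hat_sq_add_X_mul_X_sq_mem_hit hd.second_first 1)
    rw [CharTwo.add_sq, mul_add, one_pow, mul_one, mul_one] at h
    exact mem_of_add_mem (le_hatWordSpan h) (word_X_four_mem i a b j)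
  rcases ne_or_eq i j with hij | rfl
  · exact X_mul_X_mul_hat_self_mem_of_ne hij
  · obtain ⟨j, hij⟩ := exists_ne i
    have h := X_mul_sq_mem_hit i (X_mul_hat_sq_add_mem_hit hij.symm 1)
    rw [CharTwo.add_sq, mul_add, mul_one, mul_one] at h
    exact mem_of_add_mem (le_hatWordSpan h) (X_mul_X_mul_hat_self_mem_of_ne hij.symm)

lemma X_mul_X_mul_sq_mem_of_isHomogeneous_three (i j : Fin 4) {z : P4}
    (hz : z.IsHomogeneous 3) : X i * (X j * z ^ 2) ^ 2 ∈ hatWordSpan hit X 0 4 := by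
  refine map_mem_of_odd (φ := (mulSq (X i)).comp (mulSq (X j))) (by decide) hz
    (fun k d y hd hy => ?_) (fun k d y hd hy => ?_)
  · obtain rfl : d = 0 + 1 := by omega
    refine map_mem_of_X_mul
      (φ := ((mulSq (X i)).comp (mulSq (X j))).comp (mulSq (X k))) hy fun l g hg => ?_
    refine map_mem_of_one
      (φ := (((mulSq (X i)).comp (mulSq (X j))).comp (mulSq (X k))).comp
        (LinearMap.mulLeft kk (X l))) hg ?_
    simpa [mulSq_apply] using word_X_four_mem i j k l
  · obtain rfl : d = 0 := by omega
    refine map_mem_of_one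
      (φ := ((mulSq (X i)).comp (mulSq (X j))).comp (mulSq (hat k))) hy ?_
    simpa [mulSq_apply] using X_mul_X_mul_hat_mem i j k

lemma X_mul_sq_mem_hatWordSpan (ht : 3 ≤ t) (i : Fin 4) {y : P4}
    (hy : y.IsHomogeneous (2 ^ t - 1)) : X i * y ^ 2 ∈ hatWordSpan hit X 0 (t + 1) := by
  induction t, ht using Nat.le_induction generalizing i y with
  | base =>
    exact X_mul_sq_mem_of_X_mul_X_mul_sq (d := 1) le_hatWordSpan
      (fun i j z hz => X_mul_X_mul_sq_mem_of_isHomogeneous_three i j hz) i hy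
  | succ t ht ih =>
    obtain ⟨d, hd⟩ : ∃ d, 2 ^ t = d + 3 :=
      Nat.exists_eq_add_of_le' (le_trans (by norm_num) (Nat.pow_le_pow_right two_pos ht))
    rw [hd] at ih
    rw [show 2 ^ (t + 1) - 1 = 2 * (d + 2) + 1 by rw [pow_succ]; omega] at hy
    exact X_mul_sq_mem_of_X_mul_X_mul_sq le_hatWordSpan
      (fun i j z hz => mul_sq_mem_hatWordSpan (fun _ => X_mul_sq_mem_hit i) (ih j hz)) i hy

end SpanningOneVariable

section SpanningTwoVariables

variable {t : ℕ}

lemma X_mul_X_mul_sq_mem_hatWordSpan_succ {i j : Fin 4} (hij : i ≠ j) {f : P4}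
    (hf : f ∈ hatWordSpan hit pairProd 0 t) :
    X i * X j * f ^ 2 ∈ hatWordSpan hit pairProd 0 (t + 1) := by
  rw [← pairProd_pairIdx hij]
  exact mul_sq_mem_hatWordSpan (fun _ => X_mul_X_mul_sq_mem_hit _ _) hf

lemma X_mul_X_mul_sq_mem_hatWordSpan {i j : Fin 4} (hij : i ≠ j) {g : P4}
    (hg : g.IsHomogeneous (2 ^ (t + 1) - 2)) :
    X i * X j * g ^ 2 ∈ hatWordSpan hit pairProd 0 (t + 1) := by
  induction t generalizing i j g with
  | zero =>
    refine map_mem_of_one (φ := mulSq (X i * X j)) hg ?_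
    exact X_mul_X_mul_sq_mem_hatWordSpan_succ hij (word_mem_hatWordSpan [] [])
  | succ t ih =>
    have hone : 1 ≤ 2 ^ t := Nat.one_le_two_pow
    refine map_mem_of_even (φ := mulSq (X i * X j)) ⟨2 ^ (t + 1) - 1, by omega⟩ hg
      (fun d y hd hy => ?_) (fun a b d y hab hd hy => ?_) (fun d y hd hy => ?_)
    · exact le_hatWordSpan (X_mul_X_mul_sq_mem_hit i j (sq_mem_hit (by omega) hy))
    · obtain rfl : d = 2 ^ (t + 1) - 2 := by omega
      exact X_mul_X_mul_sq_mem_hatWordSpan_succ hij (ih hab hy)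
    · obtain ⟨k, l, hd'⟩ := Distinct.exists_of_ne hij
      have hXy (a : Fin 4) : (X a * y).IsHomogeneous (2 ^ (t + 1) - 2) := by
        have h := isHomogeneous_X_mul a hy
        rwa [show d + 1 = 2 ^ (t + 1) - 2 by omega] at h
      have hi := X_mul_X_mul_sq_mem_hatWordSpan_succ hd'.ne₂₃ (ih hd'.ne₂₄ (hXy i))
      have hj := X_mul_X_mul_sq_mem_hatWordSpan_succ hd'.ne₁₃ (ih hd'.ne₁₄ (hXy j))
      refine mem_of_add_mem ?_ (add_mem hi hj)
      convert le_hatWordSpan (sum_three_sq_mem_hit i j k (X i * X j * X l * y ^ 2)) using 1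
      rw [mulSq_apply, prod_X_eq hd']
      ring

end SpanningTwoVariables

section SpanningThreeVariables

/-- The degree `3 * (2 ^ s - 1) + 2 ^ s * (2 ^ (t + 1) - 1)`, defined by recursion on `s`. -/
def targetDegree (t : ℕ) : ℕ → ℕ
  | 0 => 2 ^ (t + 1) - 1
  | s + 1 => 3 + 2 * targetDegree t s

variable {s t : ℕ}

lemma odd_targetDegree (t s : ℕ) : Odd (targetDegree t s) := by
  cases s with
  | zero => exact Nat.Even.sub_odd Nat.one_le_two_pow (by simp [Nat.even_pow]) odd_one
  | succ s => exact ⟨targetDegree t s + 1, by rw [targetDegree]; omega⟩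

lemma targetDegree_eq (t s : ℕ) :
    targetDegree t s = 3 * (2 ^ s - 1) + 2 ^ s * (2 ^ (t + 1) - 1) := by
  induction s with
  | zero => simp [targetDegree]
  | succ s ih =>
    obtain ⟨a, ha⟩ : ∃ a, 2 ^ s = a + 1 := Nat.exists_eq_add_of_le' Nat.one_le_two_pow
    rw [targetDegree, ih, pow_succ 2 s, ha, Nat.add_sub_cancel,
      show (a + 1) * 2 - 1 = 2 * a + 1 by omega]
    ring

lemma hat_mul_sq_mem_hatWordSpan_low (i : Fin 4) {f : P4}
    (hf : f.IsHomogeneous (2 ^ (t + 2) - 2)) :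
    hat i * f ^ 2 ∈ hatWordSpan low pairProd 1 (t + 1) := by
  have hone : 1 ≤ 2 ^ t := Nat.one_le_two_pow
  have hpow : 2 ^ (t + 2) = 4 * 2 ^ t := by ring
  have hmem {a b j : Fin 4} {y : P4} (hab : a ≠ b) (hy : y.IsHomogeneous (2 ^ (t + 1) - 2)) :
      hat j * (X a * X b * y ^ 2) ^ 2 ∈ hatWordSpan low pairProd 1 (t + 1) :=
    hat_mul_sq_mem_hatWordSpan (fun _ => hat_mul_sq_mem_low j)
      (hatWordSpan_mono hit_le_low (X_mul_X_mul_sq_mem_hatWordSpan hab hy))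
  refine map_mem_of_even (φ := mulSq (hat i)) ⟨2 ^ (t + 1) - 1, by omega⟩ hf
    (fun d y hd hy => ?_) (fun a b d y hab hd hy => ?_) (fun d y hd hy => ?_)
  · exact le_hatWordSpan (hat_mul_sq_mem_low i (hit_le_low (sq_mem_hit (by omega) hy)))
  · obtain rfl : d = 2 ^ (t + 1) - 2 := by omega
    exact hmem hab hy
  · obtain ⟨a, b, c, hd'⟩ := Distinct.exists_first i
    have hXy (a : Fin 4) : (X a * y).IsHomogeneous (2 ^ (t + 1) - 2) := by
      have h := isHomogeneous_X_mul a hy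
      rwa [show d + 1 = 2 ^ (t + 1) - 2 by omega] at h
    have ha := hmem (j := a) hd'.ne₃₄ (hXy a)
    have hb := hmem (j := b) hd'.ne₂₄ (hXy b)
    have hc := hmem (j := c) hd'.ne₂₃ (hXy c)
    refine mem_of_add_mem ?_ (add_mem (add_mem ha hb) hc)
    convert le_hatWordSpan (hit_le_low
      (sum_four_sq_mem_hit i a b c (X a * X b * X c * y ^ 2))) using 1
    rw [mulSq_apply, prod_X_eq hd', hat_eq hd', hat_eq hd'.second_first,
      hat_eq hd'.third_first, hat_eq hd'.fourth_first]
    ring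

lemma mem_hatWordSpan_low_of_isHomogeneous {f : P4}
    (hf : f.IsHomogeneous (targetDegree (t + 2) s)) :
    f ∈ hatWordSpan low pairProd (s + 1) (t + 1) := by
  induction s generalizing f with
  | zero =>
    have hone : 1 ≤ 2 ^ t := Nat.one_le_two_pow
    have hpow : 2 ^ (t + 2 + 1) = 8 * 2 ^ t := by ring
    refine map_mem_of_odd (φ := LinearMap.id) (odd_targetDegree _ _) hf
      (fun i d y _ _ => le_hatWordSpan (X_mul_sq_mem_low i y)) fun i d y hd hy => ?_
    obtain rfl : d = 2 ^ (t + 2) - 2 := by rw [targetDegree] at hd; omega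
    exact hat_mul_sq_mem_hatWordSpan_low i hy
  | succ s ih =>
    refine map_mem_of_odd (φ := LinearMap.id) (odd_targetDegree _ _) hf
      (fun i d y _ _ => le_hatWordSpan (X_mul_sq_mem_low i y)) fun i d y hd hy => ?_
    obtain rfl : d = targetDegree (t + 2) s := by rw [targetDegree] at hd; omega
    exact hat_mul_sq_mem_hatWordSpan (fun _ => hat_mul_sq_mem_low i) (ih hy)

lemma homogeneousComponent_mem_hit_inf_oddDegree {n : ℕ} (hn : Odd n) {f : P4} (hf : f ∈ hit) :
    homogeneousComponent n f ∈ hit ⊓ oddDegree :=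
  ⟨homogeneousComponent_mem_hit n hf,
    mem_oddDegree_of_isHomogeneous hn (homogeneousComponent_isHomogeneous n f)⟩

lemma homogeneousComponent_mem_hatWordSpan {f : P4} (hf : f ∈ hatWordSpan hit X 0 (t + 1)) :
    homogeneousComponent (targetDegree t 0) f ∈ hatWordSpan (hit ⊓ oddDegree) X 0 (t + 1) := by
  refine map_mem_of_mem_hatWordSpan (fun f hf => le_hatWordSpan
    (homogeneousComponent_mem_hit_inf_oddDegree (odd_targetDegree t 0) hf)) ?_ hf
  rintro L D hL hD
  rw [List.length_eq_zero_iff.1 hL, word_nil,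
    homogeneousComponent_of_isHomogeneous (isHomogeneous_word_X D), hD, targetDegree, if_pos rfl,
    ← hD]
  exact word_mem_hatWordSpan [] D

lemma X_mul_homogeneousComponent_sq_mem_hatWordSpan (ht : 3 ≤ t) (i : Fin 4) (y : P4) :
    X i * homogeneousComponent (2 ^ t - 1) y ^ 2 ∈
      hatWordSpan (hit ⊓ oddDegree) X 0 (t + 1) := by
  have e : targetDegree t 0 = 1 + 2 * (2 ^ t - 1) := by
    have := Nat.one_le_two_pow (n := t)
    rw [targetDegree, pow_succ]; omega
  have hy := homogeneousComponent_isHomogeneous (2 ^ t - 1) y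
  have h := homogeneousComponent_mem_hatWordSpan (X_mul_sq_mem_hatWordSpan ht i hy)
  rwa [e, homogeneousComponent_mul_sq (isHomogeneous_X kk i), homogeneousComponent_self hy] at h

lemma hat_mul_homogeneousComponent_sq_mem_hatWordSpan (ht : 3 ≤ t) (i : Fin 4) {f : P4}
    (hf : f ∈ hit) : hat i * homogeneousComponent (2 ^ t - 2) f ^ 2 ∈
      hatWordSpan (hit ⊓ oddDegree) X 0 (t + 1) := by
  have hpow : 8 ≤ 2 ^ t := le_trans (by norm_num) (Nat.pow_le_pow_right two_pos ht)
  have hX : targetDegree t 0 = 1 + 2 * (2 ^ t - 1) := by rw [targetDegree, pow_succ]; omega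
  have hhat : targetDegree t 0 = 3 + 2 * (2 ^ t - 2) := by rw [targetDegree, pow_succ]; omega
  refine map_mem_of_mem_hit (φ := (mulSq (hat i)).comp (homogeneousComponent (2 ^ t - 2)))
    (fun k _ g _ => ?_) hf
  have h := hat_mul_Sq_sq_mem i k g
    (W := (hatWordSpan (hit ⊓ oddDegree) X 0 (t + 1)).comap
      (homogeneousComponent (targetDegree t 0)))
    (fun f hf => le_hatWordSpan
      (homogeneousComponent_mem_hit_inf_oddDegree (odd_targetDegree t 0) hf))
    (fun p q r => by
      rw [Submodule.mem_comap, hX, homogeneousComponent_mul_sq (isHomogeneous_X kk p)]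
      exact X_mul_homogeneousComponent_sq_mem_hatWordSpan ht p _)
  rwa [Submodule.mem_comap, hhat, homogeneousComponent_mul_sq (isHomogeneous_hat i)] at h

lemma homogeneousComponent_mem_hatWordSpan_of_mem_low (ht : 3 ≤ t) {f : P4} (hf : f ∈ low)
    (s : ℕ) : homogeneousComponent (targetDegree t s) f ∈
      hatWordSpan (hit ⊓ oddDegree) X s (t + 1) := by
  have hpow : 8 ≤ 2 ^ t := le_trans (by norm_num) (Nat.pow_le_pow_right two_pos ht)
  induction hf generalizing s with
  | hit hf =>
    exact le_hatWordSpan (homogeneousComponent_mem_hit_inf_oddDegree (odd_targetDegree t s) hf)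
  | X_mul_sq i y =>
    cases s with
    | zero =>
      rw [show targetDegree t 0 = 1 + 2 * (2 ^ t - 1) by rw [targetDegree, pow_succ]; omega,
        homogeneousComponent_mul_sq (isHomogeneous_X kk i)]
      exact X_mul_homogeneousComponent_sq_mem_hatWordSpan ht i y
    | succ s =>
      rw [show targetDegree t (s + 1) = 1 + 2 * (targetDegree t s + 1) by
          rw [targetDegree]; ring,
        homogeneousComponent_mul_sq (isHomogeneous_X kk i)]
      exact le_hatWordSpan ⟨X_mul_sq_mem_hit_of_even i (Nat.succ_pos _)
        (odd_targetDegree t s).add_one (homogeneousComponent_isHomogeneous _ y),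
        mul_sq_mem_oddDegree odd_one (isHomogeneous_X kk i) _⟩
  | add _ _ hf hg => rw [map_add]; exact add_mem (hf s) (hg s)
  | @hat_mul_sq i f hf ih =>
    cases s with
    | zero =>
      rw [show targetDegree t 0 = 3 + 2 * (2 ^ t - 2) by rw [targetDegree, pow_succ]; omega,
        homogeneousComponent_mul_sq (isHomogeneous_hat i)]
      have heven : Even (2 ^ t - 2) :=
        (Nat.even_sub (by omega)).2
          (iff_of_true (even_two.pow_of_ne_zero (by omega)) even_two)
      have h := hat_mul_homogeneousComponent_sq_mem_hatWordSpan ht i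
        (homogeneousComponent_mem_hit_of_mem_low heven hf)
      rwa [homogeneousComponent_self (homogeneousComponent_isHomogeneous _ f)] at h
    | succ s =>
      rw [targetDegree, homogeneousComponent_mul_sq (isHomogeneous_hat i)]
      exact hat_mul_sq_mem_hatWordSpan (fun _ => hat_mul_sq_mem_hit_inf_oddDegree i) (ih s)

end SpanningThreeVariables

/-! ### Exchange of letters -/

section Support

variable {α : Type*} {R : List α → List α → Prop} {a : α}

lemma exists_nodup_rel (hR : Equivalence R) (hperm : ∀ {L M}, L.Perm M → R L M)
    (h : ∀ i j L, i ≠ j → R (i :: i :: j :: L) (i :: j :: j :: L)) (k : ℕ) (N : List α)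
    (ha : a ∉ N) : ∃ k' N', R (List.replicate (k + 1) a ++ N) (List.replicate (k' + 1) a ++ N') ∧
      N'.Nodup ∧ (∀ b, b ∈ N' ↔ b ∈ N) ∧ k' + N'.length = k + N.length := by
  classical
  by_cases hN : N.Nodup
  · exact ⟨k, N, hR.refl _, hN, fun _ => Iff.rfl, rfl⟩
  obtain ⟨b, hb⟩ := List.exists_duplicate_iff_not_nodup.2 hN
  obtain ⟨M, hM⟩ := (List.duplicate_iff_sublist.1 hb).exists_perm_append
  have hlen : N.length = M.length + 1 + 1 := by simpa using hM.length_eq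
  have hba : b ≠ a := fun e => ha (e ▸ hb.mem)
  have hmem : ∀ c, c ∈ b :: M ↔ c ∈ N := fun c => by simp [hM.mem_iff]
  obtain ⟨k', N', hR', hN', hmem', hlen'⟩ :=
    exists_nodup_rel hR hperm h (k + 1) (b :: M) (mt (hmem a).1 ha)
  refine ⟨k', N', hR.trans (hR.trans (hperm ?_) (h b a (List.replicate k a ++ M) hba))
    (hR.trans (hperm ?_) hR'), hN', fun c => (hmem' c).trans (hmem c), ?_⟩
  · refine (hM.append_left _).trans (List.perm_iff_count.2 fun c => ?_)
    simp only [List.count_append, List.count_cons, List.count_nil, List.replicate_succ]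
    omega
  · refine List.perm_iff_count.2 fun c => ?_
    simp only [List.count_append, List.count_cons, List.replicate_succ, List.cons_append]
    omega
  · rw [hlen', List.length_cons]
    omega
  termination_by N.length

lemma perm_replicate_append [DecidableEq α] {L : List α} (ha : a ∈ L) :
    ∃ k, L.Perm (List.replicate (k + 1) a ++ L.filter (· ≠ a)) := by
  obtain ⟨k, hk⟩ := Nat.exists_eq_succ_of_ne_zero (List.count_pos_iff.2 ha).ne'
  refine ⟨k, (List.filter_append_perm (· == a) L).symm.trans ?_⟩
  rw [List.filter_beq, hk]
  simp [beq_eq_decide]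

lemma rel_of_mem_iff (hR : Equivalence R) (hperm : ∀ {L M}, L.Perm M → R L M)
    (h : ∀ i j L, i ≠ j → R (i :: i :: j :: L) (i :: j :: j :: L)) {L M : List α}
    (hlen : L.length = M.length) (hmem : ∀ b, b ∈ L ↔ b ∈ M) : R L M := by
  classical
  rcases L with _ | ⟨a, L'⟩
  · rw [List.length_eq_zero_iff.1 hlen.symm]
    exact hR.refl _
  set L := a :: L'
  have normalForm : ∀ N : List α, a ∈ N → ∃ k N', R N (List.replicate (k + 1) a ++ N') ∧
      N'.Nodup ∧ (∀ b, b ∈ N' ↔ b ≠ a ∧ b ∈ N) ∧ k + 1 + N'.length = N.length := by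
    intro N ha
    obtain ⟨k, hk⟩ := perm_replicate_append ha
    obtain ⟨k', N', hR', hN', hmem', hlen'⟩ :=
      exists_nodup_rel hR hperm h k (N.filter (· ≠ a))
        fun ha' => of_decide_eq_true (List.mem_filter.1 ha').2 rfl
    refine ⟨k', N', hR.trans (hperm hk) hR', hN', fun b => by simp [hmem', and_comm], ?_⟩
    rw [hk.length_eq, List.length_append, List.length_replicate]
    omega
  obtain ⟨k, N, hRL, hN, hmemN, hlenN⟩ := normalForm L List.mem_cons_self
  obtain ⟨k', N', hRM, hN', hmemN', hlenN'⟩ := normalForm M ((hmem a).1 List.mem_cons_self)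
  have hNN' : N.Perm N' := (List.perm_ext_iff_of_nodup hN hN').2 fun b => by
    rw [hmemN, hmemN', hmem]
  obtain rfl : k = k' := by have := hNN'.length_eq; omega
  exact hR.trans hRL (hR.trans (hperm (hNN'.append_left _)) (hR.symm hRM))

end Support

section Commuting

variable {α : Type*} {a : α → P4} {W T : Submodule kk P4}

lemma smodEq_iff_add_mem {f g : P4} : f ≡ g [SMOD W] ↔ f + g ∈ W := by
  rw [SModEq.sub_mem, CharTwo.sub_eq_add]

lemma mem_iff_of_smodEq {f g : P4} (h : f ≡ g [SMOD W]) : f ∈ W ↔ g ∈ W :=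
  ⟨mem_of_add_mem (add_comm f g ▸ smodEq_iff_add_mem.1 h), mem_of_add_mem (smodEq_iff_add_mem.1 h)⟩

lemma word_smodEq (hW : ∀ i, ∀ f ∈ W, a i * f ^ 2 ∈ W) (L : List α) {f g : P4}
    (h : f ≡ g [SMOD W]) : word a L f ≡ word a L g [SMOD W] := by
  rw [smodEq_iff_add_mem, ← word_add]
  exact word_mem hW L (smodEq_iff_add_mem.1 h)

/-- Adjacent letters of a word in the `a i` ending with an element of `T` can be exchanged
modulo `W`. -/
structure WordsCommute (a : α → P4) (W T : Submodule kk P4) : Prop where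
  mul_sq_mem : ∀ i, ∀ f ∈ W, a i * f ^ 2 ∈ W
  mul_sq_mem_tail : ∀ i, ∀ f ∈ T, a i * f ^ 2 ∈ T
  swap : ∀ i j, ∀ f ∈ T, word a [i, j] f ≡ word a [j, i] f [SMOD W]

namespace WordsCommute

variable {L M : List α} {g : P4}

lemma perm (h : WordsCommute a W T) (hLM : L.Perm M) (hg : g ∈ T) :
    word a L g ≡ word a M g [SMOD W] := by
  induction hLM with
  | nil => exact .rfl
  | cons i _ ih => exact word_smodEq h.mul_sq_mem [i] ih
  | swap i j L => exact h.swap j i _ (word_mem h.mul_sq_mem_tail L hg)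
  | trans _ _ ih₁ ih₂ => exact ih₁.trans ih₂

lemma of_mem_iff (h : WordsCommute a W T)
    (hswap : ∀ i j, i ≠ j → ∀ f ∈ T, word a [i, i, j] f ≡ word a [j, j, i] f [SMOD W])
    (hlen : L.length = M.length) (hmem : ∀ i, i ∈ L ↔ i ∈ M) (hg : g ∈ T) :
    word a L g ≡ word a M g [SMOD W] := by
  refine rel_of_mem_iff (R := fun L M => word a L g ≡ word a M g [SMOD W])
    ⟨fun _ => .rfl, .symm, .trans⟩ (h.perm · hg) (fun i j L hij => ?_) hlen hmem
  exact (hswap i j hij _ (word_mem h.mul_sq_mem_tail L hg)).trans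
    (h.perm (((List.Perm.swap i j L).cons j).trans (.swap i j (j :: L))) hg)

end WordsCommute

lemma wordsCommute_X : WordsCommute X (hit ⊓ oddDegree) ⊤ where
  mul_sq_mem i _ := X_mul_sq_mem_hit_inf_oddDegree i
  mul_sq_mem_tail _ _ _ := trivial
  swap i j f _ := by
    refine smodEq_iff_add_mem.2 (Submodule.mem_inf.2 ⟨?_, add_mem ?_ ?_⟩)
    · convert sum_two_sq_mem_hit i j (f ^ 2) using 1
      simp only [word_cons, word_nil]
      ring
    all_goals exact mul_sq_mem_oddDegree odd_one (isHomogeneous_X kk _) _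

lemma word_X_smodEq {L M : List (Fin 4)} (hlen : L.length = M.length) (hmem : ∀ i, i ∈ L ↔ i ∈ M)
    (g : P4) : word X L g ≡ word X M g [SMOD hit ⊓ oddDegree] := by
  refine wordsCommute_X.of_mem_iff (fun i j _ f _ => smodEq_iff_add_mem.2
    (Submodule.mem_inf.2 ⟨?_, add_mem ?_ ?_⟩)) hlen hmem trivial
  · convert sum_two_sq_mem_hit i j (X i * X j * f ^ 4) using 1
    simp only [word_cons, word_nil]
    ring
  all_goals exact mul_sq_mem_oddDegree odd_one (isHomogeneous_X kk _) _

end Commuting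

section HatWords

variable {W T : Submodule kk P4} {i j k l : Fin 4}

/-- The conditions on `W` and `T` under which hat words ending with an element of `T` commute
modulo `W`. They are satisfied by `low` with `⊤`, and by `hit ⊓ oddDegree` with `oddDegree`. -/
structure HatClosed (W T : Submodule kk P4) : Prop where
  hit_inf_oddDegree_le : hit ⊓ oddDegree ≤ W
  hat_mul_sq_mem : ∀ i, ∀ f ∈ W, hat i * f ^ 2 ∈ W
  hat_mul_sq_mem_tail : ∀ i, ∀ f ∈ T, hat i * f ^ 2 ∈ T
  X_mul_X_mul_sq_mem : ∀ i j, ∀ f ∈ T, X j * (X i * f) ^ 2 ∈ W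

lemma hatClosed_low : HatClosed low ⊤ where
  hit_inf_oddDegree_le := inf_le_left.trans hit_le_low
  hat_mul_sq_mem i _ := hat_mul_sq_mem_low i
  hat_mul_sq_mem_tail _ _ _ := trivial
  X_mul_X_mul_sq_mem _ j _ _ := X_mul_sq_mem_low j _

lemma hatClosed_hit_inf_oddDegree : HatClosed (hit ⊓ oddDegree) oddDegree where
  hit_inf_oddDegree_le := le_rfl
  hat_mul_sq_mem i _ := hat_mul_sq_mem_hit_inf_oddDegree i
  hat_mul_sq_mem_tail i f _ := mul_sq_mem_oddDegree (by decide) (isHomogeneous_hat i) f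
  X_mul_X_mul_sq_mem i j _ hf :=
    ⟨X_mul_X_mul_odd_sq_mem_hit i j hf, mul_sq_mem_oddDegree odd_one (isHomogeneous_X kk j) _⟩

lemma sum_hat_mul_sq_mem_hit_inf_oddDegree {f₁ f₂ f₃ f₄ : P4} (g : P4)
    (h : hat i * f₁ ^ 2 + hat j * f₂ ^ 2 + (hat k * f₃ ^ 2 + hat l * f₄ ^ 2) =
      X i ^ 2 * X j * X k * X l * g ^ 2 + X i * X j ^ 2 * X k * X l * g ^ 2 +
        X i * X j * X k ^ 2 * X l * g ^ 2 + X i * X j * X k * X l ^ 2 * g ^ 2) :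
    hat i * f₁ ^ 2 + hat j * f₂ ^ 2 + (hat k * f₃ ^ 2 + hat l * f₄ ^ 2) ∈ hit ⊓ oddDegree := by
  have odd a (f : P4) : hat a * f ^ 2 ∈ oddDegree :=
    mul_sq_mem_oddDegree (by decide) (isHomogeneous_hat a) f
  refine Submodule.mem_inf.2 ⟨h ▸ sum_four_sq_mem_hit i j k l g, ?_⟩
  exact add_mem (add_mem (odd _ _) (odd _ _)) (add_mem (odd _ _) (odd _ _))

namespace HatClosed

lemma swap (h : HatClosed W T) (k l : Fin 4) {z : P4} (hz : z ∈ T) :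
    word hat [k, l] z ≡ word hat [l, k] z [SMOD W] := by
  obtain rfl | hkl := eq_or_ne k l
  · exact .rfl
  obtain ⟨i, j, hd⟩ := Distinct.exists_of_ne hkl
  have hij := W.add_mem (h.hat_mul_sq_mem i _ (h.X_mul_X_mul_sq_mem i j z hz))
    (h.hat_mul_sq_mem j _ (h.X_mul_X_mul_sq_mem j i z hz))
  refine smodEq_iff_add_mem.2 (mem_of_add_mem (h.hit_inf_oddDegree_le ?_) hij)
  simp only [word_cons, word_nil]
  refine sum_hat_mul_sq_mem_hit_inf_oddDegree (X i * X j * z ^ 2) ?_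
  rw [hat_eq hd, hat_eq hd.second_first, hat_eq hd.third_first, hat_eq hd.fourth_first]
  ring

lemma wordsCommute (h : HatClosed W T) : WordsCommute hat W T where
  mul_sq_mem := h.hat_mul_sq_mem
  mul_sq_mem_tail := h.hat_mul_sq_mem_tail
  swap i j _ hf := h.swap i j hf

lemma exchange (h : HatClosed W T) (hkl : k ≠ l) {z : P4} (hz : z ∈ T) :
    word hat [k, k, l] z ≡ word hat [l, l, k] z [SMOD W] := by
  obtain ⟨i, j, hd⟩ := Distinct.exists_of_ne hkl
  have hij := W.add_mem
    (word_mem h.hat_mul_sq_mem [i, i] (h.X_mul_X_mul_sq_mem i j z hz))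
    (word_mem h.hat_mul_sq_mem [j, j] (h.X_mul_X_mul_sq_mem j i z hz))
  refine smodEq_iff_add_mem.2 (mem_of_add_mem (h.hit_inf_oddDegree_le ?_) hij)
  simp only [word_cons, word_nil]
  refine sum_hat_mul_sq_mem_hit_inf_oddDegree (X k * X l * X i ^ 3 * X j ^ 3 * z ^ 4) ?_
  rw [hat_eq hd, hat_eq hd.second_first, hat_eq hd.third_first, hat_eq hd.fourth_first]
  ring

lemma word_smodEq (h : HatClosed W T) {L M : List (Fin 4)} (hlen : L.length = M.length)
    (hmem : ∀ i, i ∈ L ↔ i ∈ M) {z : P4} (hz : z ∈ T) :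
    word hat L z ≡ word hat M z [SMOD W] :=
  h.wordsCommute.of_mem_iff (fun _ _ hij _ hf => h.exchange hij hf) hlen hmem hz

end HatClosed

end HatWords

section PairWords

variable {d e : Fin 6} {a b c f : Fin 4}

lemma pairProd_mul_sq_mem_hit (d : Fin 6) {f : P4} (hf : f ∈ hit) : pairProd d * f ^ 2 ∈ hit :=
  X_mul_X_mul_sq_mem_hit _ _ hf

lemma exists_pairIdx_of_ne (hde : d ≠ e) (hrev : e ≠ d.rev) :
    ∃ a b c, a ≠ b ∧ a ≠ c ∧ b ≠ c ∧ d = pairIdx a b ∧ e = pairIdx a c := by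
  revert d e; decide

lemma exists_distinct_pairIdx (d : Fin 6) :
    ∃ a b c f, Distinct a b c f ∧ d = pairIdx a b ∧ d.rev = pairIdx c f := by
  revert d; decide

lemma rev_pairIdx (hd : Distinct a b c f) : (pairIdx a b).rev = pairIdx c f := by
  revert a b c f; decide

lemma pairProd_swap_of_inter (hab : a ≠ b) (hac : a ≠ c) (g : P4) :
    word pairProd [pairIdx a b, pairIdx a c] g ≡ word pairProd [pairIdx a c, pairIdx a b] g
      [SMOD hit] := by
  refine smodEq_iff_add_mem.2 (mem_of_add_mem ?_
    (X_mul_X_mul_sq_mem_hit b c (sq_X_mul_mem_hit a g)))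
  convert sum_three_sq_mem_hit a b c (X a * g ^ 2) using 1
  simp only [word_cons, word_nil, pairProd_pairIdx hab, pairProd_pairIdx hac]
  ring

lemma plucker_mem_hit (hd : Distinct a b c f) (g : P4) :
    word pairProd [pairIdx c f, pairIdx a b] g + word pairProd [pairIdx b f, pairIdx a c] g +
      word pairProd [pairIdx b c, pairIdx a f] g ∈ hit := by
  simp only [word_cons, word_nil, pairProd_pairIdx hd.ne₁₂, pairProd_pairIdx hd.ne₁₃,
    pairProd_pairIdx hd.ne₁₄, pairProd_pairIdx hd.ne₂₃, pairProd_pairIdx hd.ne₂₄,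
    pairProd_pairIdx hd.ne₃₄]
  convert sum_three_sq_mem_hit b c f (X a * g ^ 2) using 1
  ring

lemma pairProd_swap_of_disjoint (hd : Distinct a b c f) (g : P4) :
    word pairProd [pairIdx a b, pairIdx c f] g ≡ word pairProd [pairIdx c f, pairIdx a b] g
      [SMOD hit] := by
  have h := Sq_mem_hit (k := 2) one_le_two (X a * (X b * (X c * (X f * (g ^ 2) ^ 2))))
  rw [Sq_succ_X_mul 1, show 1 + 1 = 2 * (0 + 1) by rfl, Sq_X_mul_X_mul_X_mul_sq, zero_add,
    Sq_odd_sq 0, Sq_zero] at h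
  simp only [← mul_assoc, Sq_one_mul_sq] at h
  simp only [Sq_one_mul, Sq_one_X] at h
  simp only [smodEq_iff_add_mem, word_cons, word_nil, pairProd_pairIdx hd.ne₁₂,
    pairProd_pairIdx hd.ne₃₄]
  convert add_mem h (add_mem (sum_three_sq_mem_hit b c f (X a * g ^ 2))
    (sum_three_sq_mem_hit a c f (X b * g ^ 2))) using 1
  linear_combination (-(X a ^ 2 * X b ^ 2 * X c * X f + X a ^ 2 * X b * X c ^ 2 * X f +
    X a ^ 2 * X b * X c * X f ^ 2 + X a * X b ^ 2 * X c ^ 2 * X f +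
    X a * X b ^ 2 * X c * X f ^ 2) * g ^ 4) * CharTwo.two_eq_zero (R := P4)

lemma wordsCommute_pairProd : WordsCommute pairProd hit ⊤ where
  mul_sq_mem d _ := pairProd_mul_sq_mem_hit d
  mul_sq_mem_tail _ _ _ := trivial
  swap d e g _ := by
    obtain rfl | hde := eq_or_ne d e
    · exact .rfl
    by_cases hrev : e = d.rev
    · obtain ⟨a, b, c, f, hd, rfl, hrev'⟩ := exists_distinct_pairIdx d
      rw [hrev, hrev']
      exact pairProd_swap_of_disjoint hd g
    · obtain ⟨a, b, c, hab, hac, -, rfl, rfl⟩ := exists_pairIdx_of_ne hde hrev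
      exact pairProd_swap_of_inter hab hac g

lemma pairProd_exchange_of_ne_rev (hde : d ≠ e) (hrev : e ≠ d.rev) (g : P4) :
    word pairProd [d, d, e] g ≡ word pairProd [e, e, d] g [SMOD hit] := by
  obtain ⟨a, b, c, hab, hac, hbc, rfl, rfl⟩ := exists_pairIdx_of_ne hde hrev
  refine smodEq_iff_add_mem.2 (mem_of_add_mem ?_ (word_mem pairProd_mul_sq_mem_hit
    [pairIdx b c, pairIdx b c] (sq_X_mul_mem_hit a g)))
  convert sum_three_sq_mem_hit a b c (X a ^ 3 * X b * X c * g ^ 4) using 1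
  simp only [word_cons, word_nil, pairProd_pairIdx hab, pairProd_pairIdx hac,
    pairProd_pairIdx hbc]
  ring

end PairWords

section Incidence

variable {i j k l : Fin 4}

/-- The indices other than `i`, in increasing order. -/
def others (i : Fin 4) : List (Fin 4) := (List.finRange 4).filter (· ≠ i)

lemma mem_others : j ∈ others i ↔ j ≠ i := by simp [others]

lemma sum_map_others (hd : Distinct i j k l) (F : Fin 4 → P4) :
    ((others i).map F).sum = F j + F k + F l := by
  have h : (others i).Perm [j, k, l] := by revert i j k l; decide
  rw [(h.map F).sum_eq]
  simp [add_assoc]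

lemma list_sum_smodEq {ι : Type*} {W : Submodule kk P4} {F G : ι → P4} {L : List ι}
    (h : ∀ i ∈ L, F i ≡ G i [SMOD W]) : (L.map F).sum ≡ (L.map G).sum [SMOD W] := by
  induction L with
  | nil => exact .rfl
  | cons a L ih =>
    simp only [List.map_cons, List.sum_cons]
    exact (h a List.mem_cons_self).add (ih fun i hi => h i (List.mem_cons_of_mem _ hi))

lemma word_list_sum {α ι : Type*} {a : α → P4} (L : List α) (l : List ι)
    (F : ι → P4) : word a L (l.map F).sum = (l.map fun i => word a L (F i)).sum := by
  induction l with
  | nil => simpa [CharTwo.add_self_eq_zero] using (word_add L 0 0 : word a L _ = _)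
  | cons i l ih => simp only [List.map_cons, List.sum_cons, word_add, ih]

lemma sum_hat_mul_pairProd_mul_sq_mem_low (j : Fin 4) (y : P4) :
    ((others j).map fun l => word hat [l] (word pairProd [pairIdx l j] y)).sum ∈ low := by
  obtain ⟨a, b, c, hd⟩ := Distinct.exists_first j
  have hj := hat_mul_sq_mem_low j (hit_le_low (sq_X_mul_mem_hit j y))
  refine mem_of_add_mem ?_ hj
  rw [sum_map_others hd]
  refine hit_le_low ?_
  convert sum_four_sq_mem_hit j a b c (X j * y ^ 2) using 1
  simp only [word_cons, word_nil, pairProd_pairIdx hd.ne₁₂.symm, pairProd_pairIdx hd.ne₁₃.symm,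
    pairProd_pairIdx hd.ne₁₄.symm, hat_eq hd, hat_eq hd.second_first, hat_eq hd.third_first,
    hat_eq hd.fourth_first]
  ring

lemma word_replicate_hat_X_mul (l : Fin 4) (m : ℕ) (g : P4) :
    word hat (List.replicate m l) (X l * g) =
      X l * ((∏ a, X a) ^ (2 ^ m - 1) * g ^ 2 ^ m) := by
  induction m with
  | zero => simp
  | succ m ih =>
    obtain ⟨i, j, k, hd⟩ := Distinct.exists_first l
    have hexp : 2 ^ (m + 1) - 1 = (2 ^ m - 1) * 2 + 1 := by
      have := Nat.one_le_two_pow (n := m); omega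
    rw [List.replicate_succ, word_cons, ih, hat_eq hd, prod_X_eq hd, hexp, pow_succ (2 : ℕ) m,
      pow_mul g, pow_succ _ ((2 ^ m - 1) * 2), pow_mul _ _ 2]
    ring

lemma sum_word_replicate_hat_mem_low (m : ℕ) (j : Fin 4) (y : P4) :
    ((others j).map fun l =>
      word hat (List.replicate (m + 1) l) (word pairProd [pairIdx l j] y)).sum ∈ low := by
  obtain ⟨a, b, c, hd⟩ := Distinct.exists_first j
  set z : P4 := (∏ a, X a) ^ (2 ^ m - 1) * (X j * y ^ 2) ^ 2 ^ m
  have hl (l : Fin 4) : word hat (List.replicate (m + 1) l) (X l * (X j * y ^ 2)) =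
      hat l * (X l * z) ^ 2 := by
    rw [List.replicate_succ, word_cons, word_replicate_hat_X_mul]
  have hj : hat j * (X j * z) ^ 2 ∈ low := by
    rw [← hl]
    refine word_mem (fun i _ => hat_mul_sq_mem_low i) _ (hit_le_low ?_)
    convert sq_X_mul_mem_hit j y using 1
    ring
  refine mem_of_add_mem (hit_le_low ?_) hj
  convert sum_four_sq_mem_hit j a b c z using 1
  simp only [sum_map_others hd, word_cons, word_nil, pairProd_pairIdx hd.ne₁₂.symm,
    pairProd_pairIdx hd.ne₁₃.symm, pairProd_pairIdx hd.ne₁₄.symm, mul_assoc, hl]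
  rw [hat_eq hd, hat_eq hd.second_first, hat_eq hd.third_first, hat_eq hd.fourth_first]
  ring

lemma sum_hat_mul_X_mul_sq_mem_hit_inf_oddDegree (y : P4) :
    ((List.finRange 4).map fun l => word hat [l] (word X [l] y)).sum ∈ hit ⊓ oddDegree := by
  have hd : Distinct 0 1 2 3 := by decide
  simp only [show List.finRange 4 = [0, 1, 2, 3] by decide, List.map_cons, List.map_nil,
    List.sum_cons, List.sum_nil, add_zero, ← add_assoc, word_cons, word_nil]
  rw [add_assoc]
  refine sum_hat_mul_sq_mem_hit_inf_oddDegree (y ^ 2) ?_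
  rw [hat_eq hd, hat_eq hd.second_first, hat_eq hd.third_first, hat_eq hd.fourth_first]
  ring

end Incidence

section DisjointExchange

/-- The words which represent `word pairProd D (X k * (X c * g ^ 2))` modulo `hit`. -/
def appendPair (D : List (Fin 6)) (k c : Fin 4) : List (List (Fin 6)) :=
  if k = c then [] else [D ++ [pairIdx k c]]

lemma word_pairProd_X_mul_smodEq (D : List (Fin 6)) (k c : Fin 4) (g : P4) :
    word pairProd D (X k * (X c * g ^ 2)) ≡
      ((appendPair D k c).map fun E => word pairProd E g).sum [SMOD hit] := by
  unfold appendPair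
  split_ifs with hkc
  · refine SModEq.zero.2 (word_mem pairProd_mul_sq_mem_hit D ?_)
    convert sq_X_mul_mem_hit k g using 1
    rw [← hkc]
    ring
  · simp [word_append, word_cons, pairProd_pairIdx hkc, mul_assoc]

/-- The words whose sum is congruent modulo `hit` to
`pairProd (pairIdx y l).rev * (X l * (hat m * (X c * g ^ 2) ^ 2)) ^ 2`. -/
def triples (y l m c : Fin 4) : List (List (Fin 6)) :=
  if l = m then
    let (k, n) := pair (pairIdx y l).rev
    appendPair [pairIdx n y, pairIdx n l] k c ++ appendPair [pairIdx k y, pairIdx k l] n c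
  else appendPair [(pairIdx y l).rev, (pairIdx l m).rev] l c

lemma exists_pair_rev {y l : Fin 4} (h : y ≠ l) :
    ∃ k n, Distinct y l k n ∧ pair (pairIdx y l).rev = (k, n) := by
  revert y l; decide

lemma pairProd_rev_mul_smodEq {y l : Fin 4} (hyl : y ≠ l) (m c : Fin 4) (g : P4) :
    pairProd (pairIdx y l).rev * (X l * (hat m * (X c * g ^ 2) ^ 2)) ^ 2 ≡
      ((triples y l m c).map fun D => word pairProd D g).sum [SMOD hit] := by
  unfold triples
  split_ifs with hm
  · obtain ⟨k, n, hd, hkn⟩ := exists_pair_rev hyl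
    subst hm
    rw [hkn, List.map_append, List.sum_append]
    refine .trans (smodEq_iff_add_mem.2 ?_) ((word_pairProd_X_mul_smodEq _ k c g).add
      (word_pairProd_X_mul_smodEq _ n c g))
    convert sum_three_sq_mem_hit k n y (X k * X n * X l * (X c * g ^ 2) ^ 2) using 1
    simp only [word_cons, word_nil, rev_pairIdx hd, hat_eq hd.second_first,
      pairProd_pairIdx hd.ne₃₄, pairProd_pairIdx hd.ne₁₃.symm, pairProd_pairIdx hd.ne₁₄.symm,
      pairProd_pairIdx hd.ne₂₃.symm, pairProd_pairIdx hd.ne₂₄.symm]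
    ring
  · obtain ⟨p, q, hd⟩ := Distinct.exists_of_ne (Ne.symm hm)
    convert word_pairProd_X_mul_smodEq [(pairIdx y l).rev, (pairIdx l m).rev] l c g using 1
    rw [rev_pairIdx hd.second_first, hat_eq hd]
    simp only [word_cons, word_nil, pairProd_pairIdx hd.ne₃₄]
    ring

lemma hat_mul_prod_X_smodEq (j : Fin 4) (h : P4) :
    hat j * ((∏ a, X a) * h ^ 2) ^ 2 ≡
      ((others j).map fun l =>
        hat l * (pairProd (pairIdx j l).rev * (X l * h) ^ 2) ^ 2).sum [SMOD hit] := by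
  obtain ⟨a, b, c, hd⟩ := Distinct.exists_first j
  have hb : Distinct j b a c := ⟨hd.2, hd.1, hd.3, hd.4.symm, hd.6, hd.5⟩
  have hc : Distinct j c a b := ⟨hd.3, hd.1, hd.2, hd.5.symm, hd.6.symm, hd.4⟩
  rw [smodEq_iff_add_mem]
  convert sum_four_sq_mem_hit j a b c (X a * X b * X c * h ^ 2) using 1
  rw [sum_map_others hd, prod_X_eq hd, rev_pairIdx hd, rev_pairIdx hb, rev_pairIdx hc, hat_eq hd,
    hat_eq hd.second_first, hat_eq hd.third_first, hat_eq hd.fourth_first,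
    pairProd_pairIdx hd.ne₂₃, pairProd_pairIdx hd.ne₂₄, pairProd_pairIdx hd.ne₃₄]
  ring

/-- A symbol `(L, D)` stands for the words `word hat L (word pairProd D g)`. -/
abbrev Symbol := List (Fin 4) × List (Fin 6)

/-- The sum of the words that a list of symbols stands for. -/
def symbolSum (l : List Symbol) (g : P4) : P4 :=
  (l.map fun s => word hat s.1 (word pairProd s.2 g)).sum

lemma symbolSum_append (l m : List Symbol) (g : P4) :
    symbolSum (l ++ m) g = symbolSum l g + symbolSum m g := by simp [symbolSum]

/-- The symbols of the expansion of
`word hat [i, j] ((∏ a, X a) * (hat m * (X c * g ^ 2) ^ 2) ^ 2)` by `hat_mul_prod_X_smodEq`. -/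
def expansion (i j m c : Fin 4) : List Symbol :=
  (others j).flatMap fun l => (triples j l m c).map fun D => ([i, l], D)

lemma symbolSum_flatMap {ι : Type*} (n : List ι) (F : ι → List Symbol) (g : P4) :
    symbolSum (n.flatMap F) g = (n.map fun i => symbolSum (F i) g).sum := by
  induction n with
  | nil => rfl
  | cons i n ih => rw [List.flatMap_cons, symbolSum_append, ih, List.map_cons, List.sum_cons]

lemma word_hat_prod_X_smodEq (i j m c : Fin 4) (g : P4) :
    word hat [i, j] ((∏ a, X a) * (hat m * (X c * g ^ 2) ^ 2) ^ 2) ≡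
      symbolSum (expansion i j m c) g [SMOD low] := by
  have hword := word_smodEq fun i _ => hat_mul_sq_mem_low i
  have h := hword [i] ((hat_mul_prod_X_smodEq j (hat m * (X c * g ^ 2) ^ 2)).mono hit_le_low)
  rw [word_list_sum, ← word_singleton, ← word_append] at h
  refine h.trans ?_
  rw [expansion, symbolSum_flatMap]
  refine list_sum_smodEq fun l hl => ?_
  have hl := hword [i, l] ((pairProd_rev_mul_smodEq (mem_others.1 hl).symm m c g).mono hit_le_low)
  rw [word_list_sum] at hl
  simpa only [symbolSum, List.map_map, Function.comp_def, ← word_singleton, ← word_append,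
    List.singleton_append] using hl

lemma symbolSum_expansion_mem_low (i j m c : Fin 4) (g : P4) :
    symbolSum (expansion i j m c ++ expansion j i m c) g ∈ low := by
  rw [symbolSum_append, ← smodEq_iff_add_mem]
  exact (word_hat_prod_X_smodEq i j m c g).symm.trans
    ((hatClosed_low.swap i j trivial).trans (word_hat_prod_X_smodEq j i m c g))

/-- Sorts both components of a symbol and applies `pairProd_exchange_of_ne_rev`. -/
def normalize (s : Symbol) : Symbol :=
  (s.1.insertionSort (· ≤ ·), match s.2.insertionSort (· ≤ ·) with
    | [d, e, f] => if e = f ∧ d ≠ e ∧ e ≠ d.rev then [d, d, e] else [d, e, f]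
    | D => D)

lemma word_smodEq_normalize (s : Symbol) (g : P4) :
    word hat s.1 (word pairProd s.2 g) ≡
      word hat (normalize s).1 (word pairProd (normalize s).2 g) [SMOD low] := by
  refine (hatClosed_low.wordsCommute.perm (List.perm_insertionSort (· ≤ ·) s.1).symm trivial).trans
    (word_smodEq (fun i _ => hat_mul_sq_mem_low i) _ (SModEq.mono hit_le_low ?_))
  refine (wordsCommute_pairProd.perm (List.perm_insertionSort (· ≤ ·) s.2).symm trivial).trans ?_
  unfold normalize
  dsimp only
  generalize s.2.insertionSort (· ≤ ·) = D
  split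
  · split_ifs with h
    · obtain ⟨rfl, hde, hrev⟩ := h
      exact (wordsCommute_pairProd.perm (.trans (.swap ..) (.cons _ (.swap ..))) trivial).trans
        (pairProd_exchange_of_ne_rev hde hrev g).symm
    · exact .rfl
  · exact .rfl

/-- Modulo two, the normal forms of the symbols in the list cancel. -/
def Cancels (l : List Symbol) : Prop :=
  ∀ s ∈ l.map normalize, Even ((l.map normalize).count s)

instance : DecidablePred Cancels := fun l =>
  inferInstanceAs (Decidable (∀ s ∈ l.map normalize, Even ((l.map normalize).count s)))

lemma symbolSum_mem_low_of_cancels {l : List Symbol} (h : Cancels l) (g : P4) :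
    symbolSum l g ∈ low := by
  have hnorm : symbolSum l g ≡ symbolSum (l.map normalize) g [SMOD low] := by
    rw [symbolSum, symbolSum, List.map_map]
    exact list_sum_smodEq fun s _ => word_smodEq_normalize s g
  rw [mem_iff_of_smodEq hnorm, symbolSum, Finset.sum_list_map_count]
  refine low.sum_mem fun s hs => ?_
  obtain ⟨k, hk⟩ := h s (List.mem_toFinset.1 hs)
  have hzero : (k + k) • word hat s.1 (word pairProd s.2 g) = 0 := by
    rw [add_smul, CharTwo.add_self_eq_zero]
  convert low.zero_mem using 1
  convert hzero using 2
  convert hk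

/-- The relations between words with two hats and three pairs that are used in the certificates. -/
inductive SymbolRelation where
  | plucker (a b : Fin 4) (t : Fin 6)
  | incidence (a j : Fin 4) (e f : Fin 6)
  | diagonal (j : Fin 4) (e f : Fin 6)
  | symmetric (i j m c : Fin 4)

namespace SymbolRelation

/-- The symbols whose sum vanishes modulo `low` by a relation. -/
def symbols : SymbolRelation → List Symbol
  | plucker a b t => [([a, b], [t, 5, 0]), ([a, b], [t, 4, 1]), ([a, b], [t, 3, 2])]
  | incidence a j e f => (others j).map fun l => ([a, l], [pairIdx l j, e, f])
  | diagonal j e f => (others j).map fun l => ([l, l], [pairIdx l j, e, f])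
  | symmetric i j m c => expansion i j m c ++ expansion j i m c

lemma symbolSum_symbols_mem_low (r : SymbolRelation) (g : P4) : symbolSum r.symbols g ∈ low := by
  cases r with
  | plucker a b t =>
    have hd : Distinct 0 1 2 3 := by decide
    have h := word_mem (fun i _ => hat_mul_sq_mem_low i) [a, b]
      (hit_le_low (word_mem pairProd_mul_sq_mem_hit [t] (plucker_mem_hit hd g)))
    rw [word_add, word_add, word_add, word_add, add_assoc] at h
    simp only [← word_append (a := pairProd), List.singleton_append] at h
    simp only [symbolSum, symbols, List.map_cons, List.map_nil, List.sum_cons, List.sum_nil,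
      add_zero]
    exact h
  | incidence a j e f =>
    have h := word_mem (fun i _ => hat_mul_sq_mem_low i) [a]
      (sum_hat_mul_pairProd_mul_sq_mem_low j (word pairProd [e, f] g))
    simp only [word_list_sum, ← word_append, List.singleton_append] at h
    simpa only [symbols, symbolSum, List.map_map, Function.comp_def] using h
  | diagonal j e f =>
    have h := sum_word_replicate_hat_mem_low 1 j (word pairProd [e, f] g)
    simp only [← word_append, List.singleton_append] at h
    simpa only [symbols, symbolSum, List.map_map, Function.comp_def, List.replicate] using h
  | symmetric i j m c => exact symbolSum_expansion_mem_low i j m c g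

end SymbolRelation

/-- The exchange of a pair `d` with its complement under two hats. -/
def exchange (a b : Fin 4) (d : Fin 6) : List Symbol :=
  [([a, b], [d, d, d.rev]), ([a, b], [d, d.rev, d.rev])]

open SymbolRelation

/-- The relations whose sum is `exchange i i (pairIdx i j)`. -/
def sameCertificate (i j k l : Fin 4) : List SymbolRelation :=
  [incidence i j (pairIdx i j) (pairIdx k l), incidence k j (pairIdx j k) (pairIdx k l),
    incidence l j (pairIdx j l) (pairIdx k l), diagonal j (pairIdx k l) (pairIdx k l)]

/-- The relations whose sum is `exchange i k (pairIdx i j)`. -/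
def oppositeCertificate (i j k l : Fin 4) : List SymbolRelation :=
  [plucker i k (pairIdx i j), incidence k l (pairIdx i j) (pairIdx j k),
    incidence l k (pairIdx i j) (pairIdx j l), incidence i j (pairIdx i j) (pairIdx k l),
    diagonal j (pairIdx i j) (pairIdx k l), incidence k j (pairIdx j k) (pairIdx k l),
    incidence k j (pairIdx j l) (pairIdx k l), incidence l j (pairIdx j l) (pairIdx k l),
    diagonal j (pairIdx j l) (pairIdx k l), incidence k j (pairIdx k l) (pairIdx k l),
    symmetric i j k j]

/-- The relations whose sum is `exchange i j (pairIdx i j)`. -/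
def adjacentCertificate (i j k l : Fin 4) : List SymbolRelation :=
  let ij := pairIdx i j
  let ik := pairIdx i k
  let il := pairIdx i l
  let jk := pairIdx j k
  let jl := pairIdx j l
  let kl := pairIdx k l
  [plucker i j il, incidence i i ij kl, incidence i l ik ik, diagonal l ik jk,
    incidence j k ik jl, incidence k j ik kl, incidence i l ik kl, incidence i k il il,
    incidence i k il jk, incidence i k il jl, incidence j k il jl, diagonal k il jl,
    incidence i k il kl, incidence j l jk jk, incidence j l jk jl, incidence l i jl kl,
    incidence j j jl kl, incidence j j kl kl, symmetric i j l l, symmetric i l j l,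
    symmetric j l i l]

set_option maxRecDepth 100000 in
lemma cancels_certificate : ∀ i j k l, Distinct i j k l →
    Cancels (exchange i i (pairIdx i j) ++ (sameCertificate i j k l).flatMap symbols) ∧
    Cancels (exchange i k (pairIdx i j) ++ (oppositeCertificate i j k l).flatMap symbols) ∧
    Cancels (exchange i j (pairIdx i j) ++ (adjacentCertificate i j k l).flatMap symbols) := by
  decide +kernel

lemma symbolSum_exchange_mem_low_of_cancels {a b : Fin 4} {d : Fin 6} {R : List SymbolRelation}
    (h : Cancels (exchange a b d ++ R.flatMap symbols)) (g : P4) :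
    symbolSum (exchange a b d) g ∈ low := by
  have hsum := symbolSum_mem_low_of_cancels h g
  rw [symbolSum_append, symbolSum_flatMap] at hsum
  exact mem_of_add_mem hsum (low.list_sum_mem fun _ hx => by
    obtain ⟨r, -, rfl⟩ := List.mem_map.1 hx
    exact r.symbolSum_symbols_mem_low g)

lemma exists_distinct_exchange (a b : Fin 4) (d : Fin 6) :
    ∃ i j k l, Distinct i j k l ∧ a = i ∧ (b = i ∨ b = k ∨ b = j) ∧
      (d = pairIdx i j ∨ d.rev = pairIdx i j) := by
  revert a b d; decide

lemma word_hat_pairProd_rev_smodEq (a b : Fin 4) (d : Fin 6) (g : P4) :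
    word hat [a, b] (word pairProd [d, d, d.rev] g) ≡
      word hat [a, b] (word pairProd [d, d.rev, d.rev] g) [SMOD low] := by
  obtain ⟨i, j, k, l, hd, rfl, hb, hij⟩ := exists_distinct_exchange a b d
  obtain ⟨hsame, hopp, hadj⟩ := cancels_certificate _ j k l hd
  have key : symbolSum (exchange a b (pairIdx a j)) g ∈ low := by
    rcases hb with rfl | rfl | rfl
    · exact symbolSum_exchange_mem_low_of_cancels hsame g
    · exact symbolSum_exchange_mem_low_of_cancels hopp g
    · exact symbolSum_exchange_mem_low_of_cancels hadj g
  simp only [symbolSum, exchange, List.map_cons, List.map_nil, List.sum_cons, List.sum_nil,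
    add_zero, ← smodEq_iff_add_mem] at key
  rcases hij with rfl | hij
  · exact key
  · rw [← hij, Fin.rev_rev] at key
    have hperm {D E : List (Fin 6)} (h : D.Perm E) :
        word hat [a, b] (word pairProd D g) ≡ word hat [a, b] (word pairProd E g) [SMOD low] :=
      word_smodEq (fun i _ => hat_mul_sq_mem_low i) _
        ((wordsCommute_pairProd.perm h trivial).mono hit_le_low)
    exact (hperm (List.reverse_perm [d.rev, d, d])).trans
      (key.symm.trans (hperm (List.reverse_perm [d, d.rev, d.rev])))

lemma exists_eq_append_pair {α : Type*} {L : List α} (hL : 2 ≤ L.length) :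
    ∃ L' a b, L = L' ++ [a, b] := by
  obtain ⟨L₁, b, rfl⟩ := List.eq_nil_or_concat L |>.resolve_left (by rintro rfl; simp at hL)
  obtain ⟨L₂, a, rfl⟩ := List.eq_nil_or_concat L₁ |>.resolve_left (by rintro rfl; simp at hL)
  exact ⟨L₂, a, b, by simp⟩

lemma word_hat_pairProd_smodEq {L : List (Fin 4)} (hL : 2 ≤ L.length) {D E : List (Fin 6)}
    (hlen : D.length = E.length) (hmem : ∀ d, d ∈ D ↔ d ∈ E) (g : P4) :
    word hat L (word pairProd D g) ≡ word hat L (word pairProd E g) [SMOD low] := by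
  obtain ⟨L, a, b, rfl⟩ := exists_eq_append_pair hL
  have hword (g h : P4) (hgh : g ≡ h [SMOD hit]) :
      word hat (L ++ [a, b]) g ≡ word hat (L ++ [a, b]) h [SMOD low] :=
    word_smodEq (fun i _ => hat_mul_sq_mem_low i) _ (hgh.mono hit_le_low)
  refine rel_of_mem_iff (R := fun D E => word hat (L ++ [a, b]) (word pairProd D g) ≡
      word hat (L ++ [a, b]) (word pairProd E g) [SMOD low]) ⟨fun _ => .rfl, .symm, .trans⟩
    (fun h => hword _ _ (wordsCommute_pairProd.perm h trivial)) (fun d e D hde => ?_) hlen hmem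
  by_cases hrev : e = d.rev
  · rw [hrev, word_append, word_append]
    exact word_smodEq (fun i _ => hat_mul_sq_mem_low i) L
      (word_hat_pairProd_rev_smodEq a b d (word pairProd D g))
  · exact hword _ _ ((pairProd_exchange_of_ne_rev hde hrev (word pairProd D g)).trans
      (wordsCommute_pairProd.perm (((List.Perm.swap d e D).cons e).trans (.swap d e _)) trivial))

end DisjointExchange

/-! ### Encoding of words by sets of letters -/

section Masks

variable {n k m : ℕ} {L M : List (Fin n)} {S : ℕ}

/-- The set of letters of a list, encoded by the binary digits of a number. -/
def mask (L : List (Fin n)) : ℕ := L.foldr (fun i m => m ||| 1 <<< i.val) 0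

lemma testBit_mask (L : List (Fin n)) (i : ℕ) : (mask L).testBit i ↔ ∃ j ∈ L, j.val = i := by
  induction L with
  | nil => simp [mask]
  | cons j L ih =>
    rw [mask, List.foldr_cons, Nat.testBit_or, ← mask, Bool.or_eq_true, ih, Nat.one_shiftLeft,
      Nat.testBit_two_pow]
    simp [or_comm]

lemma mask_eq_mask_iff : mask L = mask M ↔ ∀ i, i ∈ L ↔ i ∈ M := by
  refine ⟨fun h i => ?_, fun h => Nat.eq_of_testBit_eq fun i => ?_⟩
  · simpa [testBit_mask, ← Fin.ext_iff] using congrArg (fun m => m.testBit i.val = true) h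
  · rw [Bool.eq_iff_iff, testBit_mask, testBit_mask]
    simp only [h]

lemma mask_append (L M : List (Fin n)) : mask (L ++ M) = mask L ||| mask M := by
  refine Nat.eq_of_testBit_eq fun i => ?_
  rw [Bool.eq_iff_iff, Nat.testBit_or, Bool.or_eq_true]
  simp only [testBit_mask, List.mem_append, or_and_right, exists_or]

lemma mask_lt (L : List (Fin n)) : mask L < 2 ^ n := by
  refine Nat.lt_pow_two_of_testBit _ fun i hi => Bool.eq_false_iff.2 fun h => ?_
  obtain ⟨j, -, rfl⟩ := (testBit_mask L i).1 h
  exact absurd j.isLt hi.not_gt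

lemma mask_pos (hL : 1 ≤ L.length) : 0 < mask L := by
  obtain ⟨i, hi⟩ := List.exists_mem_of_length_pos hL
  exact Nat.pos_of_ne_zero fun h => by simpa [h] using (testBit_mask L i).2 ⟨i, hi, rfl⟩

/-- The masks of the lists of length `k` with letters in `Fin n`. -/
def masks (n k : ℕ) : List ℕ :=
  ((List.finRange n).sublists.filter fun L => min 1 k ≤ L.length ∧ L.length ≤ k).map mask

lemma exists_mask_eq (hS : S ∈ masks n k) (hkm : k ≤ m) (h : k = 0 → m = 0) :
    ∃ L : List (Fin n), L.length = m ∧ mask L = S := by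
  obtain ⟨M, hM, rfl⟩ := List.mem_map.1 hS
  obtain ⟨-, hM⟩ := List.mem_filter.1 hM
  simp only [decide_eq_true_eq] at hM
  rcases M with _ | ⟨i, M⟩
  · exact ⟨[], by simp at hM ⊢; omega, rfl⟩
  · refine ⟨List.replicate (m - (i :: M).length) i ++ i :: M, ?_, mask_eq_mask_iff.2 fun j => ?_⟩
    · rw [List.length_append, List.length_replicate]; omega
    · simp only [List.mem_append, List.mem_replicate, List.mem_cons]; tauto

lemma mask_mem_masks (L : List (Fin n)) : mask L ∈ masks n (min L.length n) := by
  obtain ⟨M, hsub, hM⟩ : ∃ M : List (Fin n), M.Sublist (List.finRange n) ∧ ∀ i, i ∈ M ↔ i ∈ L :=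
    ⟨_, List.filter_sublist (p := (· ∈ L)), by simp⟩
  have hML : M.length ≤ L.length :=
    ((List.nodup_finRange n).sublist hsub |>.subperm fun i hi => (hM i).1 hi).length_le
  have hMn : M.length ≤ n := by simpa using hsub.length_le
  have hpos (h : 1 ≤ L.length) : 1 ≤ M.length := by
    obtain ⟨i, hi⟩ := List.exists_mem_of_length_pos h
    exact List.length_pos_of_mem ((hM i).2 hi)
  refine List.mem_map.2 ⟨M, List.mem_filter.2 ⟨List.mem_sublists.2 hsub, ?_⟩,
    mask_eq_mask_iff.2 hM⟩
  rw [decide_eq_true_eq]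
  omega

/-- The code of a pair of masks. The second one is assumed to be less than `64`. -/
def code (S T : ℕ) : ℕ := S * 64 + T

lemma code_inj {S S' T T' : ℕ} (hT : T < 64) (hT' : T' < 64) :
    code S T = code S' T' ↔ S = S' ∧ T = T' := by
  rw [code, code]; omega

/-- The codes of the pairs of lists of lengths `k` and `l` with letters in `Fin m` and `Fin n`. -/
def codes (m n k l : ℕ) : List ℕ := (masks m k).flatMap fun S => (masks n l).map (code S)

lemma code_mask_mem_codes {m : ℕ} (L : List (Fin m)) (D : List (Fin n)) :
    code (mask L) (mask D) ∈ codes m n (min L.length m) (min D.length n) :=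
  List.mem_flatMap.2 ⟨_, mask_mem_masks L, List.mem_map.2 ⟨_, mask_mem_masks D, rfl⟩⟩

end Masks

section Propagation

/-- Application of a function to a number. Recursion on the number makes the kernel evaluate
it first. -/
def force {α : Type} (v : ℕ) (f : ℕ → α) : α := Nat.rec (f 0) (fun n _ => f n.succ) v

lemma force_eq {α : Type} (v : ℕ) (f : ℕ → α) : force v f = f v := by cases v <;> rfl

/-- Adjoins `k` to the set of codes whose binary digits are those of `K`. The digits below `64`
carry no information; they are varied because the kernel hashes a number by its low digits. -/
def insertCode (K k : ℕ) : ℕ := (K ||| 1 <<< k) ^^^ (k % 64)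

/-- Adjoins to `K` the only code of the relation `r` that does not yet belong to `K`, if there is
exactly one. -/
def applyRelation (K : ℕ) (r : List ℕ) : ℕ :=
  match r.filter fun k => !K.testBit k with
  | [k] => insertCode K k
  | _ => K

/-- Applies the relations in `R` in succession to `K`. -/
def applyRelations (R : List (List ℕ)) : ℕ → ℕ :=
  R.foldr (fun r f K => force (applyRelation K r) f) id

/-- Applies the relations in `R` to `K`, in `n` rounds. -/
def propagate (R : List (List ℕ)) (n K : ℕ) : ℕ :=
  Nat.rec K (fun _ K => force K (applyRelations R)) n

/-- All codes in `K` have values in `W`. -/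
def Known (v : ℕ → P4) (W : Submodule kk P4) (K : ℕ) : Prop := ∀ k, K.testBit k → v k ∈ W

variable {v : ℕ → P4} {W : Submodule kk P4} {K : ℕ}

lemma Known.insertCode (h₀ : ∀ k < 64, v k ∈ W) (hK : Known v W K) {k : ℕ} (hk : v k ∈ W) :
    Known v W (insertCode K k) := by
  intro m hm
  by_cases hm64 : m < 64
  · exact h₀ m hm64
  have hlow : (k % 64).testBit m = false :=
    Nat.testBit_lt_two_pow ((Nat.mod_lt k (by decide)).trans_le
      ((by decide : 64 ≤ 2 ^ 64).trans (Nat.pow_le_pow_right two_pos (not_lt.1 hm64))))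
  rw [Cohit.insertCode, Nat.testBit_xor, hlow, Bool.xor_false, Nat.testBit_or, Nat.one_shiftLeft,
    Nat.testBit_two_pow, Bool.or_eq_true, decide_eq_true_eq] at hm
  rcases hm with hm | rfl
  exacts [hK m hm, hk]

lemma Known.applyRelation (h₀ : ∀ k < 64, v k ∈ W) (hK : Known v W K) {r : List ℕ}
    (hr : (r.map v).sum ∈ W) : Known v W (applyRelation K r) := by
  unfold Cohit.applyRelation
  split
  case h_1 k hk =>
    refine hK.insertCode h₀ ?_
    have hsum := ((List.filter_append_perm (fun k => !K.testBit k) r).map v).sum_eq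
    rw [hk, List.map_append, List.sum_append, List.map_singleton, List.sum_singleton] at hsum
    rw [← hsum] at hr
    refine (W.add_mem_iff_left (list_sum_mem fun f hf => ?_)).1 hr
    obtain ⟨l, hl, rfl⟩ := List.mem_map.1 hf
    exact hK l (by simpa using List.of_mem_filter hl)
  case h_2 => exact hK

lemma Known.applyRelations (h₀ : ∀ k < 64, v k ∈ W) {R : List (List ℕ)}
    (hR : ∀ r ∈ R, (r.map v).sum ∈ W) (hK : Known v W K) : Known v W (applyRelations R K) := by
  induction R generalizing K with
  | nil => exact hK
  | cons r R ih =>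
    rw [Cohit.applyRelations, List.foldr_cons, force_eq]
    exact ih (fun s hs => hR s (List.mem_cons_of_mem _ hs))
      (hK.applyRelation h₀ (hR r List.mem_cons_self))

lemma Known.propagate (h₀ : ∀ k < 64, v k ∈ W) {R : List (List ℕ)}
    (hR : ∀ r ∈ R, (r.map v).sum ∈ W) (hK : Known v W K) (n : ℕ) :
    Known v W (propagate R n K) := by
  induction n with
  | zero => exact hK
  | succ n ih =>
    change Known v W (force (Cohit.propagate R n K) (Cohit.applyRelations R))
    rw [force_eq]
    exact ih.applyRelations h₀ hR

/-- The set of the codes in a list. -/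
def ofCodes (l : List ℕ) : ℕ := l.foldr (fun k K => insertCode K k) 0

lemma known_ofCodes (h₀ : ∀ k < 64, v k ∈ W) {l : List ℕ} (hl : ∀ k ∈ l, v k ∈ W) :
    Known v W (ofCodes l) := by
  induction l with
  | nil => intro k hk; simp [ofCodes] at hk
  | cons k l ih =>
    exact (ih fun m hm => hl m (List.mem_cons_of_mem _ hm)).insertCode h₀
      (hl k List.mem_cons_self)

end Propagation

section WordOfCode

variable {n : ℕ} {a : Fin n → P4} {W : Submodule kk P4} {l m : ℕ}

open Classical in
/-- A word `word hat L (word a D 1)` with `L` and `D` of lengths `l` and `m` whose masks have the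
given code, or `0` if there is none. -/
def wordOfCode (a : Fin n → P4) (l m k : ℕ) : P4 :=
  if h : ∃ p : List (Fin 4) × List (Fin n),
      p.1.length = l ∧ p.2.length = m ∧ code (mask p.1) (mask p.2) = k then
    word hat h.choose.1 (word a h.choose.2 1)
  else 0

/-- Modulo `W` the words of lengths `l` and `m` only depend on their sets of letters. -/
def DependsOnMasks (W : Submodule kk P4) (a : Fin n → P4) (l m : ℕ) : Prop :=
  ∀ L L' D D', L.length = l → L'.length = l → D.length = m → D'.length = m →
    mask L = mask L' → mask D = mask D' →
    word hat L (word a D 1) ≡ word hat L' (word a D' 1) [SMOD W]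

lemma DependsOnMasks.smodEq_wordOfCode (hn : n ≤ 6) (h : DependsOnMasks W a l m)
    {L : List (Fin 4)} {D : List (Fin n)} (hL : L.length = l) (hD : D.length = m) :
    word hat L (word a D 1) ≡ wordOfCode a l m (code (mask L) (mask D)) [SMOD W] := by
  have hex : ∃ p : List (Fin 4) × List (Fin n), p.1.length = l ∧ p.2.length = m ∧
      code (mask p.1) (mask p.2) = code (mask L) (mask D) := ⟨(L, D), hL, hD, rfl⟩
  have hlt (D : List (Fin n)) : mask D < 64 :=
    (mask_lt D).trans_le (Nat.pow_le_pow_right two_pos hn)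
  obtain ⟨hL', hD', hcode⟩ := hex.choose_spec
  obtain ⟨hS, hT⟩ := (code_inj (hlt _) (hlt _)).1 hcode
  rw [wordOfCode, dif_pos hex]
  exact h _ _ _ _ hL hL' hD hD' hS.symm hT.symm

lemma wordOfCode_eq_zero (hl : 1 ≤ l) {k : ℕ} (hk : k < 64) : wordOfCode a l m k = 0 := by
  rw [wordOfCode, dif_neg]
  rintro ⟨p, hp, -, rfl⟩
  have := mask_pos (hp.symm ▸ hl)
  rw [code] at hk
  omega

lemma sum_wordOfCode_mem {ι : Type*} {s : List ι} {F : ι → List (Fin 4)} {G : ι → List (Fin n)}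
    (hn : n ≤ 6) (h : DependsOnMasks W a l m) (hF : ∀ i, (F i).length = l)
    (hG : ∀ i, (G i).length = m)
    (hsum : (s.map fun i => word hat (F i) (word a (G i) 1)).sum ∈ W) :
    ((s.map fun i => code (mask (F i)) (mask (G i))).map (wordOfCode a l m)).sum ∈ W := by
  rw [List.map_map]
  exact (mem_iff_of_smodEq (list_sum_smodEq fun i _ => h.smodEq_wordOfCode hn (hF i) (hG i))).1 hsum

lemma dependsOnMasks_pairProd (hl : 2 ≤ l) : DependsOnMasks low pairProd l m := by
  intro L L' D D' hL hL' hD hD' hLL hDD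
  exact (hatClosed_low.word_smodEq (hL.trans hL'.symm) (mask_eq_mask_iff.1 hLL) trivial).trans
    (word_hat_pairProd_smodEq (hL'.symm ▸ hl) (hD.trans hD'.symm) (mask_eq_mask_iff.1 hDD) 1)

lemma dependsOnMasks_X (hm : 1 ≤ m) : DependsOnMasks (hit ⊓ oddDegree) X l m := by
  intro L L' D D' hL hL' hD hD' hLL hDD
  refine (hatClosed_hit_inf_oddDegree.word_smodEq (hL.trans hL'.symm) (mask_eq_mask_iff.1 hLL)
    ?_).trans (word_smodEq (fun i _ => hat_mul_sq_mem_hit_inf_oddDegree i) _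
      (word_X_smodEq (hD.trans hD'.symm) (mask_eq_mask_iff.1 hDD) 1))
  obtain ⟨i, D, rfl⟩ := List.exists_cons_of_length_pos (hD.symm ▸ hm)
  exact mul_sq_mem_oddDegree odd_one (isHomogeneous_X kk i) _

end WordOfCode

section PairRelations

variable {l m A B : ℕ}

/-- The codes of the terms of the Plücker relation for words with prescribed further letters. -/
def pluckerCodes (S T : ℕ) : List ℕ :=
  ([0, 1, 3] : List (Fin 6)).map fun d => code S (T ||| mask [d, d.rev])

/-- The codes of the terms of the incidence relation at `j` for words with prescribed further
letters. -/
def incidenceCodes (S T : ℕ) (j : Fin 4) : List ℕ :=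
  (others j).map fun i => code (S ||| mask [i]) (T ||| mask [pairIdx i j])

/-- The relations between the codes of words with at most `A` distinct letters `hat i` and at most
`B` distinct letters `pairProd d`. -/
def pairRelations (A B : ℕ) : List (List ℕ) :=
  ((masks 4 A).flatMap fun S => (masks 6 (B - 2)).map (pluckerCodes S)) ++
    (0 :: masks 4 (A - 1)).flatMap fun S => (masks 6 (B - 1)).flatMap fun T =>
      (List.finRange 4).map (incidenceCodes S T)

lemma sum_pluckerCodes_mem_low {L : List (Fin 4)} {D : List (Fin 6)} (hL : 2 ≤ L.length) :
    ((pluckerCodes (mask L) (mask D)).map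
      (wordOfCode pairProd L.length (D.length + 2))).sum ∈ low := by
  simp only [pluckerCodes, ← mask_append]
  refine sum_wordOfCode_mem (F := fun _ => L) (G := fun d : Fin 6 => D ++ [d, d.rev]) le_rfl
    (dependsOnMasks_pairProd hL) (fun _ => rfl) (fun _ => by simp) ?_
  simp only [word_append]
  simp only [← word_list_sum]
  refine word_mem (fun i _ => hat_mul_sq_mem_low i) _ (hit_le_low
    (word_mem (fun i _ => pairProd_mul_sq_mem_hit i) _ ?_))
  have h := plucker_mem_hit (a := 3) (b := 2) (c := 1) (f := 0) (by decide) 1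
  simpa [add_assoc, pairIdx] using h

lemma sum_incidenceCodes_mem_low {L : List (Fin 4)} {D : List (Fin 6)} (hL : 1 ≤ L.length)
    (j : Fin 4) :
    ((incidenceCodes (mask L) (mask D) j).map
      (wordOfCode pairProd (L.length + 1) (D.length + 1))).sum ∈ low := by
  simp only [incidenceCodes, ← mask_append, Nat.or_comm (mask D)]
  refine sum_wordOfCode_mem (F := fun i => L ++ [i]) (G := fun i => [pairIdx i j] ++ D) le_rfl
    (dependsOnMasks_pairProd (by omega)) (fun _ => by simp) (fun _ => by simp) ?_
  simp only [word_append]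
  simp only [← word_list_sum]
  exact word_mem (fun i _ => hat_mul_sq_mem_low i) _
    (sum_hat_mul_pairProd_mul_sq_mem_low j (word pairProd D 1))

lemma sum_incidenceCodes_zero_mem_low {D : List (Fin 6)} (hl : 2 ≤ l) (j : Fin 4) :
    ((incidenceCodes 0 (mask D) j).map (wordOfCode pairProd l (D.length + 1))).sum ∈ low := by
  obtain ⟨l, rfl⟩ := Nat.exists_eq_add_of_le' (show 1 ≤ l by omega)
  have hmask (i : Fin 4) : 0 ||| mask [i] = mask (List.replicate (l + 1) i) := by
    rw [Nat.zero_or, mask_eq_mask_iff]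
    simp
  simp only [incidenceCodes, hmask, ← mask_append, Nat.or_comm (mask D)]
  refine sum_wordOfCode_mem (F := List.replicate (l + 1)) (G := fun i => [pairIdx i j] ++ D) le_rfl
    (dependsOnMasks_pairProd hl) (fun _ => by simp) (fun _ => by simp) ?_
  simp only [word_append]
  exact sum_word_replicate_hat_mem_low l j (word pairProd D 1)

lemma sum_pairRelations_mem_low (hl : 2 ≤ l) (hm : 3 ≤ m) (hA : 2 ≤ A) (hB : 3 ≤ B) (hAl : A ≤ l)
    (hBm : B ≤ m) {r : List ℕ} (hr : r ∈ pairRelations A B) :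
    (r.map (wordOfCode pairProd l m)).sum ∈ low := by
  simp only [pairRelations, List.mem_append, List.mem_flatMap, List.mem_map] at hr
  rcases hr with ⟨S, hS, T, hT, rfl⟩ | ⟨S, hS, T, hT, j, -, rfl⟩
  · obtain ⟨L, rfl, rfl⟩ := exists_mask_eq hS hAl (by omega)
    obtain ⟨D, hD, rfl⟩ := exists_mask_eq hT (show B - 2 ≤ m - 2 by omega) (by omega)
    obtain rfl : m = D.length + 2 := by omega
    exact sum_pluckerCodes_mem_low hl
  · obtain ⟨D, hD, rfl⟩ := exists_mask_eq hT (show B - 1 ≤ m - 1 by omega) (by omega)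
    obtain rfl : m = D.length + 1 := by omega
    rcases List.mem_cons.1 hS with rfl | hS
    · exact sum_incidenceCodes_zero_mem_low hl j
    · obtain ⟨L, hL, rfl⟩ := exists_mask_eq hS (show A - 1 ≤ l - 1 by omega) (by omega)
      obtain rfl : l = L.length + 1 := by omega
      exact sum_incidenceCodes_mem_low (by omega) j

/-- Codes of words generating all words in the `hat i` and `pairProd d` modulo `low`. They are
given by the masks of the first kind together with the sets of masks of the second kind, and were
found by Gaussian elimination. -/
def pairSeeds : List ℕ :=
  ([(1, 0x101015501777ffe), (2, 0x5501373f7e), (3, 0x10113377e), (4, 0x330f3e), (5, 0x1033e),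
    (6, 0x1e), (8, 0xf0e), (9, 0x10e), (10, 0x6), (12, 0x2)] : List (ℕ × ℕ)).flatMap fun p =>
      ((List.range 64).filter p.2.testBit).map (code p.1)

/-- The codes reached from `pairSeeds` by the relations between words of lengths `2` and `3`. -/
def pairClosure : ℕ := propagate (pairRelations 2 3) 6 (ofCodes pairSeeds)

set_option maxRecDepth 100000 in
lemma pairRelations_certificate :
    force pairClosure (fun K => [2, 3, 4].all fun A => [3, 4, 5, 6].all fun B =>
      force (propagate (pairRelations A B) 2 K) fun K => (codes 4 6 A B).all K.testBit) = true := by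
  decide +kernel

lemma testBit_propagate_pairRelations (hA : 2 ≤ A) (hA' : A ≤ 4) (hB : 3 ≤ B) (hB' : B ≤ 6) {k : ℕ}
    (hk : k ∈ codes 4 6 A B) : (propagate (pairRelations A B) 2 pairClosure).testBit k := by
  have h := pairRelations_certificate
  rw [force_eq, List.all_eq_true] at h
  have h := List.all_eq_true.1 (h A (by simp; omega)) B (by simp; omega)
  rw [force_eq, List.all_eq_true] at h
  exact h k hk

lemma hatWordSpan_low_pairProd_le (hl : 2 ≤ l) (hm : 3 ≤ m) :
    hatWordSpan low pairProd l m ≤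
      low ⊔ Submodule.span kk (wordOfCode pairProd l m '' {k | k ∈ pairSeeds}) := by
  refine sup_le le_sup_left (Submodule.span_le.2 ?_)
  rintro _ ⟨L, D, rfl, rfl, rfl⟩
  set W := low ⊔ Submodule.span kk
    (wordOfCode pairProd L.length D.length '' {k | k ∈ pairSeeds})
  have hlow : low ≤ W := le_sup_left
  have h₀ : ∀ k < 64, wordOfCode pairProd L.length D.length k ∈ W := fun k hk => by
    rw [wordOfCode_eq_zero (by omega) hk]; exact zero_mem _
  have hrel {A B : ℕ} (hA : 2 ≤ A) (hB : 3 ≤ B) (hAL : A ≤ L.length) (hBD : B ≤ D.length) :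
      ∀ r ∈ pairRelations A B, (r.map (wordOfCode pairProd L.length D.length)).sum ∈ W :=
    fun r hr => hlow (sum_pairRelations_mem_low hl hm hA hB hAL hBD hr)
  have hclosure : Known (wordOfCode pairProd L.length D.length) W pairClosure :=
    (known_ofCodes h₀ fun k hk => Submodule.mem_sup_right
      (Submodule.subset_span ⟨k, hk, rfl⟩)).propagate h₀ (hrel le_rfl le_rfl hl hm) 6
  refine (mem_iff_of_smodEq (((dependsOnMasks_pairProd hl).smodEq_wordOfCode le_rfl rfl rfl).mono
    hlow)).2 (hclosure.propagate h₀ (hrel (A := min L.length 4) (B := min D.length 6) ?_ ?_ ?_ ?_) 2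
      _ (testBit_propagate_pairRelations ?_ ?_ ?_ ?_ (code_mask_mem_codes L D)))
  all_goals omega

end PairRelations

section VariableRelations

variable {l m A : ℕ}

/-- The codes of the terms of the incidence relation for words in the `hat i` and `X i` with
prescribed further letters. -/
def pointCodes (S U : ℕ) : List ℕ :=
  (List.finRange 4).map fun i => code (S ||| mask [i]) (U ||| mask [i])

/-- The relations between the codes of words with at most `A` distinct letters `hat i` and any
letters `X i`. -/
def pointRelations (A : ℕ) : List (List ℕ) :=
  (masks 4 (A - 1)).flatMap fun S => (masks 4 4).map (pointCodes S)

lemma sum_pointCodes_mem (L D : List (Fin 4)) :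
    ((pointCodes (mask L) (mask D)).map (wordOfCode X (L.length + 1) (D.length + 1))).sum ∈
      hit ⊓ oddDegree := by
  simp only [pointCodes, ← mask_append, Nat.or_comm (mask D)]
  refine sum_wordOfCode_mem (F := fun i => L ++ [i]) (G := fun i => [i] ++ D) (by decide)
    (dependsOnMasks_X (by omega)) (fun _ => by simp) (fun _ => by simp) ?_
  simp only [word_append]
  simp only [← word_list_sum]
  exact word_mem (fun i _ => hat_mul_sq_mem_hit_inf_oddDegree i) _
    (sum_hat_mul_X_mul_sq_mem_hit_inf_oddDegree (word X D 1))

lemma sum_pointRelations_mem (hl : 1 ≤ l) (hm : 5 ≤ m) {r : List ℕ}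
    (hr : r ∈ pointRelations (min l 4)) :
    (r.map (wordOfCode X l m)).sum ∈ hit ⊓ oddDegree := by
  simp only [pointRelations, List.mem_flatMap, List.mem_map] at hr
  obtain ⟨S, hS, U, hU, rfl⟩ := hr
  obtain ⟨L, hL, rfl⟩ := exists_mask_eq hS (show min l 4 - 1 ≤ l - 1 by omega) (by omega)
  obtain ⟨D, hD, rfl⟩ := exists_mask_eq hU (show 4 ≤ m - 1 by omega) (by omega)
  obtain rfl : l = L.length + 1 := by omega
  obtain rfl : m = D.length + 1 := by omega
  exact sum_pointCodes_mem L D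

/-- Codes of words generating all words in the `hat i` and `X i`, with at most `A` distinct letters
`hat i`, modulo `hit ⊓ oddDegree`. -/
def pointSeeds (A : ℕ) : List ℕ := (codes 4 4 A 4).filter fun k => k / 64 + k % 64 < 16

set_option maxRecDepth 100000 in
lemma pointRelations_certificate : ([1, 2, 3, 4].all fun A =>
    force (propagate (pointRelations A) 4 (ofCodes (pointSeeds A))) fun K =>
      (codes 4 4 A 4).all K.testBit) = true := by
  decide +kernel

lemma testBit_propagate_pointRelations (hA : 1 ≤ A) (hA' : A ≤ 4) {k : ℕ}
    (hk : k ∈ codes 4 4 A 4) :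
    (propagate (pointRelations A) 4 (ofCodes (pointSeeds A))).testBit k := by
  have h := List.all_eq_true.1 pointRelations_certificate A (by simp; omega)
  rw [force_eq, List.all_eq_true] at h
  exact h k hk

lemma hatWordSpan_hit_inf_oddDegree_X_le (hl : 1 ≤ l) (hm : 5 ≤ m) :
    hatWordSpan (hit ⊓ oddDegree) X l m ≤ hit ⊓ oddDegree ⊔
      Submodule.span kk (wordOfCode X l m '' {k | k ∈ pointSeeds (min l 4)}) := by
  refine sup_le le_sup_left (Submodule.span_le.2 ?_)
  rintro _ ⟨L, D, rfl, rfl, rfl⟩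
  set W := hit ⊓ oddDegree ⊔ Submodule.span kk
    (wordOfCode X L.length D.length '' {k | k ∈ pointSeeds (min L.length 4)})
  have hle : hit ⊓ oddDegree ≤ W := le_sup_left
  have h₀ : ∀ k < 64, wordOfCode X L.length D.length k ∈ W := fun k hk => by
    rw [wordOfCode_eq_zero hl hk]; exact zero_mem _
  have hcode := code_mask_mem_codes L D
  rw [show min D.length 4 = 4 by omega] at hcode
  refine (mem_iff_of_smodEq (((dependsOnMasks_X (by omega)).smodEq_wordOfCode (by decide) rfl
    rfl).mono hle)).2 (((known_ofCodes h₀ fun k hk => Submodule.mem_sup_right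
      (Submodule.subset_span ⟨k, hk, rfl⟩)).propagate h₀
        (fun r hr => hle (sum_pointRelations_mem hl hm hr)) 4) _
          (testBit_propagate_pointRelations ?_ ?_ hcode))
  all_goals omega

end VariableRelations

/-! ### Spikes and flags -/

section Spike

variable {σ : Type*}

/-- The exponent of the product of the variables in `U`. -/
def squarefreeExp (U : Finset σ) : σ →₀ ℕ := Finsupp.indicator U fun _ _ => 1

lemma squarefreeExp_of_mem {U : Finset σ} {i : σ} (hi : i ∈ U) : squarefreeExp U i = 1 :=
  Finsupp.indicator_of_mem hi _

lemma squarefreeExp_of_notMem {U : Finset σ} {i : σ} (hi : i ∉ U) : squarefreeExp U i = 0 :=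
  Finsupp.indicator_of_notMem hi _

lemma squarefreeExp_le_one (U : Finset σ) (i : σ) : squarefreeExp U i ≤ 1 := by
  by_cases hi : i ∈ U
  · exact (squarefreeExp_of_mem hi).le
  · exact (squarefreeExp_of_notMem hi).le.trans zero_le_one

lemma degree_squarefreeExp (U : Finset σ) : (squarefreeExp U).degree = U.card := by
  rw [Finsupp.degree_apply, squarefreeExp, Finset.card_eq_sum_ones,
    Finset.sum_subset (Finsupp.support_indicator_subset U _) fun i _ hi =>
      Finsupp.notMem_support_iff.1 hi]
  exact Finset.sum_congr rfl fun i hi => squarefreeExp_of_mem hi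

lemma squarefreeExp_empty : squarefreeExp (∅ : Finset σ) = 0 := by
  ext i
  exact squarefreeExp_of_notMem (Finset.notMem_empty i)

lemma eq_squarefreeExp_of_add_eq {U : Finset σ} {m a b : σ →₀ ℕ} (hm : m.degree ≤ U.card + 1)
    (h : m + 2 • a = 2 • b + squarefreeExp U) : m = squarefreeExp U := by
  have hi (i : σ) : m i + 2 * a i = 2 * b i + squarefreeExp U i := by
    simpa using DFunLike.congr_fun h i
  have hle : squarefreeExp U ≤ m := fun i => by
    have := hi i
    have := squarefreeExp_le_one U i
    omega
  obtain ⟨r, rfl⟩ := exists_add_of_le hle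
  have hr (i : σ) : r i = 0 := by
    have hdeg := Finsupp.le_degree i r
    rw [map_add, degree_squarefreeExp] at hm
    have := hi i
    rw [Finsupp.add_apply] at this
    omega
  rw [(Finsupp.ext hr : r = 0), add_zero]

lemma sq_eq_self (c : kk) : c ^ 2 = c := ZMod.pow_card c

/-- Comparing exponents modulo 2, only the square-free part of `p` contributes. -/
lemma coeff_mul_sq {U : Finset σ} {d : ℕ} {p : MvPolynomial σ kk} (hp : p.IsHomogeneous d)
    (hd : d ≤ U.card + 1) (e : σ →₀ ℕ) (g : MvPolynomial σ kk) :
    coeff (2 • e + squarefreeExp U) (p * g ^ 2) = coeff (squarefreeExp U) p * coeff e g := by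
  classical
  suffices h : ∀ m : σ →₀ ℕ, m.degree = d → coeff (2 • e + squarefreeExp U)
      (monomial m 1 * g ^ 2) - coeff (squarefreeExp U) (monomial m (1 : kk)) * coeff e g = 0 by
    refine sub_eq_zero.1 ((Submodule.mem_bot kk).1 (map_mem_of_monomial (W := ⊥)
      (φ := (lcoeff kk (2 • e + squarefreeExp U)).comp (LinearMap.mulRight kk (g ^ 2)) -
        (LinearMap.mulRight kk (coeff e g)).comp (lcoeff kk (squarefreeExp U))) hp
        fun m hm => (Submodule.mem_bot kk).2 (h m hm)))
  intro m hm
  rw [sub_eq_zero]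
  induction g using MvPolynomial.induction_on' with
  | add f g hf hg => rw [CharTwo.add_sq, mul_add, coeff_add, coeff_add, hf, hg, mul_add]
  | monomial a c =>
    have heq : m + 2 • a = 2 • e + squarefreeExp U ↔ m = squarefreeExp U ∧ a = e := by
      refine ⟨fun h => ?_, by rintro ⟨rfl, rfl⟩; exact add_comm _ _⟩
      have hmU := eq_squarefreeExp_of_add_eq (hm.trans_le hd) h
      refine ⟨hmU, ?_⟩
      rw [hmU, add_comm, add_left_inj] at h
      ext i
      simpa using DFunLike.congr_fun h i
    rw [monomial_pow, monomial_mul, one_mul, sq_eq_self, coeff_monomial, coeff_monomial,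
      coeff_monomial, if_congr heq rfl rfl]
    split_ifs <;> simp_all

lemma choose_eq_zero_of_add_eq {m a j : ℕ} (h : a + j + 1 = 2 ^ m) (hj : 1 ≤ j) :
    (a.choose j : kk) = 0 := by
  induction m generalizing a j with
  | zero => rw [pow_zero] at h; omega
  | succ m ih =>
    have hlucas : (a.choose j : kk) = (a % 2).choose (j % 2) * (a / 2).choose (j / 2) := by
      rw [← Nat.cast_mul, ZMod.natCast_eq_natCast_iff]
      exact Choose.choose_modEq_choose_mod_mul_choose_div_nat
    rw [pow_succ] at h
    rw [hlucas]
    rcases Nat.mod_two_eq_zero_or_one j with hj' | hj'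
    · rw [ih (a := a / 2) (j := j / 2) (by omega) (by omega), mul_zero]
    · rw [hj', show a % 2 = 0 by omega, Nat.choose_zero_succ, Nat.cast_zero, zero_mul]

lemma totalSq_X_pow (i : σ) (a : ℕ) : totalSq (X i ^ a : MvPolynomial σ kk) =
    ∑ j ∈ Finset.range (a + 1),
      Polynomial.monomial j (monomial (Finsupp.single i (a + j)) (a.choose j : kk)) := by
  rw [map_pow, totalSq_X, add_comm, add_pow]
  refine Finset.sum_congr rfl fun j hj => ?_
  have hexp : a + j = 2 * j + (a - j) := by rw [Finset.mem_range] at hj; omega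
  rw [← C_mul_X_pow_eq_monomial, hexp, ← Polynomial.C_mul_X_pow_eq_monomial, map_natCast,
    pow_add, pow_mul]
  simp only [map_mul, map_pow, map_natCast, mul_pow]
  ring

/-- A spike is an exponent all of whose entries have the form `2 ^ m - 1`. -/
def IsSpike (e : σ →₀ ℕ) : Prop := ∀ i, ∃ m, e i + 1 = 2 ^ m

lemma coeff_Sq_eq_zero [Finite σ] {e : σ →₀ ℕ} (he : IsSpike e) {k : ℕ} (hk : 1 ≤ k)
    (g : MvPolynomial σ kk) : coeff e (Sq k g) = 0 := by
  classical
  cases nonempty_fintype σ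
  induction g using MvPolynomial.induction_on' with
  | add f g hf hg => rw [map_add, coeff_add, hf, hg, add_zero]
  | monomial m c =>
    have hprod : totalSq (monomial m (1 : kk)) =
        ∑ p ∈ Fintype.piFinset fun i => Finset.range (m i + 1), Polynomial.monomial (∑ i, p i)
          (monomial (∑ i, Finsupp.single i (m i + p i)) (∏ i, ((m i).choose (p i) : kk))) := by
      rw [monomial_eq, map_one, one_mul, Finsupp.prod_fintype _ _ fun i => pow_zero _, map_prod]
      simp only [totalSq_X_pow, Finset.prod_univ_sum, monomial_sum_prod,
        ← Polynomial.C_mul_X_pow_eq_monomial, Finset.prod_mul_distrib, Finset.prod_pow_eq_pow_sum,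
        map_prod]
    rw [← mul_one c, ← smul_eq_mul, ← smul_monomial, map_smul, coeff_smul, Sq_eq_coeff, hprod,
      Polynomial.finsetSum_coeff, coeff_sum, Finset.sum_eq_zero, smul_zero]
    intro p _
    rw [Polynomial.coeff_monomial]
    split_ifs with hp
    · rw [coeff_monomial]
      split_ifs with hmp
      · obtain ⟨i, hi⟩ : ∃ i, 1 ≤ p i := by
          by_contra! h
          rw [Finset.sum_eq_zero fun i _ => Nat.lt_one_iff.1 (h i)] at hp
          omega
        obtain ⟨r, hr⟩ := he i
        rw [← hmp, Finsupp.finsetSum_apply] at hr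
        simp only [Finsupp.single_apply, Finset.sum_ite_eq', Finset.mem_univ, if_true] at hr
        exact Finset.prod_eq_zero (Finset.mem_univ i) (choose_eq_zero_of_add_eq hr hi)
      · rfl
    · exact coeff_zero _

lemma coeff_squarefreeExp_X_mul [DecidableEq σ] (U : Finset σ) (j : σ)
    (p : MvPolynomial σ kk) :
    coeff (squarefreeExp U) (X j * p) =
      if j ∈ U then coeff (squarefreeExp (U.erase j)) p else 0 := by
  have hsupport : j ∈ (squarefreeExp U).support ↔ j ∈ U := by
    by_cases hj : j ∈ U
    · simp [hj, squarefreeExp_of_mem hj]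
    · simp [hj, squarefreeExp_of_notMem hj]
  rw [coeff_X_mul', if_congr hsupport rfl rfl]
  refine if_congr Iff.rfl ?_ rfl
  congr 1
  ext i
  rcases eq_or_ne i j with rfl | hij
  · simp [squarefreeExp_of_notMem, squarefreeExp_le_one]
  · by_cases hi : i ∈ U
    · simp [squarefreeExp_of_mem hi, squarefreeExp_of_mem (Finset.mem_erase.2 ⟨hij, hi⟩), hij]
    · simp [squarefreeExp_of_notMem hi, squarefreeExp_of_notMem
        (fun h => hi (Finset.mem_of_mem_erase h))]

end Spike

section LinearSubst

variable {σ τ : Type*} [Fintype τ] (B : Matrix σ τ kk)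

/-- The linear substitution `X i ↦ ∑ j, B i j • X j`. For a `4 × 3` matrix it restricts
polynomials on a four-dimensional space to the span of the columns of `B`. -/
def linearSubst : MvPolynomial σ kk →ₐ[kk] MvPolynomial τ kk := aeval fun i => ∑ j, B i j • X j

lemma linearSubst_X (i : σ) : linearSubst B (X i) = ∑ j, B i j • X j := aeval_X _ i

lemma isHomogeneous_linearSubst {d : ℕ} {f : MvPolynomial σ kk} (hf : f.IsHomogeneous d) :
    (linearSubst B f).IsHomogeneous d := by
  have h := hf.aeval (fun i => ∑ j, B i j • X j : σ → MvPolynomial τ kk) fun i =>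
    IsHomogeneous.sum _ _ 1 fun j _ => (homogeneousSubmodule τ kk 1).smul_mem _
      (isHomogeneous_X kk j)
  rwa [one_mul] at h

lemma totalSq_linearSubst (f : MvPolynomial σ kk) :
    totalSq (linearSubst B f) = (totalSq f).map (linearSubst B).toRingHom := by
  suffices h : totalSq.comp (linearSubst B) =
      (Polynomial.mapAlgHom (linearSubst B)).comp totalSq from congrArg (fun φ => φ f) h
  ext1 i
  simp only [AlgHom.comp_apply, totalSq_X, map_add, map_mul, linearSubst_X, map_sum, map_smul,
    Polynomial.coe_mapAlgHom, Polynomial.map_C, Polynomial.map_X, RingHom.coe_coe, map_pow]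
  rw [← map_sum, ← map_pow, CharTwo.sum_sq, map_sum, map_sum, Finset.mul_sum,
    ← Finset.sum_add_distrib]
  refine Finset.sum_congr rfl fun j _ => ?_
  rw [smul_pow, sq_eq_self, smul_add, ← map_pow, ← Polynomial.smul_C, ← Polynomial.smul_C,
    mul_smul_comm]

lemma Sq_linearSubst (k : ℕ) (f : MvPolynomial σ kk) :
    Sq k (linearSubst B f) = linearSubst B (Sq k f) := by
  rw [Sq_eq_coeff, totalSq_linearSubst, Polynomial.coeff_map]
  rfl

lemma linearSubst_mem_hit {f : MvPolynomial σ kk} (hf : f ∈ hit) : linearSubst B f ∈ hit :=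
  map_mem_of_mem_hit (φ := (linearSubst B).toLinearMap) (fun k _ g _ => by
    rw [AlgHom.toLinearMap_apply, ← Sq_linearSubst]
    exact Sq_mem_hit (by omega) _) hf

lemma linearSubst_substM (B : Matrix (Fin 4) τ kk) (M : Matrix (Fin 4) (Fin 4) kk) (f : P4) :
    linearSubst B (substM M f) = linearSubst (M * B) f := by
  suffices h : (linearSubst B).comp (substM M) = linearSubst (M * B) from
    congrArg (fun φ => φ f) h
  ext1 i
  simp only [AlgHom.comp_apply, substM, linearSubst, aeval_X, map_sum, map_smul,
    Matrix.mul_apply, Finset.smul_sum, Finset.sum_smul, smul_smul]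
  exact Finset.sum_comm

variable [DecidableEq τ]

/-- Laplace expansion; iterating it gives minors, because permanents and determinants agree in
characteristic 2. -/
lemma coeff_squarefreeExp_linearSubst_X_mul (U : Finset τ) (i : σ) (p : MvPolynomial τ kk) :
    coeff (squarefreeExp U) (linearSubst B (X i) * p) =
      ∑ j ∈ U, B i j * coeff (squarefreeExp (U.erase j)) p := by
  rw [linearSubst_X, Finset.sum_mul, coeff_sum]
  simp only [smul_mul_assoc, coeff_smul, smul_eq_mul, coeff_squarefreeExp_X_mul, mul_ite,
    mul_zero, Finset.sum_ite_mem, Finset.univ_inter]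

end LinearSubst

section FlagEval

variable (U : Finset (Fin 3)) (B : Matrix (Fin 4) (Fin 3) kk)

/-- The spike exponent equal to `2 ^ (l + m) - 1` on `U` and to `2 ^ l - 1` elsewhere. -/
def spike (l m : ℕ) : Fin 3 →₀ ℕ :=
  Finsupp.equivFunOnFinite.symm fun j => if j ∈ U then 2 ^ (l + m) - 1 else 2 ^ l - 1

lemma isSpike_spike (l m : ℕ) : IsSpike (spike U l m) := fun j => by
  by_cases hj : j ∈ U
  · exact ⟨l + m, by simp [spike, hj, Nat.sub_add_cancel Nat.one_le_two_pow]⟩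
  · exact ⟨l, by simp [spike, hj, Nat.sub_add_cancel Nat.one_le_two_pow]⟩

lemma spike_succ (l m : ℕ) :
    spike U (l + 1) m = 2 • spike U l m + squarefreeExp Finset.univ := by
  ext j
  have h (n : ℕ) : 2 ^ (n + 1) - 1 = 2 * (2 ^ n - 1) + 1 := by
    have := Nat.one_le_two_pow (n := n)
    rw [pow_succ]
    omega
  by_cases hj : j ∈ U <;>
    simp [spike, hj, squarefreeExp_of_mem, h, Nat.add_right_comm l 1 m]

lemma spike_zero_succ (m : ℕ) : spike U 0 (m + 1) = 2 • spike U 0 m + squarefreeExp U := by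
  ext j
  by_cases hj : j ∈ U
  · have := Nat.one_le_two_pow (n := m)
    simp only [spike, hj, squarefreeExp_of_mem, Finsupp.coe_equivFunOnFinite_symm, if_true,
      Finsupp.add_apply, Finsupp.smul_apply, smul_eq_mul, pow_succ, Nat.zero_add]
    omega
  · simp [spike, hj, squarefreeExp_of_notMem]

lemma spike_zero_zero : spike U 0 0 = 0 := by
  ext j
  simp [spike]

/-- The coefficient of the square-free monomial on `U` after restriction along `B`. On products
of `U.card` variables this is a minor of `B`. -/
def minor : P4 →ₗ[kk] kk := (lcoeff kk (squarefreeExp U)).comp (linearSubst B).toLinearMap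

lemma minor_eq_zero {d : ℕ} {p : P4} (hp : p.IsHomogeneous d) (hd : d ≠ U.card) :
    minor U B p = 0 :=
  (isHomogeneous_linearSubst B hp).coeff_eq_zero (by rwa [degree_squarefreeExp, ne_comm])

/-- The coefficient at `spike U l m` after restriction along `B`. -/
def flagEval (l m : ℕ) : P4 →ₗ[kk] kk :=
  (lcoeff kk (spike U l m)).comp (linearSubst B).toLinearMap

variable {U B} {l m : ℕ}

lemma flagEval_apply (f : P4) : flagEval U B l m f = coeff (spike U l m) (linearSubst B f) := rfl

lemma flagEval_eq_zero_of_mem_hit {f : P4} (hf : f ∈ hit) : flagEval U B l m f = 0 := by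
  have h := map_mem_of_mem_hit (φ := lcoeff kk (spike U l m)) (W := ⊥) (fun k _ g _ =>
    coeff_Sq_eq_zero (isSpike_spike U l m) (by omega) g) (linearSubst_mem_hit B hf)
  exact h

lemma flagEval_substM (M : Matrix (Fin 4) (Fin 4) kk) (f : P4) :
    flagEval U B l m (substM M f) = flagEval U (M * B) l m f := by
  rw [flagEval_apply, linearSubst_substM, flagEval_apply]

lemma flagEval_succ_mul_sq {d : ℕ} {p : P4} (hp : p.IsHomogeneous d) (hd : d ≤ 4) (f : P4) :
    flagEval U B (l + 1) m (p * f ^ 2) = minor Finset.univ B p * flagEval U B l m f := by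
  rw [flagEval_apply, spike_succ, map_mul, map_pow,
    coeff_mul_sq (isHomogeneous_linearSubst B hp) (by simpa using hd)]
  rfl

lemma flagEval_zero_succ_mul_sq {d : ℕ} {p : P4} (hp : p.IsHomogeneous d) (hd : d ≤ U.card + 1)
    (f : P4) : flagEval U B 0 (m + 1) (p * f ^ 2) = minor U B p * flagEval U B 0 m f := by
  rw [flagEval_apply, spike_zero_succ, map_mul, map_pow,
    coeff_mul_sq (isHomogeneous_linearSubst B hp) hd]
  rfl

lemma flagEval_word_hat (L : List (Fin 4)) (f : P4) :
    flagEval U B L.length m (word hat L f) =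
      (L.map fun i => minor Finset.univ B (hat i)).prod * flagEval U B 0 m f := by
  induction L with
  | nil => simp
  | cons i L ih =>
    rw [word_cons, List.length_cons, flagEval_succ_mul_sq (isHomogeneous_hat i) (by omega), ih,
      List.map_cons, List.prod_cons, mul_assoc]

lemma flagEval_word {α : Type*} {a : α → P4} (ha : ∀ e, (a e).IsHomogeneous U.card)
    (L : List (Fin 4)) (D : List α) :
    flagEval U B L.length D.length (word hat L (word a D 1)) =
      (L.map fun i => minor Finset.univ B (hat i)).prod *
        (D.map fun e => minor U B (a e)).prod := by
  rw [flagEval_word_hat]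
  congr 1
  induction D with
  | nil => simp [flagEval_apply, spike_zero_zero]
  | cons e D ih =>
    rw [word_cons, List.length_cons, flagEval_zero_succ_mul_sq (ha e) (Nat.le_succ _), ih,
      List.map_cons, List.prod_cons]

lemma flagEval_eq_zero_of_mem_low (hU : U.card = 2) {f : P4} (hf : f ∈ low) :
    flagEval U B l (m + 1) f = 0 := by
  induction hf generalizing l with
  | hit hf => exact flagEval_eq_zero_of_mem_hit hf
  | add _ _ hf hg => rw [map_add, hf, hg, add_zero]
  | X_mul_sq p y =>
    have hX := isHomogeneous_X kk p
    cases l with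
    | zero =>
      rw [flagEval_zero_succ_mul_sq hX (by omega), minor_eq_zero U B hX (by omega), zero_mul]
    | succ l =>
      rw [flagEval_succ_mul_sq hX (by omega), minor_eq_zero _ B hX (by simp), zero_mul]
  | @hat_mul_sq i f _ ih =>
    have hi := isHomogeneous_hat i
    cases l with
    | zero =>
      rw [flagEval_zero_succ_mul_sq hi (by omega), minor_eq_zero U B hi (by omega), zero_mul]
    | succ l => rw [flagEval_succ_mul_sq hi (by omega), ih, mul_zero]

end FlagEval

section Minor

variable (U : Finset (Fin 3)) (B : Matrix (Fin 4) (Fin 3) kk)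

lemma minor_X_mul (i : Fin 4) (p : P4) :
    minor U B (X i * p) = ∑ j ∈ U, B i j * minor (U.erase j) B p := by
  rw [minor, LinearMap.comp_apply, AlgHom.toLinearMap_apply, map_mul, lcoeff_apply,
    coeff_squarefreeExp_linearSubst_X_mul]
  rfl

lemma minor_singleton_X (i : Fin 4) (j : Fin 3) : minor {j} B (X i) = B i j := by
  have hone : minor ∅ B 1 = 1 := by
    rw [minor, LinearMap.comp_apply, AlgHom.toLinearMap_apply, map_one, lcoeff_apply,
      squarefreeExp_empty, coeff_zero_one]
  rw [← mul_one (X i), minor_X_mul, Finset.sum_singleton, Finset.erase_singleton, hone, mul_one]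

lemma minor_pair_X_mul_X {j k : Fin 3} (hjk : j ≠ k) (i i' : Fin 4) :
    minor {j, k} B (X i * X i') = B i j * B i' k + B i k * B i' j := by
  have hj : ({j, k} : Finset (Fin 3)).erase j = {k} := Finset.erase_insert (by simpa using hjk)
  have hk : ({j, k} : Finset (Fin 3)).erase k = {j} := by
    rw [Finset.pair_comm, Finset.erase_insert (by simpa using hjk.symm)]
  rw [minor_X_mul, Finset.sum_pair hjk, hj, hk, minor_singleton_X, minor_singleton_X]

lemma minor_univ_hat_eq {i j k l : Fin 4} (h : Distinct i j k l) :
    minor Finset.univ B (hat i) = B j 0 * minor {1, 2} B (X k * X l) +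
      (B k 0 * minor {1, 2} B (X j * X l) + B l 0 * minor {1, 2} B (X j * X k)) := by
  have h₀ : (Finset.univ : Finset (Fin 3)).erase 0 = {1, 2} := by decide
  have h₁ : (Finset.univ : Finset (Fin 3)).erase 1 = {0, 2} := by decide
  have h₂ : (Finset.univ : Finset (Fin 3)).erase 2 = {0, 1} := by decide
  rw [hat_eq h, mul_assoc, minor_X_mul, Fin.sum_univ_three, h₀, h₁, h₂]
  simp only [minor_pair_X_mul_X, ne_eq, Fin.reduceEq, not_false_eq_true]
  ring

lemma minor_univ_hat (i : Fin 4) :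
    minor Finset.univ B (hat i) = (B.submatrix i.succAbove id).det := by
  rw [minor_univ_hat_eq B (j := i.succAbove 0) (k := i.succAbove 1) (l := i.succAbove 2)
    (by constructor <;> simp), Matrix.det_fin_three]
  simp only [minor_pair_X_mul_X, ne_eq, Fin.reduceEq, not_false_eq_true, Matrix.submatrix_apply,
    id_eq, CharTwo.sub_eq_add]
  ring

end Minor

section Support

variable {n : ℕ} {φ : Fin n → kk}

/-- The set where a vector over `kk` takes the value `1`, encoded by binary digits. -/
def support (φ : Fin n → kk) : ℕ := mask ((List.finRange n).filter fun i => φ i = 1)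

lemma testBit_support (i : Fin n) : (support φ).testBit i ↔ φ i = 1 := by
  simp [support, testBit_mask, ← Fin.ext_iff]

lemma support_lt (φ : Fin n → kk) : support φ < 2 ^ n := mask_lt _

lemma eq_ite_testBit_support (i : Fin n) : φ i = if (support φ).testBit i then 1 else 0 := by
  rw [if_congr (testBit_support i) rfl rfl]
  generalize φ i = c
  revert c
  decide

lemma support_eq_of_testBit {m : ℕ} (hm : m < 2 ^ n)
    (h : ∀ i : Fin n, φ i = if m.testBit i then 1 else 0) : support φ = m := by
  refine Nat.eq_of_testBit_eq fun i => ?_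
  by_cases hi : i < n
  · rw [Bool.eq_iff_iff, testBit_support ⟨i, hi⟩, h]
    simp
  · have hle : 2 ^ n ≤ 2 ^ i := Nat.pow_le_pow_right two_pos (not_lt.1 hi)
    rw [Nat.testBit_lt_two_pow ((support_lt φ).trans_le hle),
      Nat.testBit_lt_two_pow (hm.trans_le hle)]

lemma support_eq_zero_iff : support φ = 0 ↔ φ = 0 := by
  refine ⟨fun h => funext fun i => ?_, ?_⟩
  · rw [eq_ite_testBit_support (φ := φ) i, h]
    simp
  · rintro rfl
    exact support_eq_of_testBit (by positivity) (by simp)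

lemma prod_map_eq_ite (L : List (Fin n)) :
    (L.map φ).prod = if mask L &&& support φ = mask L then 1 else 0 := by
  have hmask : mask L &&& support φ = mask L ↔ ∀ i ∈ L, φ i = 1 := by
    simp only [← testBit_support]
    refine ⟨fun h i hi => ?_, fun h => Nat.eq_of_testBit_eq fun j => ?_⟩
    · have hL := (testBit_mask L i).2 ⟨i, hi, rfl⟩
      rw [← h, Nat.testBit_and, Bool.and_eq_true] at hL
      exact hL.2
    · rw [Nat.testBit_and, Bool.and_eq_left_iff_imp, testBit_mask]
      rintro ⟨i, hi, rfl⟩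
      exact h i hi
  rw [if_congr hmask rfl rfl]
  clear hmask
  induction L with
  | nil => simp
  | cons i L ih =>
    rw [List.map_cons, List.prod_cons, ih]
    by_cases hi : φ i = 1
    · simp [hi]
    · have hi₀ : φ i = 0 := by
        generalize φ i = c at hi
        revert c
        decide
      simp [hi₀]

end Support

section FlagCode

variable {n : ℕ} (U : Finset (Fin 3)) (a : Fin n → P4) (B : Matrix (Fin 4) (Fin 3) kk)

/-- The code of the coordinates of the column space of `B`, which are its maximal minors, and of
the minors given by `a`. -/
def flagCode : ℕ :=
  code (support fun i => minor Finset.univ B (hat i)) (support fun e => minor U B (a e))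

lemma code_and_code_eq_iff {S T S' T' : ℕ} (hT : T < 64) (hT' : T' < 64) :
    code S T &&& code S' T' = code S T ↔ S &&& S' = S ∧ T &&& T' = T := by
  have h64 {S T S' T' : ℕ} : code S T &&& code S' T' = code S T ↔
      (code S T / 2 ^ 6 &&& code S' T' / 2 ^ 6 = code S T / 2 ^ 6) ∧
        (code S T % 2 ^ 6 &&& code S' T' % 2 ^ 6 = code S T % 2 ^ 6) := by
    rw [← Nat.and_div_two_pow, ← Nat.and_mod_two_pow]
    omega
  have hdiv {S T : ℕ} (hT : T < 64) : code S T / 2 ^ 6 = S := by rw [code]; omega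
  have hmod {S T : ℕ} (hT : T < 64) : code S T % 2 ^ 6 = T := by rw [code]; omega
  rw [h64, hdiv hT, hdiv hT', hmod hT, hmod hT']

variable {U a B}

lemma flagEval_wordOfCode (ha : ∀ e, (a e).IsHomogeneous U.card) (hn : n ≤ 6) {l m k l' m' : ℕ}
    (hk : k ∈ codes 4 n l' m') (hl : l' ≤ l) (hl' : 1 ≤ l') (hm : m' ≤ m) (hm' : 1 ≤ m') :
    flagEval U B l m (wordOfCode a l m k) = if k &&& flagCode U a B = k then 1 else 0 := by
  obtain ⟨S, hS, hk⟩ := List.mem_flatMap.1 hk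
  obtain ⟨T, hT, rfl⟩ := List.mem_map.1 hk
  obtain ⟨L, hL, rfl⟩ := exists_mask_eq hS hl (by omega)
  obtain ⟨D, hD, rfl⟩ := exists_mask_eq hT hm (by omega)
  have hlt {T : ℕ} (hT : T < 2 ^ n) : T < 64 := hT.trans_le (Nat.pow_le_pow_right two_pos hn)
  have hex : ∃ p : List (Fin 4) × List (Fin n), p.1.length = l ∧ p.2.length = m ∧
      code (mask p.1) (mask p.2) = code (mask L) (mask D) := ⟨(L, D), hL, hD, rfl⟩
  obtain ⟨hl, hm, hcode⟩ := hex.choose_spec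
  rw [wordOfCode, dif_pos hex]
  generalize hex.choose = p at hl hm hcode ⊢
  subst hl hm
  rw [flagEval_word ha, prod_map_eq_ite, prod_map_eq_ite, ite_mul, one_mul, zero_mul, ← ite_and,
    ← hcode, flagCode]
  exact if_congr (code_and_code_eq_iff (hlt (mask_lt _)) (hlt (support_lt _))).symm rfl rfl

end FlagCode

section Rank

/-- Applies `g` to the images of the elements of a list under a function, which are evaluated
first. -/
def forceMap {α : Type} (f : ℕ → ℕ) (g : List ℕ → α) : List ℕ → α
  | [] => g []
  | r :: R => force (f r) fun r => forceMap f (fun R => g (r :: R)) R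

lemma forceMap_eq {α : Type} (f : ℕ → ℕ) (g : List ℕ → α) (R : List ℕ) :
    forceMap f g R = g (R.map f) := by
  induction R generalizing g with
  | nil => rfl
  | cons r R ih => rw [forceMap, force_eq, ih, List.map_cons]

/-- Gaussian elimination: whether the rows with binary digits `r ∈ R` span `Fin n → kk`. -/
def hasFullRank : ℕ → List ℕ → Bool
  | 0, _ => true
  | n + 1, R =>
    match R.find? (·.testBit n) with
    | none => false
    | some p => forceMap (fun r => if r.testBit n then r ^^^ p else r) (hasFullRank n) R

lemma eq_zero_of_hasFullRank {n : ℕ} {R : List ℕ} (h : hasFullRank n R) {c : Fin n → kk}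
    (hc : ∀ r ∈ R, ∑ j : Fin n, (if r.testBit j then c j else 0) = 0) : c = 0 := by
  induction n generalizing R with
  | zero => exact Subsingleton.elim _ _
  | succ n ih =>
    rw [hasFullRank] at h
    split at h
    case h_1 => simp at h
    case h_2 p hp =>
      have hpn : p.testBit n := by simpa using List.find?_some hp
      have hpc := hc p (List.mem_of_find?_eq_some hp)
      rw [Fin.sum_univ_castSucc, Fin.val_last, if_pos hpn] at hpc
      rw [forceMap_eq] at h
      have hinit : (fun j : Fin n => c j.castSucc) = 0 := by
        refine ih h fun r hr => ?_
        obtain ⟨r, hrR, rfl⟩ := List.mem_map.1 hr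
        have hrc := hc r hrR
        rw [Fin.sum_univ_castSucc, Fin.val_last] at hrc
        by_cases hrn : r.testBit n
        · rw [if_pos hrn] at hrc ⊢
          have hadd := congrArg₂ (· + ·) hrc hpc
          simp only [add_zero] at hadd
          rw [add_add_add_comm, CharTwo.add_self_eq_zero, add_zero, ← Finset.sum_add_distrib]
            at hadd
          refine (Finset.sum_congr rfl fun j _ => ?_).trans hadd
          rw [Nat.testBit_xor, Fin.val_castSucc]
          cases r.testBit j <;> cases p.testBit j <;> simp [CharTwo.add_self_eq_zero]
        · rw [if_neg hrn] at hrc ⊢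
          simpa using hrc
      have hlast : c (Fin.last n) = 0 := by
        simpa [congrFun hinit] using hpc
      ext j
      refine Fin.lastCases hlast (fun j => congrFun hinit j) j

/-- The incidence row of `f`: bit `j` says whether the binary digits of `K[j]` are among
those of `f`. -/
def incidenceRow (K : List ℕ) (f : ℕ) : ℕ := K.foldr (fun k r => Nat.bit (k &&& f == k) r) 0

lemma testBit_incidenceRow (K : List ℕ) (f : ℕ) (j : Fin K.length) :
    (incidenceRow K f).testBit j = (K.get j &&& f == K.get j) := by
  induction K with
  | nil => exact j.elim0
  | cons k K ih =>
    rw [incidenceRow, List.foldr_cons, ← incidenceRow]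
    refine Fin.cases ?_ (fun j => ?_) j
    · simp [beq_eq_decide]
    · simpa [Nat.testBit_bit_succ] using ih j

/-- Whether a function on `K` is determined by its sums over the sets of all `k ∈ K` whose digits
are digits of `f`, for `f ∈ F`. -/
def separates (F K : List ℕ) : Bool := forceMap (incidenceRow K) (hasFullRank K.length) F

variable {V : Type*} [AddCommGroup V] [Module kk V] {v : ℕ → V} {F K : List ℕ} {f : ℕ} {x : V}

/-- The functional `e` takes the values at the vectors `v k` that are prescribed by `f`. -/
def Evaluates (K : List ℕ) (v : ℕ → V) (f : ℕ) (e : Module.Dual kk V) : Prop :=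
  ∀ k ∈ K, e (v k) = if k &&& f = k then 1 else 0

/-- The sums over the sets of all `k ∈ K` whose digits are digits of `f`, for `f ∈ F`. -/
def incidence (F K : List ℕ) : (Fin K.length → kk) →ₗ[kk] (Fin F.length → kk) :=
  Matrix.mulVecLin (Matrix.of fun i j => if K.get j &&& F.get i = K.get j then 1 else 0)

lemma incidence_apply (c : Fin K.length → kk) (i : Fin F.length) :
    incidence F K c i = ∑ j, if K.get j &&& F.get i = K.get j then c j else 0 := by
  simp [incidence, Matrix.mulVec, dotProduct]

lemma incidence_injective (h : separates F K) : Function.Injective (incidence F K) := by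
  rw [← LinearMap.ker_eq_bot, LinearMap.ker_eq_bot']
  rw [separates, forceMap_eq] at h
  refine fun c hc => eq_zero_of_hasFullRank h fun r hr => ?_
  obtain ⟨f, hf, rfl⟩ := List.mem_map.1 hr
  obtain ⟨i, rfl⟩ := List.get_of_mem hf
  refine Eq.trans ?_ (congrFun hc i)
  simp only [incidence_apply, testBit_incidenceRow, beq_iff_eq]

lemma Evaluates.apply_sum {i : Fin F.length} {e : Module.Dual kk V}
    (he : Evaluates K v (F.get i) e) (c : Fin K.length → kk) :
    e (∑ j, c j • v (K.get j)) = incidence F K c i := by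
  rw [map_sum, incidence_apply]
  refine Finset.sum_congr rfl fun j _ => ?_
  rw [map_smul, he _ (K.get_mem j), smul_ite, smul_zero, smul_eq_mul, mul_one]

lemma eq_zero_of_separates (h : separates F K) (hx : x ∈ Submodule.span kk (v '' {k | k ∈ K}))
    (hF : ∀ f ∈ F, ∃ e, Evaluates K v f e ∧ e x = 0) : x = 0 := by
  rw [← Set.range_list_get, ← Set.range_comp] at hx
  obtain ⟨c, rfl⟩ := (Submodule.mem_span_range_iff_exists_fun kk).1 hx
  have hc : c = 0 := incidence_injective h <| by
    ext i
    obtain ⟨e, he, hx⟩ := hF _ (F.get_mem i)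
    rw [← he.apply_sum, map_zero]
    exact hx
  simp [hc]

lemma exists_eval_eq_one_of_separates (h : separates F K) (hFK : F.length = K.length) (v : ℕ → V) :
    ∃ x ∈ Submodule.span kk (v '' {k | k ∈ K}), ∀ f ∈ F, ∀ e, Evaluates K v f e → e x = 1 := by
  have hsurj : Function.Surjective (incidence F K) :=
    (LinearMap.injective_iff_surjective_of_finrank_eq_finrank (by simp [hFK])).1
      (incidence_injective h)
  obtain ⟨c, hc⟩ := hsurj 1
  refine ⟨∑ j, c j • v (K.get j), Submodule.sum_mem _ fun j _ => Submodule.smul_mem _ _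
    (Submodule.subset_span ⟨_, K.get_mem j, rfl⟩), fun f hf e he => ?_⟩
  obtain ⟨i, rfl⟩ := List.get_of_mem hf
  rw [he.apply_sum, hc, Pi.one_apply]

end Rank

section Frame

/-- The columns of `B` are linearly independent, that is, they are the last three columns of an
invertible matrix. -/
def IsFrame (B : Matrix (Fin 4) (Fin 3) kk) : Prop :=
  ∃ M : Matrix (Fin 4) (Fin 4) kk, IsUnit M ∧ M.submatrix id Fin.succ = B

/-- The frame consisting of the last three vectors of the standard basis. -/
def stdFrame : Matrix (Fin 4) (Fin 3) kk := (1 : Matrix (Fin 4) (Fin 4) kk).submatrix id Fin.succ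

variable {B : Matrix (Fin 4) (Fin 3) kk}

lemma isFrame_stdFrame : IsFrame stdFrame := ⟨1, isUnit_one, rfl⟩

lemma IsFrame.exists_mul_eq (hB : IsFrame B) :
    ∃ M : Matrix (Fin 4) (Fin 4) kk, IsUnit M ∧ M * stdFrame = B := by
  obtain ⟨M, hM, rfl⟩ := hB
  exact ⟨M, hM, congrArg (fun N => N.submatrix id Fin.succ) (mul_one M)⟩

lemma IsFrame.mul {M : Matrix (Fin 4) (Fin 4) kk} (hM : IsUnit M) (hB : IsFrame B) :
    IsFrame (M * B) := by
  obtain ⟨N, hN, rfl⟩ := hB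
  exact ⟨M * N, hM.mul hN, rfl⟩

lemma det_eq_sum_minor (M : Matrix (Fin 4) (Fin 4) kk) :
    M.det = ∑ i, M i 0 * minor Finset.univ (M.submatrix id Fin.succ) (hat i) := by
  rw [Matrix.det_succ_column_zero]
  refine Finset.sum_congr rfl fun i _ => ?_
  rw [CharTwo.neg_eq, one_pow, one_mul, minor_univ_hat, Matrix.submatrix_submatrix]
  rfl

lemma isFrame_iff_exists_minor_ne_zero : IsFrame B ↔ ∃ i, minor Finset.univ B (hat i) ≠ 0 := by
  constructor
  · rintro ⟨M, hM, rfl⟩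
    have hdet := ((Matrix.isUnit_iff_isUnit_det M).1 hM).ne_zero
    rw [det_eq_sum_minor] at hdet
    obtain ⟨i, -, hi⟩ := Finset.exists_ne_zero_of_sum_ne_zero hdet
    exact ⟨i, right_ne_zero_of_mul hi⟩
  · rintro ⟨i, hi⟩
    let M : Matrix (Fin 4) (Fin 4) kk :=
      Matrix.of fun a => Fin.cons (Pi.single (M := fun _ => kk) i 1 a) (B a)
    have hM : M.submatrix id Fin.succ = B := by
      ext a j
      simp [M]
    refine ⟨M, (Matrix.isUnit_iff_isUnit_det M).2 (isUnit_iff_ne_zero.2 ?_), hM⟩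
    rw [det_eq_sum_minor, hM]
    simpa [M, Pi.single_apply] using hi

end Frame

section BitMatrix

/-- The matrix whose columns are given by three consecutive groups of four binary digits of
`r`. -/
def bitMatrix (r : ℕ) : Matrix (Fin 4) (Fin 3) kk :=
  Matrix.of fun i j => if r.testBit (i + 4 * j) then 1 else 0

lemma exists_bitMatrix_eq (B : Matrix (Fin 4) (Fin 3) kk) : ∃ r < 4096, bitMatrix r = B := by
  refine ⟨support fun p : Fin (3 * 4) => B (finProdFinEquiv.symm p).2 (finProdFinEquiv.symm p).1,
    support_lt _, ?_⟩
  ext i j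
  have h := eq_ite_testBit_support (finProdFinEquiv (j, i))
    (φ := fun p : Fin (3 * 4) => B (finProdFinEquiv.symm p).2 (finProdFinEquiv.symm p).1)
  rw [Equiv.symm_apply_apply] at h
  exact h.symm

/-- The minor of `bitMatrix r` with rows `i`, `i'` and columns `j`, `j'`. -/
def bitMinor (r j j' i i' : ℕ) : Bool :=
  (r.testBit (i + 4 * j) && r.testBit (i' + 4 * j')) ^^
    (r.testBit (i + 4 * j') && r.testBit (i' + 4 * j))

/-- The minor of `bitMatrix r` with rows `i`, `i'` and `i''`. -/
def bitDet (r i i' i'' : ℕ) : Bool :=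
  (r.testBit i && bitMinor r 1 2 i' i'') ^^
    ((r.testBit i' && bitMinor r 1 2 i i'') ^^ (r.testBit i'' && bitMinor r 1 2 i i'))

/-- The number with the given binary digits. -/
def ofDigits (l : List Bool) : ℕ := l.foldr Nat.bit 0

/-- The maximal minors of `bitMatrix r`. -/
def bitPlane (r : ℕ) : ℕ :=
  ofDigits [bitDet r 1 2 3, bitDet r 0 2 3, bitDet r 0 1 3, bitDet r 0 1 2]

/-- The minors of the first two columns of `bitMatrix r`. -/
def bitLine (r : ℕ) : ℕ :=
  ofDigits [bitMinor r 0 1 0 1, bitMinor r 0 1 0 2, bitMinor r 0 1 0 3, bitMinor r 0 1 1 2,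
    bitMinor r 0 1 1 3, bitMinor r 0 1 2 3]

lemma testBit_ofDigits (l : List Bool) (i : ℕ) : (ofDigits l).testBit i = l.getD i false := by
  induction l generalizing i with
  | nil => simp [ofDigits]
  | cons b l ih =>
    rw [ofDigits, List.foldr_cons, ← ofDigits]
    cases i with
    | zero => simp
    | succ i => simp [Nat.testBit_bit_succ, ih]

lemma support_eq_ofDigits {n : ℕ} {φ : Fin n → kk} {b : Fin n → Bool}
    (h : ∀ i, φ i = if b i then 1 else 0) : support φ = ofDigits (List.ofFn b) := by
  refine support_eq_of_testBit (Nat.lt_pow_two_of_testBit _ fun i hi => ?_) fun i => ?_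
  · rw [testBit_ofDigits, List.getD_eq_default _ _ (by simpa using hi)]
  · rw [testBit_ofDigits, h, List.getD_eq_getElem _ _ (by simp), List.getElem_ofFn]

lemma ite_mul_ite (b b' : Bool) :
    ((if b then 1 else 0) * (if b' then 1 else 0) : kk) = if b && b' then 1 else 0 := by
  revert b b'; decide

lemma ite_add_ite (b b' : Bool) :
    ((if b then 1 else 0) + (if b' then 1 else 0) : kk) = if b ^^ b' then 1 else 0 := by
  revert b b'; decide

variable (r : ℕ)

lemma minor_pair_bitMatrix {j j' : Fin 3} (hj : j ≠ j') (i i' : Fin 4) :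
    minor {j, j'} (bitMatrix r) (X i * X i') = if bitMinor r j j' i i' then 1 else 0 := by
  rw [minor_pair_X_mul_X _ hj]
  simp only [bitMatrix, Matrix.of_apply, ite_mul_ite, ite_add_ite]
  rfl

lemma minor_univ_bitMatrix {i j k l : Fin 4} (h : Distinct i j k l) :
    minor Finset.univ (bitMatrix r) (hat i) = if bitDet r j k l then 1 else 0 := by
  simp only [minor_univ_hat_eq _ h, minor_pair_bitMatrix r (show (1 : Fin 3) ≠ 2 by decide)]
  simp only [bitMatrix, Matrix.of_apply, ite_mul_ite, ite_add_ite]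
  rfl

lemma support_minor_univ_bitMatrix :
    support (fun i => minor Finset.univ (bitMatrix r) (hat i)) = bitPlane r := by
  refine support_eq_ofDigits (b := ![bitDet r 1 2 3, bitDet r 0 2 3, bitDet r 0 1 3,
    bitDet r 0 1 2]) fun i => ?_
  fin_cases i
  · exact minor_univ_bitMatrix r (i := 0) (j := 1) (k := 2) (l := 3) (by decide)
  · exact minor_univ_bitMatrix r (i := 1) (j := 0) (k := 2) (l := 3) (by decide)
  · exact minor_univ_bitMatrix r (i := 2) (j := 0) (k := 1) (l := 3) (by decide)
  · exact minor_univ_bitMatrix r (i := 3) (j := 0) (k := 1) (l := 2) (by decide)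

lemma flagCode_pairProd_bitMatrix :
    flagCode {0, 1} pairProd (bitMatrix r) = code (bitPlane r) (bitLine r) := by
  rw [flagCode, support_minor_univ_bitMatrix]
  congr 1
  refine support_eq_ofDigits (b := ![bitMinor r 0 1 0 1, bitMinor r 0 1 0 2, bitMinor r 0 1 0 3,
    bitMinor r 0 1 1 2, bitMinor r 0 1 1 3, bitMinor r 0 1 2 3]) fun e => ?_
  fin_cases e <;> exact minor_pair_bitMatrix r (by decide) _ _

lemma flagCode_X_bitMatrix : flagCode {0} X (bitMatrix r) = code (bitPlane r) (r % 16) := by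
  rw [flagCode, support_minor_univ_bitMatrix]
  congr 1
  refine support_eq_of_testBit (Nat.mod_lt _ (by decide)) fun i => ?_
  rw [minor_singleton_X, show 16 = 2 ^ 4 from rfl, Nat.testBit_mod_two_pow]
  simp [bitMatrix]

lemma isFrame_bitMatrix : IsFrame (bitMatrix r) ↔ bitPlane r ≠ 0 := by
  rw [← support_minor_univ_bitMatrix]
  exact isFrame_iff_exists_minor_ne_zero.trans
    (Function.ne_iff.symm.trans (not_congr support_eq_zero_iff.symm))

end BitMatrix

section Flags

/-- The values of `g` on a list, without repetitions, followed by the elements of another list.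
The values are evaluated first. -/
def distinctValues (g : ℕ → ℕ) (R : List ℕ) : List ℕ → List ℕ :=
  R.foldr (fun r f K => force (g r) fun k => bif K.elem k then f K else f (k :: K)) id

lemma mem_distinctValues {g : ℕ → ℕ} {R K : List ℕ} {k : ℕ} :
    k ∈ distinctValues g R K ↔ k ∈ K ∨ ∃ r ∈ R, g r = k := by
  induction R generalizing K with
  | nil => simp [distinctValues]
  | cons r R ih =>
    rw [distinctValues, List.foldr_cons, ← distinctValues, force_eq, cond_eq_ite]
    simp only [List.exists_mem_cons_iff, List.elem_iff]
    split_ifs with h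
    · have hk : g r = k → k ∈ K := fun hrk => hrk ▸ h
      rw [ih]
      tauto
    · rw [ih, List.mem_cons]
      tauto

/-- The numbers `r` for which `bitMatrix r` is a frame. -/
def frames : List ℕ := (List.range 4096).filter fun r => bitPlane r ≠ 0

/-- The flags consisting of a hyperplane and a plane in it. -/
def lineFlags : List ℕ := distinctValues (fun r => code (bitPlane r) (bitLine r)) frames []

/-- The flags consisting of a hyperplane and a nonzero vector in it. -/
def pointFlags : List ℕ := distinctValues (fun r => code (bitPlane r) (r % 16)) frames []

lemma exists_mem_frames_iff {p : Matrix (Fin 4) (Fin 3) kk → Prop} :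
    (∃ r ∈ frames, p (bitMatrix r)) ↔ ∃ B, IsFrame B ∧ p B := by
  refine ⟨fun ⟨r, hr, hp⟩ => ⟨_, (isFrame_bitMatrix r).2 (by simpa using List.of_mem_filter hr),
    hp⟩, fun ⟨B, hB, hp⟩ => ?_⟩
  obtain ⟨r, hr, rfl⟩ := exists_bitMatrix_eq B
  exact ⟨r, List.mem_filter.2 ⟨List.mem_range.2 hr, by simpa using (isFrame_bitMatrix r).1 hB⟩, hp⟩

variable {f : ℕ}

lemma mem_lineFlags : f ∈ lineFlags ↔ ∃ B, IsFrame B ∧ flagCode {0, 1} pairProd B = f := by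
  rw [← exists_mem_frames_iff, lineFlags, mem_distinctValues]
  simp [flagCode_pairProd_bitMatrix]

lemma mem_pointFlags : f ∈ pointFlags ↔ ∃ B, IsFrame B ∧ flagCode {0} X B = f := by
  rw [← exists_mem_frames_iff, pointFlags, mem_distinctValues]
  simp [flagCode_X_bitMatrix]

lemma separates_lineFlags :
    lineFlags.length = pairSeeds.length ∧ separates lineFlags pairSeeds := by
  decide +kernel

lemma separates_pointFlags_certificate :
    ([1, 2, 3, 4].all fun A => forceMap id (separates pointFlags) (pointSeeds A)) ∧
      pointFlags.length = (pointSeeds 3).length ∧ pointFlags.length = (pointSeeds 4).length := by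
  decide +kernel

end Flags

section Seeds

variable {A : ℕ}

lemma pairSeeds_subset_codes : pairSeeds ⊆ codes 4 6 2 3 := by decide +kernel

lemma pointSeeds_subset_codes : pointSeeds A ⊆ codes 4 4 A 4 := List.filter_subset_self _

lemma separates_pointFlags (hA : 1 ≤ A) (hA' : A ≤ 4) : separates pointFlags (pointSeeds A) := by
  have h := List.all_eq_true.1 separates_pointFlags_certificate.1 A (by simp; omega)
  rwa [forceMap_eq, List.map_id] at h

lemma length_pointFlags (hA : 3 ≤ A) (hA' : A ≤ 4) :
    pointFlags.length = (pointSeeds A).length := by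
  obtain rfl | rfl : A = 3 ∨ A = 4 := by omega
  · exact separates_pointFlags_certificate.2.1
  · exact separates_pointFlags_certificate.2.2

end Seeds

section HatWords

variable {α : Type*} {a : α → P4} {n l m d : ℕ}

lemma hatWordSpan_bot_le_homog (ha : ∀ e, (a e).IsHomogeneous d) :
    hatWordSpan ⊥ a l m ≤ homog (3 * (2 ^ l - 1) + 2 ^ l * (d * (2 ^ m - 1))) := by
  refine sup_le bot_le (Submodule.span_le.2 ?_)
  rintro _ ⟨L, D, rfl, rfl, rfl⟩
  have h := isHomogeneous_word isHomogeneous_hat L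
    (isHomogeneous_word ha D (isHomogeneous_one (Fin 4) kk))
  rwa [mul_zero, add_zero] at h

lemma hatWordSpan_bot_X_le_low : hatWordSpan ⊥ X l (m + 1) ≤ low := by
  refine sup_le bot_le (Submodule.span_le.2 ?_)
  rintro _ ⟨L, _ | ⟨i, D⟩, -, hD, rfl⟩
  · simp at hD
  · exact word_mem (fun _ _ => hat_mul_sq_mem_low _) L (X_mul_sq_mem_low i _)

lemma wordOfCode_mem_hatWordSpan (a : Fin n → P4) (k : ℕ) :
    wordOfCode a l m k ∈ hatWordSpan ⊥ a l m := by
  rw [wordOfCode]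
  split_ifs with h
  · exact Submodule.mem_sup_right
      (Submodule.subset_span ⟨_, _, h.choose_spec.1, h.choose_spec.2.1, rfl⟩)
  · exact zero_mem _

lemma span_wordOfCode_le (a : Fin n → P4) (K : Set ℕ) :
    Submodule.span kk (wordOfCode a l m '' K) ≤ hatWordSpan ⊥ a l m :=
  Submodule.span_le.2 (Set.image_subset_iff.2 fun k _ => wordOfCode_mem_hatWordSpan a k)

end HatWords

section Separation

variable {r s : ℕ} (B : Matrix (Fin 4) (Fin 3) kk) {f : P4}

lemma isHomogeneous_pairProd (e : Fin 6) : (pairProd e).IsHomogeneous 2 :=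
  (isHomogeneous_X kk _).mul (isHomogeneous_X kk _)

variable (r s) in
/-- The value of a polynomial of degree `targetDegree (r + 2) s` at the flag spanned by the first
two columns of `B` and by all of them. -/
abbrev lineEval : P4 →ₗ[kk] kk := flagEval {0, 1} B (s + 1) (r + 1)

variable (r s) in
/-- The value of a polynomial of degree `targetDegree (r + 2) s` at the flag spanned by the first
column of `B` and by all of them. -/
abbrev pointEval : P4 →ₗ[kk] kk := flagEval {0} B s (r + 3)

lemma lineEval_eq_zero_of_mem_low (hf : f ∈ low) : lineEval r s B f = 0 :=
  flagEval_eq_zero_of_mem_low rfl hf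

lemma evaluates_lineEval (hs : 1 ≤ s) (hr : 2 ≤ r) :
    Evaluates pairSeeds (wordOfCode pairProd (s + 1) (r + 1)) (flagCode {0, 1} pairProd B)
      (lineEval r s B) := fun _ hk =>
  flagEval_wordOfCode isHomogeneous_pairProd le_rfl (pairSeeds_subset_codes hk) (by omega)
    (by omega) (by omega) (by omega)

lemma evaluates_pointEval (hs : 1 ≤ s) (hr : 1 ≤ r) :
    Evaluates (pointSeeds (min s 4)) (wordOfCode X s (r + 3)) (flagCode {0} X B)
      (pointEval r s B) := fun _ hk =>
  flagEval_wordOfCode (isHomogeneous_X kk) (by omega) (pointSeeds_subset_codes hk) (by omega)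
    (by omega) (by omega) (by omega)

lemma mem_low_of_lineEval_eq_zero (hs : 1 ≤ s) (hr : 2 ≤ r)
    (hf : f.IsHomogeneous (targetDegree (r + 2) s))
    (h : ∀ B, IsFrame B → lineEval r s B f = 0) : f ∈ low := by
  obtain ⟨g, hg, x, hx, rfl⟩ := Submodule.mem_sup.1
    (hatWordSpan_low_pairProd_le (by omega) (by omega) (mem_hatWordSpan_low_of_isHomogeneous hf))
  have hx₀ : x = 0 := eq_zero_of_separates separates_lineFlags.2 hx fun f hf => by
    obtain ⟨B, hB, rfl⟩ := mem_lineFlags.1 hf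
    refine ⟨_, evaluates_lineEval B hs hr, ?_⟩
    rw [← h B hB, map_add, lineEval_eq_zero_of_mem_low B hg, zero_add]
  rwa [hx₀, add_zero]

lemma mem_hatWordSpan_X_of_mem_low (hr : 1 ≤ r) (hf : f.IsHomogeneous (targetDegree (r + 2) s))
    (hlow : f ∈ low) : f ∈ hatWordSpan (hit ⊓ oddDegree) X s (r + 3) := by
  have h := homogeneousComponent_mem_hatWordSpan_of_mem_low (t := r + 2) (by omega) hlow s
  rwa [homogeneousComponent_self hf] at h

lemma mem_hit_of_pointEval_eq_zero (hs : 1 ≤ s) (hr : 2 ≤ r)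
    (hf : f.IsHomogeneous (targetDegree (r + 2) s)) (hlow : f ∈ low)
    (h : ∀ B, IsFrame B → pointEval r s B f = 0) : f ∈ hit := by
  obtain ⟨g, hg, x, hx, rfl⟩ := Submodule.mem_sup.1 (hatWordSpan_hit_inf_oddDegree_X_le hs
    (by omega) (mem_hatWordSpan_X_of_mem_low (by omega) hf hlow))
  have hx₀ : x = 0 := by
    refine eq_zero_of_separates (separates_pointFlags (by omega) (by omega)) hx fun f hf => ?_
    obtain ⟨B, hB, rfl⟩ := mem_pointFlags.1 hf
    refine ⟨_, evaluates_pointEval B hs (by omega), ?_⟩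
    rw [← h B hB, map_add, flagEval_eq_zero_of_mem_hit hg.1, zero_add]
  rw [hx₀, add_zero]
  exact hg.1

end Separation

section PointEval

variable {m : ℕ}

lemma coeff_single_eq_eval {σ : Type*} [Finite σ] [DecidableEq σ] {d : ℕ}
    {f : MvPolynomial σ kk} (hf : f.IsHomogeneous d) (j : σ) :
    coeff (Finsupp.single j d) f = eval (Pi.single j 1) f := by
  cases nonempty_fintype σ
  rw [eval_eq', Finset.sum_eq_single (Finsupp.single j d)]
  · rw [Finset.prod_eq_one, mul_one]
    intro i _
    by_cases hi : i = j
    · simp [hi]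
    · simp [Ne.symm hi]
  · intro e he hed
    have hdeg : e.degree = d := by
      rw [← hf (mem_support_iff.1 he), Finsupp.degree_eq_weight_one]
      rfl
    obtain ⟨i, hij, hi⟩ : ∃ i ≠ j, e i ≠ 0 := by
      by_contra! hzero
      have hsingle : e = Finsupp.single j (e j) :=
        Finsupp.eq_single_iff.2 ⟨fun i hi => by
          simpa using mt (hzero i) (Finsupp.mem_support_iff.1 hi), rfl⟩
      rw [hsingle, Finsupp.degree_single] at hdeg
      exact hed (hdeg ▸ hsingle)
    rw [Finset.prod_eq_zero (Finset.mem_univ i), mul_zero]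
    rw [Pi.single_eq_of_ne hij, zero_pow hi]
  · intro h
    rw [notMem_support_iff.1 h, zero_mul]

lemma eval_single_linearSubst (B : Matrix (Fin 4) (Fin 3) kk) (j : Fin 3) (f : P4) :
    eval (Pi.single j 1) (linearSubst B f) = eval (fun i => B i j) f := by
  suffices h : (aeval (Pi.single j 1)).comp (linearSubst B) = aeval fun i => B i j from
    congrArg (fun φ : P4 →ₐ[kk] kk => φ f) h
  ext1 i
  simp [linearSubst_X, Pi.single_apply]

lemma flagEval_singleton_zero (B : Matrix (Fin 4) (Fin 3) kk) (j : Fin 3) {f : P4}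
    (hf : f.IsHomogeneous (2 ^ m - 1)) : flagEval {j} B 0 m f = eval (fun i => B i j) f := by
  have hspike : spike {j} 0 m = Finsupp.single j (2 ^ m - 1) := by
    ext i
    by_cases hi : j = i <;> simp [spike, hi, eq_comm]
  rw [flagEval_apply, hspike, coeff_single_eq_eval (isHomogeneous_linearSubst B hf),
    eval_single_linearSubst]

lemma eval_word {α : Type*} (a : α → P4) (b : Fin 4 → kk) (L : List α) (g : P4) :
    eval b (word a L g) = (L.map fun e => eval b (a e)).prod * eval b g := by
  induction L with
  | nil => simp
  | cons e L ih =>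
    rw [word_cons, map_mul, map_pow, sq_eq_self, ih, List.map_cons, List.prod_cons, mul_assoc]

lemma exists_eval_word_X_eq (hm : 2 ≤ m) (i : Fin 4) (D : List (Fin 6)) :
    ∃ E : List (Fin 4), E.length = m + 2 ∧
      ∀ b, eval b (word X E 1) = eval b (hat i * word pairProd D 1 ^ 2) := by
  let M := (Finset.univ.erase i).toList ++ (D.map fun e => (pair e).1) ++ D.map fun e => (pair e).2
  have hM : 3 ≤ M.length := by
    simp [M]
  obtain ⟨E, hE, hmask⟩ := exists_mask_eq (mask_mem_masks M) (m := m + 2) (by omega) (by omega)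
  refine ⟨E, hE, fun b => ?_⟩
  have hEM : (E.map b).prod = (M.map b).prod := by rw [prod_map_eq_ite, prod_map_eq_ite, hmask]
  have hhat : ((Finset.univ.erase i).toList.map b).prod = eval b (hat i) := by
    rw [Finset.prod_map_toList, hat, map_prod]
    simp
  have hpair : (fun e => eval b (pairProd e)) = fun e => b (pair e).1 * b (pair e).2 := by
    funext e
    simp [pairProd]
  rw [map_mul, map_pow, sq_eq_self, eval_word, eval_word, hpair, List.prod_map_mul, ← hhat]
  simpa [M, mul_assoc, Function.comp_def] using hEM

end PointEval

/-! ### Invariants -/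

section Invariant

variable {r s : ℕ}

lemma hatWordSpan_bot_pairProd_le_homog :
    hatWordSpan ⊥ pairProd (s + 1) (r + 1) ≤ homog (targetDegree (r + 2) s) := by
  have hdeg : targetDegree (r + 2) s =
      3 * (2 ^ (s + 1) - 1) + 2 ^ (s + 1) * (2 * (2 ^ (r + 1) - 1)) := by
    obtain ⟨b, hb⟩ : ∃ b, 2 ^ r = b + 1 := Nat.exists_eq_add_of_le' Nat.one_le_two_pow
    obtain ⟨c, hc⟩ : ∃ c, 2 ^ s = c + 1 := Nat.exists_eq_add_of_le' Nat.one_le_two_pow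
    rw [targetDegree_eq, show r + 2 + 1 = r + 3 from rfl, pow_add 2 r, pow_succ 2 r, pow_succ 2 s,
      hb, hc, show (b + 1) * 2 ^ 3 - 1 = 8 * b + 7 by omega,
      show (b + 1) * 2 - 1 = 2 * b + 1 by omega, show (c + 1) * 2 - 1 = 2 * c + 1 by omega,
      Nat.add_sub_cancel]
    ring
  rw [hdeg]
  exact hatWordSpan_bot_le_homog isHomogeneous_pairProd

lemma hatWordSpan_bot_X_le_homog :
    hatWordSpan ⊥ X s (r + 3) ≤ homog (targetDegree (r + 2) s) := by
  have h := hatWordSpan_bot_le_homog (l := s) (m := r + 3) (isHomogeneous_X kk (σ := Fin 4))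
  rwa [one_mul, ← targetDegree_eq (r + 2) s] at h

lemma exists_mem_low_pointEval_eq (hr : 1 ≤ r) {L : List (Fin 4)} {D : List (Fin 6)}
    (hL : L.length = s + 1) (hD : D.length = r + 1) :
    ∃ q ∈ low, q.IsHomogeneous (targetDegree (r + 2) s) ∧
      ∀ B, pointEval r s B q = pointEval r s B (word hat L (word pairProd D 1)) := by
  obtain rfl | ⟨L, i, rfl⟩ := L.eq_nil_or_concat'
  · simp at hL
  obtain ⟨E, hE, heval⟩ := exists_eval_word_X_eq (m := r + 1) (by omega) i D
  replace hL : L.length = s := by simpa using hL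
  have hmem : word hat L (word X E 1) ∈ hatWordSpan ⊥ X s (r + 3) := by
    rw [← hL, ← hE]
    exact word_mem_hatWordSpan L E
  refine ⟨_, hatWordSpan_bot_X_le_low hmem, hatWordSpan_bot_X_le_homog hmem, fun B => ?_⟩
  have hX : (word X E 1).IsHomogeneous (2 ^ (r + 3) - 1) := hE ▸ isHomogeneous_word_X E
  have hpair : (hat i * word pairProd D 1 ^ 2).IsHomogeneous (2 ^ (r + 3) - 1) := by
    convert isHomogeneous_mul_sq (isHomogeneous_hat i)
      (isHomogeneous_word isHomogeneous_pairProd D (isHomogeneous_one (Fin 4) kk)) using 1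
    rw [hD, pow_add 2 r, pow_succ 2 r]
    have := Nat.one_le_two_pow (n := r)
    omega
  rw [word_append, word_singleton, pointEval, ← hL, flagEval_word_hat, flagEval_word_hat,
    flagEval_singleton_zero B 0 hX, flagEval_singleton_zero B 0 hpair, heval]

lemma hatWordSpan_bot_pairProd_le (hr : 1 ≤ r) :
    hatWordSpan ⊥ pairProd (s + 1) (r + 1) ≤
      (low ⊓ homog (targetDegree (r + 2) s)) ⊔ ⨅ B, LinearMap.ker (pointEval r s B) := by
  refine sup_le bot_le (Submodule.span_le.2 ?_)
  rintro p ⟨L, D, hL, hD, rfl⟩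
  obtain ⟨q, hlow, hq, heval⟩ := exists_mem_low_pointEval_eq hr hL hD
  refine Submodule.mem_sup.2 ⟨q, ⟨hlow, hq⟩, _, (Submodule.mem_iInf _).2 fun B => ?_,
    add_sub_cancel q _⟩
  rw [LinearMap.mem_ker, map_sub, heval, sub_self]

lemma exists_pointEval_eq_zero_lineEval_eq_one (hs : 1 ≤ s) (hr : 2 ≤ r) :
    ∃ f : P4, f.IsHomogeneous (targetDegree (r + 2) s) ∧ (∀ B, pointEval r s B f = 0) ∧
      ∀ B, IsFrame B → lineEval r s B f = 1 := by
  obtain ⟨x, hx, hline⟩ := exists_eval_eq_one_of_separates separates_lineFlags.2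
    separates_lineFlags.1 (wordOfCode pairProd (s + 1) (r + 1))
  replace hx := span_wordOfCode_le pairProd _ hx
  obtain ⟨q, ⟨hlow, hq⟩, f, hf, rfl⟩ :=
    Submodule.mem_sup.1 (hatWordSpan_bot_pairProd_le (by omega) hx)
  refine ⟨f, ?_, (Submodule.mem_iInf _).1 hf, fun B hB => ?_⟩
  · exact (Submodule.add_mem_iff_right _ hq).1 (hatWordSpan_bot_pairProd_le_homog hx)
  · rw [← hline _ (mem_lineFlags.2 ⟨B, hB, rfl⟩) _ (evaluates_lineEval B hs hr), map_add,
      lineEval_eq_zero_of_mem_low B hlow, zero_add]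

lemma exists_pointEval_eq_one_lineEval_eq_zero (hs : 3 ≤ s) (hr : 1 ≤ r) :
    ∃ f : P4, f.IsHomogeneous (targetDegree (r + 2) s) ∧
      (∀ B, IsFrame B → pointEval r s B f = 1) ∧ ∀ B, lineEval r s B f = 0 := by
  obtain ⟨f, hf, hpoint⟩ := exists_eval_eq_one_of_separates
    (separates_pointFlags (A := min s 4) (by omega) (by omega))
    (length_pointFlags (by omega) (by omega)) (wordOfCode X s (r + 3))
  replace hf := span_wordOfCode_le X _ hf
  refine ⟨f, hatWordSpan_bot_X_le_homog hf, fun B hB => hpoint _ (mem_pointFlags.2 ⟨B, hB, rfl⟩) _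
    (evaluates_pointEval B (by omega) hr),
    fun B => lineEval_eq_zero_of_mem_low B (hatWordSpan_bot_X_le_low hf)⟩

end Invariant

section Pencil

variable {r s : ℕ} {f : P4}

/-- The numbers of seven frames with the same first column. They span the seven hyperplanes which
contain it. -/
def pencil : Fin 7 → ℕ := ![1057, 2081, 3105, 2113, 2625, 2145, 2657]

lemma isFrame_pencil (t : Fin 7) : IsFrame (bitMatrix (pencil t)) :=
  (isFrame_bitMatrix _).2 (by revert t; decide)

lemma minor_univ_pencil (t : Fin 7) (i : Fin 4) :
    minor Finset.univ (bitMatrix (pencil t)) (hat i) =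
      if (bitPlane (pencil t)).testBit i then 1 else 0 := by
  rw [eq_ite_testBit_support (φ := fun i => minor Finset.univ (bitMatrix (pencil t)) (hat i)) i,
    support_minor_univ_bitMatrix]

/-- The hyperplanes in the pencil are the nonzero vectors of a three-dimensional space, on which
polynomials of degree less than three without constant term have sum zero. -/
lemma sum_minor_mul_minor_pencil (i j : Fin 4) :
    ∑ t, minor Finset.univ (bitMatrix (pencil t)) (hat i) *
      minor Finset.univ (bitMatrix (pencil t)) (hat j) = 0 := by
  simp only [minor_univ_pencil]
  revert i j
  decide

lemma sum_prod_minor_pencil {L : List (Fin 4)} (hL : 1 ≤ L.length) (hL' : L.length ≤ 2) :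
    ∑ t, (L.map fun i => minor Finset.univ (bitMatrix (pencil t)) (hat i)).prod = 0 := by
  match L, hL, hL' with
  | [i], _, _ =>
    simpa only [List.map_cons, List.map_nil, List.prod_singleton, ← sq, sq_eq_self] using
      sum_minor_mul_minor_pencil i i
  | [i, j], _, _ =>
    simpa only [List.map_cons, List.map_nil, List.prod_cons, List.prod_nil, mul_one] using
      sum_minor_mul_minor_pencil i j

lemma minor_singleton_pencil (t : Fin 7) (i : Fin 4) :
    minor {0} (bitMatrix (pencil t)) (X i) = if i = 0 then 1 else 0 := by
  rw [minor_singleton_X]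
  revert t i
  decide

lemma sum_pointEval_pencil (hs : 1 ≤ s) (hs' : s ≤ 2)
    (hf : f ∈ hatWordSpan (hit ⊓ oddDegree) X s (r + 3)) :
    ∑ t, pointEval r s (bitMatrix (pencil t)) f = 0 := by
  suffices h : hatWordSpan (hit ⊓ oddDegree) X s (r + 3) ≤
      LinearMap.ker (∑ t, pointEval r s (bitMatrix (pencil t))) by
    simpa using h hf
  refine sup_le (fun g hg => ?_) (Submodule.span_le.2 ?_)
  · rw [LinearMap.mem_ker, LinearMap.sum_apply]
    exact Finset.sum_eq_zero fun t _ => flagEval_eq_zero_of_mem_hit hg.1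
  · rintro _ ⟨L, D, rfl, hD, rfl⟩
    rw [SetLike.mem_coe, LinearMap.mem_ker, LinearMap.sum_apply]
    simp only [pointEval, ← hD, flagEval_word (U := {0}) (isHomogeneous_X kk),
      minor_singleton_pencil]
    rw [← Finset.sum_mul, sum_prod_minor_pencil hs hs', zero_mul]

lemma eq_zero_of_pointEval_eq (hs : 1 ≤ s) (hs' : s ≤ 2) (hr : 1 ≤ r)
    (hf : f.IsHomogeneous (targetDegree (r + 2) s)) (hlow : f ∈ low) {c : kk}
    (h : ∀ B, IsFrame B → pointEval r s B f = c) : c = 0 := by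
  have hsum := sum_pointEval_pencil hs hs' (mem_hatWordSpan_X_of_mem_low hr hf hlow)
  rw [Finset.sum_congr rfl fun t _ => h _ (isFrame_pencil t)] at hsum
  exact (by decide : ∀ c : kk, ∑ _t : Fin 7, c = 0 → c = 0) c hsum

end Pencil

section Dimension

variable {n r s : ℕ} {G : Set (Matrix (Fin 4) (Fin 4) kk)} {f : P4}

lemma mem_invPre : f ∈ invPre n G ↔
    f.IsHomogeneous n ∧ ∀ M ∈ G, substM M f - f ∈ hitSub n := by
  simp [invPre, homog]

lemma flagEval_eq_of_mem_invPre (hf : f ∈ invPre n glSet) {U : Finset (Fin 3)} {l m : ℕ}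
    {B : Matrix (Fin 4) (Fin 3) kk} (hB : IsFrame B) :
    flagEval U B l m f = flagEval U stdFrame l m f := by
  obtain ⟨M, hM, rfl⟩ := hB.exists_mul_eq
  rw [← flagEval_substM, ← sub_eq_zero, ← map_sub]
  exact flagEval_eq_zero_of_mem_hit (hitSub_le_hit n ((mem_invPre.1 hf).2 M hM))

lemma mem_hit_of_eval_eq_zero (hs : 1 ≤ s) (hr : 2 ≤ r)
    (hf : f.IsHomogeneous (targetDegree (r + 2) s)) (hp : ∀ B, IsFrame B → pointEval r s B f = 0)
    (hl : ∀ B, IsFrame B → lineEval r s B f = 0) : f ∈ hit :=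
  mem_hit_of_pointEval_eq_zero hs hr hf (mem_low_of_lineEval_eq_zero hs hr hf hl) hp

lemma mem_invPre_of_eval_eq (hs : 1 ≤ s) (hr : 2 ≤ r)
    (hf : f.IsHomogeneous (targetDegree (r + 2) s)) {b c : kk}
    (hp : ∀ B, IsFrame B → pointEval r s B f = b) (hl : ∀ B, IsFrame B → lineEval r s B f = c) :
    f ∈ invPre (targetDegree (r + 2) s) glSet := by
  refine mem_invPre.2 ⟨hf, fun M hM => ?_⟩
  have hsub : (substM M f - f).IsHomogeneous (targetDegree (r + 2) s) :=
    (isHomogeneous_linearSubst M hf).sub hf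
  refine (mem_hitSub_iff hsub).2 (mem_hit_of_eval_eq_zero hs hr hsub (fun B hB => ?_)
    fun B hB => ?_)
  · rw [map_sub, flagEval_substM, hp _ (hB.mul hM), hp _ hB, sub_self]
  · rw [map_sub, flagEval_substM, hl _ (hB.mul hM), hl _ hB, sub_self]

lemma Qmk_eq_zero_iff (hf : f.IsHomogeneous n) : Qmk n f = 0 ↔ f ∈ hit := by
  rw [← mem_hitSub_iff hf, Qmk, LinearMap.comp_apply, Submodule.mkQ_apply,
    Submodule.Quotient.mk_eq_zero, Submodule.mem_comap]
  exact iff_of_eq (congrArg (· ∈ hitSub n) (homogeneousComponent_self hf))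

lemma finrank_QInv_eq {W : Type*} [AddCommGroup W] [Module kk W] (φ : P4 →ₗ[kk] W)
    (hker : ∀ f ∈ invPre n G, φ f = 0 ↔ f ∈ hit) (hsurj : ∀ w, ∃ f ∈ invPre n G, φ f = w) :
    Module.finrank kk (QInv n G) = Module.finrank kk W := by
  have hφ : LinearMap.range (φ.domRestrict (invPre n G)) = ⊤ :=
    LinearMap.range_eq_top.2 fun w => by simpa using hsurj w
  have hQ : LinearMap.ker ((Qmk n).domRestrict (invPre n G)) =
      LinearMap.ker (φ.domRestrict (invPre n G)) := by
    ext f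
    exact (Qmk_eq_zero_iff (mem_invPre.1 f.2).1).trans (hker f f.2).symm
  rw [QInv, ← LinearMap.range_domRestrict, ← finrank_top kk W, ← hφ]
  exact ((LinearMap.quotKerEquivRange _).symm.trans
    ((Submodule.quotEquivOfEq _ _ hQ).trans (LinearMap.quotKerEquivRange _))).finrank_eq

lemma mem_hit_of_mem_invPre (hs : 1 ≤ s) (hr : 2 ≤ r)
    (hf : f ∈ invPre (targetDegree (r + 2) s) glSet) (hp : pointEval r s stdFrame f = 0)
    (hl : lineEval r s stdFrame f = 0) : f ∈ hit :=
  mem_hit_of_eval_eq_zero hs hr (mem_invPre.1 hf).1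
    (fun _ hB => (flagEval_eq_of_mem_invPre hf hB).trans hp)
    fun _ hB => (flagEval_eq_of_mem_invPre hf hB).trans hl

lemma pointEval_eq_zero_of_mem_invPre (hs : 1 ≤ s) (hs' : s ≤ 2) (hr : 2 ≤ r)
    (hf : f ∈ invPre (targetDegree (r + 2) s) glSet) (hl : lineEval r s stdFrame f = 0) :
    pointEval r s stdFrame f = 0 := by
  have hhom := (mem_invPre.1 hf).1
  have hlow : f ∈ low := mem_low_of_lineEval_eq_zero hs hr hhom fun _ hB =>
    (flagEval_eq_of_mem_invPre hf hB).trans hl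
  exact eq_zero_of_pointEval_eq hs hs' (by omega) hhom hlow fun _ hB =>
    flagEval_eq_of_mem_invPre hf hB

lemma finrank_QInv_eq_one (hs : 1 ≤ s) (hs' : s ≤ 2) (hr : 2 ≤ r) :
    Module.finrank kk (QInv (targetDegree (r + 2) s) glSet) = 1 := by
  obtain ⟨f, hf, hp, hl⟩ := exists_pointEval_eq_zero_lineEval_eq_one hs hr
  have hinv := mem_invPre_of_eval_eq hs hr hf (fun B _ => hp B) hl
  rw [← Module.finrank_self kk]
  refine finrank_QInv_eq (lineEval r s stdFrame) (fun g hg => ⟨fun h => ?_, fun h =>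
    flagEval_eq_zero_of_mem_hit h⟩) fun c => ⟨c • f, Submodule.smul_mem _ c hinv, ?_⟩
  · exact mem_hit_of_mem_invPre hs hr hg (pointEval_eq_zero_of_mem_invPre hs hs' hr hg h) h
  · rw [map_smul, hl _ isFrame_stdFrame, smul_eq_mul, mul_one]

lemma finrank_QInv_eq_two (hs : 3 ≤ s) (hr : 2 ≤ r) :
    Module.finrank kk (QInv (targetDegree (r + 2) s) glSet) = 2 := by
  have hs₁ : 1 ≤ s := by omega
  obtain ⟨f, hf, hfp, hfl⟩ := exists_pointEval_eq_one_lineEval_eq_zero hs (one_le_two.trans hr)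
  obtain ⟨g, hg, hgp, hgl⟩ := exists_pointEval_eq_zero_lineEval_eq_one hs₁ hr
  have hfinv := mem_invPre_of_eval_eq hs₁ hr hf hfp fun B _ => hfl B
  have hginv := mem_invPre_of_eval_eq hs₁ hr hg (fun B _ => hgp B) hgl
  have htwo : Module.finrank kk (kk × kk) = 2 := by simp
  refine (finrank_QInv_eq ((pointEval r s stdFrame).prod (lineEval r s stdFrame))
    (fun p hp => ?_) fun c => ⟨c.1 • f + c.2 • g, add_mem (Submodule.smul_mem _ _ hfinv)
      (Submodule.smul_mem _ _ hginv), ?_⟩).trans htwo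
  · rw [LinearMap.prod_apply, Function.prod_apply, Prod.mk_eq_zero]
    exact ⟨fun h => mem_hit_of_mem_invPre hs₁ hr hp h.1 h.2, fun h =>
      ⟨flagEval_eq_zero_of_mem_hit h, flagEval_eq_zero_of_mem_hit h⟩⟩
  · ext <;> simp [hfp _ isFrame_stdFrame, hfl, hgp, hgl _ isFrame_stdFrame]

end Dimension

end Cohit

/-- In degree `n = 3(2^s-1) + 2^s(2^{t+1}-1) = 2^{s+t+1} + 2^{s+1} - 3` (`s ≥ 1`, `t ≥ 4`),
the space of `GL_4(F_2)`-invariants of `Q_n` has dimension `1` if `s ∈ {1,2}` and `2` if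
`s ≥ 3`. -/
theorem statement_2 (s t n : ℕ) (hs : 1 ≤ s) (ht : 4 ≤ t)
    (hn : n = 3 * (2 ^ s - 1) + 2 ^ s * (2 ^ (t + 1) - 1)) :
    (s = 1 ∨ s = 2 → Module.finrank kk ↥(QInv n glSet) = 1) ∧
    (3 ≤ s → Module.finrank kk ↥(QInv n glSet) = 2) := by
  obtain ⟨r, rfl⟩ := Nat.exists_eq_add_of_le' ht
  rw [show n = Cohit.targetDegree (r + 2 + 2) s from hn.trans (Cohit.targetDegree_eq _ _).symm]
  exact ⟨fun h => Cohit.finrank_QInv_eq_one hs (by omega) (by omega),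
    fun h => Cohit.finrank_QInv_eq_two h (by omega)⟩

end
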